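/- arXiv:1208.4697 — 6 statements merged into one kernel-verified Lean document; each statement's English description precedes it below -/
import Mathlib

section
/- Let X ⊆ ℝⁿ be open, let f : X → ℝⁿ be a C¹ cooperative irreducible vector field, and let γ : [0,T] → X be a solution of ẋ = f(x). Let M : [0,T] → Mat_{n×n}(ℝ) be differentiable with M(0) = Id and M'(t) = Df(γ(t))·M(t) for all t ∈ [0,T], where Df(γ(t)) is the Jacobian matrix of f at γ(t). Then for every vector v ∈ ℝⁿ with v > 0 and every t ∈ (0,T], all coordinates of M(t)v are strictly positive, i.e. M(t)v ≫ 0. -/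
open Set Filter Topology

noncomputable section

/-- `f` is a cooperative vector field on `X`: the off-diagonal entries of the
Jacobian are nonnegative. -/
def coopVF {n : ℕ} (f : (Fin n → ℝ) → (Fin n → ℝ)) (X : Set (Fin n → ℝ)) : Prop :=
  ∀ x ∈ X, ∀ i j : Fin n, i ≠ j → 0 ≤ fderiv ℝ f x (Pi.single j 1) i

/-- The Jacobian matrix of `f` at `x`. -/
def jacMat {n : ℕ} (f : (Fin n → ℝ) → (Fin n → ℝ)) (x : Fin n → ℝ) :
    Fin n → Fin n → ℝ :=
  fun i j => fderiv ℝ f x (Pi.single j 1) i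

/-- A matrix is irreducible if for every nonempty proper subset `S` of indices there
are `i ∈ S`, `j ∉ S` with `A i j ≠ 0`. -/
def matIrred {n : ℕ} (A : Fin n → Fin n → ℝ) : Prop :=
  ∀ S : Set (Fin n), S.Nonempty → S ≠ Set.univ → ∃ i ∈ S, ∃ j ∉ S, A i j ≠ 0

/-- `X` is p-convex: the segment joining any two order-related points of `X` lies in `X`. -/
def pconvex {n : ℕ} (X : Set (Fin n → ℝ)) : Prop :=
  ∀ x ∈ X, ∀ y ∈ X, x < y → segment ℝ x y ⊆ X

/-- `x ≪ y`: strict inequality in every coordinate. -/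
def strLt {n : ℕ} (x y : Fin n → ℝ) : Prop := ∀ i, x i < y i

/-- `γ` is a solution of `ẋ = f(x)` on the time interval `I`, with values in `X`. -/
def IsSolOn {n : ℕ} (f : (Fin n → ℝ) → (Fin n → ℝ)) (X : Set (Fin n → ℝ))
    (I : Set ℝ) (γ : ℝ → Fin n → ℝ) : Prop :=
  (∀ t ∈ I, γ t ∈ X) ∧ (∀ t ∈ I, HasDerivWithinAt γ (f (γ t)) I t)

/-- The ω-limit set (within `X`) of a curve `γ`. -/
def omegaSet {n : ℕ} (X : Set (Fin n → ℝ)) (γ : ℝ → Fin n → ℝ) :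
    Set (Fin n → ℝ) :=
  {y | y ∈ X ∧ ∃ t : ℕ → ℝ, Tendsto t atTop atTop ∧
    Tendsto (fun k => γ (t k)) atTop (𝓝 y)}

/-- The α-limit set (within `X`) of a curve `γ`. -/
def alphaSet {n : ℕ} (X : Set (Fin n → ℝ)) (γ : ℝ → Fin n → ℝ) :
    Set (Fin n → ℝ) :=
  {y | y ∈ X ∧ ∃ t : ℕ → ℝ, Tendsto t atTop atBot ∧
    Tendsto (fun k => γ (t k)) atTop (𝓝 y)}

/-- The Euclidean norm on `Fin n → ℝ`. -/
def eunorm {n : ℕ} (v : Fin n → ℝ) : ℝ := Real.sqrt (∑ i, (v i) ^ 2)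

/-- `X` is order-convex: it contains the order interval of any two of its points. -/
def orderConvex {n : ℕ} (X : Set (Fin n → ℝ)) : Prop :=
  ∀ x ∈ X, ∀ y ∈ X, x ≤ y → Set.Icc x y ⊆ X

/-- Nonnegativity for linear cooperative systems (maximum principle). -/
lemma coop_nonneg {n : ℕ} {T : ℝ} {A : ℝ → Fin n → Fin n → ℝ} {w : ℝ → Fin n → ℝ} {K : ℝ}
    (hT : 0 < T) (hK : ∀ t ∈ Set.Icc (0 : ℝ) T, ∀ i j, |A t i j| ≤ K)
    (hA : ∀ t ∈ Set.Icc (0 : ℝ) T, ∀ i j, i ≠ j → 0 ≤ A t i j)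
    (hw : ∀ t ∈ Set.Icc (0 : ℝ) T, ∀ i,
      HasDerivWithinAt (fun s => w s i) (∑ j, A t i j * w t j) (Set.Icc 0 T) t)
    (h0 : ∀ i, 0 ≤ w 0 i) :
    ∀ t ∈ Set.Icc (0 : ℝ) T, ∀ i, 0 ≤ w t i := by
  intro t₀ ht₀ i₀
  have : Nonempty (Fin n) := ⟨i₀⟩
  obtain ⟨L, hL⟩ : ∃ L : ℝ, L = n * K + 1 := ⟨_, rfl⟩
  have hz : ∀ t ∈ Set.Icc (0 : ℝ) T, ∀ i,
      HasDerivWithinAt (fun s => Real.exp (-L * s) * w s i)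
        (Real.exp (-L * t) * (-L) * w t i + Real.exp (-L * t) * ∑ j, A t i j * w t j)
        (Set.Icc 0 T) t := by
    intro t ht i
    have h1 : HasDerivAt (fun s : ℝ => Real.exp (-L * s)) (Real.exp (-L * t) * (-L)) t := by
      simpa using ((hasDerivAt_id t).const_mul (-L)).exp
    exact h1.hasDerivWithinAt.mul (hw t ht i)
  have hmin : ∀ i, ∃ t ∈ Set.Icc (0 : ℝ) T,
      IsMinOn (fun s => Real.exp (-L * s) * w s i) (Set.Icc 0 T) t := fun i =>
    isCompact_Icc.exists_isMinOn ⟨0, by simp [hT.le]⟩ fun t ht => (hz t ht i).continuousWithinAt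
  choose τ hτ hτmin using hmin
  obtain ⟨i, hi⟩ := Finite.exists_min (fun i => Real.exp (-L * τ i) * w (τ i) i)
  obtain ⟨t, rfl⟩ : ∃ t, t = τ i := ⟨_, rfl⟩
  have hle : ∀ s ∈ Set.Icc (0 : ℝ) T, ∀ j,
      Real.exp (-L * τ i) * w (τ i) i ≤ Real.exp (-L * s) * w s j := fun s hs j =>
    (hi j).trans (hτmin j hs)
  by_contra hneg
  push Not at hneg
  have hc : Real.exp (-L * τ i) * w (τ i) i < 0 :=
    (hle t₀ ht₀ i₀).trans_lt (mul_neg_of_pos_of_neg (Real.exp_pos _) hneg)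
  have hpos : 0 < τ i := by
    rcases (hτ i).1.lt_or_eq with h | h
    · exact h
    · rw [← h] at hc
      have := mul_nonneg (Real.exp_pos (-L * 0)).le (h0 i)
      linarith
  have hder : 0 ≤ (Real.exp (-L * τ i) * (-L) * w (τ i) i +
      Real.exp (-L * τ i) * ∑ j, A (τ i) i j * w (τ i) j) * (-1) := by
    have h2 := (hτmin i).localize.hasFDerivWithinAt_nonneg (hz (τ i) (hτ i) i).hasFDerivWithinAt
      (y := 0 - τ i) (sub_mem_posTangentConeAt_of_segment_subset
        ((convex_Icc (0 : ℝ) T).segment_subset (hτ i) ⟨le_rfl, hT.le⟩))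
    simp only [ContinuousLinearMap.toSpanSingleton_apply, smul_eq_mul] at h2
    refine nonneg_of_mul_nonneg_right (?_ : 0 ≤ τ i * _) hpos
    linarith
  set E := Real.exp (-L * τ i)
  have hsum : ∑ j, A (τ i) i j * (E * w (τ i) i) ≤ ∑ j, A (τ i) i j * (E * w (τ i) j) := by
    refine Finset.sum_le_sum fun j _ => ?_
    by_cases hij : i = j
    · subst hij; exact le_rfl
    · exact mul_le_mul_of_nonneg_left (hle _ (hτ i) j) (hA _ (hτ i) i j hij)
  rw [← Finset.sum_mul] at hsum
  have hrow : ∑ j, A (τ i) i j ≤ n * K := by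
    calc _ ≤ ∑ _j : Fin n, K := Finset.sum_le_sum fun j _ => (le_abs_self _).trans (hK _ (hτ i) i j)
      _ = _ := by simp
  have h3 : E * ∑ j, A (τ i) i j * w (τ i) j = ∑ j, A (τ i) i j * (E * w (τ i) j) := by
    rw [Finset.mul_sum]; exact Finset.sum_congr rfl fun j _ => by ring
  rw [h3] at hder
  nlinarith

/-- Strict positivity persists. -/
lemma coop_pos {n : ℕ} {T : ℝ} {A : ℝ → Fin n → Fin n → ℝ} {w : ℝ → Fin n → ℝ} {K : ℝ}
    (hK : ∀ t ∈ Set.Icc (0 : ℝ) T, ∀ i j, |A t i j| ≤ K)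
    (hA : ∀ t ∈ Set.Icc (0 : ℝ) T, ∀ i j, i ≠ j → 0 ≤ A t i j)
    (hw : ∀ t ∈ Set.Icc (0 : ℝ) T, ∀ i,
      HasDerivWithinAt (fun s => w s i) (∑ j, A t i j * w t j) (Set.Icc 0 T) t)
    (hn : ∀ t ∈ Set.Icc (0 : ℝ) T, ∀ i, 0 ≤ w t i) (i : Fin n)
    {s t : ℝ} (hs : s ∈ Set.Icc (0 : ℝ) T) (ht : t ∈ Set.Icc (0 : ℝ) T) (hst : s ≤ t)
    (hp : 0 < w s i) : 0 < w t i := by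
  have hz : ∀ t ∈ Set.Icc (0 : ℝ) T,
      HasDerivWithinAt (fun s => Real.exp (K * s) * w s i)
        (Real.exp (K * t) * K * w t i + Real.exp (K * t) * ∑ j, A t i j * w t j)
        (Set.Icc 0 T) t := by
    intro t ht
    have h1 : HasDerivAt (fun s : ℝ => Real.exp (K * s)) (Real.exp (K * t) * K) t := by
      simpa using ((hasDerivAt_id t).const_mul K).exp
    exact h1.hasDerivWithinAt.mul (hw t ht i)
  have hmono : MonotoneOn (fun s => Real.exp (K * s) * w s i) (Set.Icc 0 T) := by
    refine monotoneOn_of_hasDerivWithinAt_nonneg (convex_Icc 0 T)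
      (fun t ht => (hz t ht).continuousWithinAt)
      (fun t ht => (hz t (interior_subset ht)).mono interior_subset) fun t ht => ?_
    replace ht := interior_subset ht
    have h1 : A t i i * w t i ≤ ∑ j, A t i j * w t j := by
      have h4 := Finset.sum_erase_add Finset.univ (fun j => A t i j * w t j) (Finset.mem_univ i)
      have h5 : 0 ≤ ∑ j ∈ Finset.univ.erase i, A t i j * w t j :=
        Finset.sum_nonneg fun j hj => mul_nonneg
          (hA t ht i j (Finset.ne_of_mem_erase hj).symm) (hn t ht j)
      linarith
    have h2 : 0 ≤ (K + A t i i) * w t i :=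
      mul_nonneg (by linarith [neg_le_of_abs_le (hK t ht i i)]) (hn t ht i)
    have h3 : 0 ≤ Real.exp (K * t) * (K * w t i + ∑ j, A t i j * w t j) :=
      mul_nonneg (Real.exp_pos _).le (by linarith)
    linarith
  have h := hmono hs ht hst
  simp only at h
  have h1 : 0 < Real.exp (K * s) * w s i := mul_pos (Real.exp_pos _) hp
  exact pos_of_mul_pos_right (h1.trans_le h) (Real.exp_pos _).le

/-- strong monotonicity of the derivative flow. -/
theorem stmt_5 {n : ℕ} {X : Set (Fin n → ℝ)} (hX : IsOpen X)
    {f : (Fin n → ℝ) → (Fin n → ℝ)} (hf : ContDiffOn ℝ 1 f X) (hcoop : coopVF f X)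
    (hirr : ∀ x ∈ X, matIrred (jacMat f x))
    {T : ℝ} (hT : 0 < T) {γ : ℝ → Fin n → ℝ} (hγ : IsSolOn f X (Set.Icc 0 T) γ)
    {M : ℝ → Fin n → Fin n → ℝ}
    (hM0 : ∀ i j, M 0 i j = if i = j then (1 : ℝ) else 0)
    (hM : ∀ t ∈ Set.Icc (0 : ℝ) T,
      HasDerivWithinAt M (fun i j => ∑ k, jacMat f (γ t) i k * M t k j)
        (Set.Icc 0 T) t)
    {v : Fin n → ℝ} (hv : 0 < v) :
    ∀ t ∈ Set.Ioc (0 : ℝ) T, ∀ i, 0 < ∑ j, M t i j * v j := by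
  have hc : ∀ i j, ContinuousOn (fun t => jacMat f (γ t) i j) (Set.Icc 0 T) := by
    intro i j
    have h1 : ContinuousOn (fun t => fderiv ℝ f (γ t)) (Set.Icc 0 T) :=
      (hf.continuousOn_fderiv_of_isOpen hX le_rfl).comp
        (fun t ht => (hγ.2 t ht).continuousWithinAt) hγ.1
    exact (continuous_apply i).comp_continuousOn (h1.clm_apply continuousOn_const)
  have hb : ∀ p : Fin n × Fin n, ∃ C, ∀ t ∈ Set.Icc (0 : ℝ) T, |jacMat f (γ t) p.1 p.2| ≤ C :=
    fun p => isCompact_Icc.exists_bound_of_continuousOn (hc p.1 p.2)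
  choose C hC using hb
  obtain ⟨K, hK'⟩ := Finite.exists_le C
  have hK : ∀ t ∈ Set.Icc (0 : ℝ) T, ∀ i j, |jacMat f (γ t) i j| ≤ K :=
    fun t ht i j => (hC (i, j) t ht).trans (hK' _)
  have hA : ∀ t ∈ Set.Icc (0 : ℝ) T, ∀ i j, i ≠ j → 0 ≤ jacMat f (γ t) i j :=
    fun t ht i j hij => hcoop _ (hγ.1 t ht) i j hij
  obtain ⟨w, hwdef⟩ : ∃ w : ℝ → Fin n → ℝ, w = fun t i => ∑ j, M t i j * v j := ⟨_, rfl⟩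
  have hw : ∀ t ∈ Set.Icc (0 : ℝ) T, ∀ i,
      HasDerivWithinAt (fun s => w s i) (∑ j, jacMat f (γ t) i j * w t j) (Set.Icc 0 T) t := by
    intro t ht i
    have h1 : ∀ j, HasDerivWithinAt (fun s => M s i j)
        (∑ k, jacMat f (γ t) i k * M t k j) (Set.Icc 0 T) t := fun j =>
      hasDerivWithinAt_pi.1 (hasDerivWithinAt_pi.1 (hM t ht) i) j
    have h2 := HasDerivWithinAt.fun_sum (u := Finset.univ) fun j _ => (h1 j).mul_const (v j)
    rw [hwdef]
    refine h2.congr_deriv ?_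
    simp only [Finset.mul_sum, Finset.sum_mul]
    rw [Finset.sum_comm]
    exact Finset.sum_congr rfl fun _ _ => Finset.sum_congr rfl fun _ _ => by ring
  have hw0 : w 0 = v := by
    rw [hwdef]; funext i; simp [hM0]
  have hn := coop_nonneg hT hK hA hw (fun i => by rw [hw0]; exact hv.le i)
  intro t ht i
  have htI : t ∈ Set.Icc (0 : ℝ) T := ⟨ht.1.le, ht.2⟩
  have h0I : (0 : ℝ) ∈ Set.Icc (0 : ℝ) T := ⟨le_rfl, hT.le⟩
  suffices 0 < w t i by rw [hwdef] at this; exact this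
  by_contra hi
  have hi0 : w t i = 0 := le_antisymm (not_lt.1 hi) (hn t htI i)
  obtain ⟨-, k, hk⟩ := Pi.lt_def.1 hv
  have hkt : 0 < w t k := coop_pos hK hA hw hn k h0I htI ht.1.le (by rw [hw0]; exact hk)
  obtain ⟨a, ha, b, hb, hab⟩ := hirr (γ t) (hγ.1 t htI) {j | w t j = 0} ⟨i, hi0⟩
    (fun h => hkt.ne' (h ▸ Set.mem_univ k : k ∈ {j | w t j = 0}))
  have ha : w t a = 0 := ha
  have hb : w t b ≠ 0 := hb
  have hzero : ∀ s ∈ Set.Icc 0 t, w s a = 0 := by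
    intro s hs
    have hsI : s ∈ Set.Icc (0 : ℝ) T := ⟨hs.1, hs.2.trans ht.2⟩
    by_contra hne
    exact (coop_pos hK hA hw hn a hsI htI hs.2
      (lt_of_le_of_ne (hn s hsI a) (Ne.symm hne))).ne' ha
  have hd1 := (hw t htI a).mono (Set.Icc_subset_Icc_right ht.2)
  have hd2 : HasDerivWithinAt (fun s => w s a) 0 (Set.Icc 0 t) t :=
    (hasDerivWithinAt_const t (Set.Icc 0 t) (0 : ℝ)).congr hzero ha
  have heq := (uniqueDiffOn_Icc ht.1 t ⟨ht.1.le, le_rfl⟩).eq_deriv _ hd1 hd2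
  have hterm : ∀ j ∈ Finset.univ, 0 ≤ jacMat f (γ t) a j * w t j := by
    intro j _
    by_cases haj : a = j
    · subst haj; rw [ha]; simp
    · exact mul_nonneg (hA t htI a j haj) (hn t htI j)
  exact mul_ne_zero hab hb ((Finset.sum_eq_zero_iff_of_nonneg hterm).1 heq b (Finset.mem_univ b))
end
end

section
/- Let X ⊆ ℝⁿ be open, let f : X → ℝⁿ be a C¹ cooperative irreducible vector field, and let H : X → ℝ be a C¹ first integral for ẋ = f(x) with positive gradient. Suppose x ∈ X has the property that for every ε > 0 and every T > 0 there exist θ > T and a solution η : [0,θ] → X of ẋ = f(x) such that ‖η(0) − x‖ < ε and ‖η(θ) − x‖ < ε (i.e. x is forward nonwandering). Then x is an equilibrium: f(x) = 0. -/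
open Set Filter Topology

noncomputable section

lemma aux_apply {E F : Type*} [NormedAddCommGroup E] [NormedSpace ℝ E] [NormedAddCommGroup F]
    [NormedSpace ℝ F] {ι : Type*} {l : Filter ι} {A : ι → E →L[ℝ] F} {A0 : E →L[ℝ] F}
    {u : ι → E} {u0 : E} (hA : Tendsto A l (𝓝 A0)) (hu : Tendsto u l (𝓝 u0)) :
    Tendsto (fun i => A i (u i)) l (𝓝 (A0 u0)) :=
  (isBoundedBilinearMap_apply.continuous.tendsto (A0, u0)).comp (hA.prodMk_nhds hu)


lemma aux_flow {n : ℕ} {X : Set (Fin n → ℝ)} (hX : IsOpen X)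
    {f : (Fin n → ℝ) → (Fin n → ℝ)} (hf : ContDiffOn ℝ 1 f X)
    {x : Fin n → ℝ} (hx : x ∈ X) :
    ∃ r > (0 : ℝ), ∃ δ > (0 : ℝ), ∃ α : (Fin n → ℝ) × ℝ → (Fin n → ℝ),
      (∀ z ∈ Metric.closedBall x r, α (z, 0) = z ∧ ∀ t ∈ Icc (-δ) δ, α (z, t) ∈ X ∧
        HasDerivWithinAt (fun s => α (z, s)) (f (α (z, t))) (Icc (-δ) δ) t) ∧
      ContinuousOn α (Metric.closedBall x r ×ˢ Icc (-δ) δ) := by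
  have hfx : ContDiffAt ℝ 1 f x := hf.contDiffAt (hX.mem_nhds hx)
  obtain ⟨ε, hε, a, r, L, K, hr, hpl⟩ := IsPicardLindelof.of_contDiffAt_one hfx
  obtain ⟨α, h1, h2⟩ :=
    (hpl 0).exists_forall_mem_closedBall_eq_hasDerivWithinAt_continuousOn
  simp only [zero_sub, zero_add] at h1 h2
  have hr' : (0 : ℝ) < r := hr
  have hx0 : α (x, 0) = x := (h1 x (Metric.mem_closedBall_self hr'.le)).1
  have hnh : Metric.closedBall x (r : ℝ) ×ˢ Icc (-ε) ε ∈ 𝓝 ((x, (0 : ℝ)) : (Fin n → ℝ) × ℝ) :=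
    prod_mem_nhds (Metric.closedBall_mem_nhds x hr') (Icc_mem_nhds (by linarith) hε)
  have hc : ContinuousAt α (x, 0) := h2.continuousAt hnh
  have hXn : ∀ᶠ p in 𝓝 ((x, (0 : ℝ)) : (Fin n → ℝ) × ℝ), α p ∈ X :=
    hc.eventually (by rw [hx0]; exact hX.mem_nhds hx)
  obtain ⟨ρ, hρ, hb⟩ := Metric.eventually_nhds_iff.1 hXn
  refine ⟨min r (ρ / 2), by positivity, min ε (ρ / 2), by positivity, α, ?_, ?_⟩
  · intro z hz
    have hz1 : z ∈ Metric.closedBall x (r : ℝ) :=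
      Metric.closedBall_subset_closedBall (min_le_left _ _) hz
    obtain ⟨e1, e2⟩ := h1 z hz1
    refine ⟨e1, fun t ht => ?_⟩
    have hsub : Icc (-min ε (ρ / 2)) (min ε (ρ / 2)) ⊆ Icc (-ε) ε :=
      Icc_subset_Icc (neg_le_neg (min_le_left _ _)) (min_le_left _ _)
    refine ⟨hb ?_, (e2 t (hsub ht)).mono hsub⟩
    rw [Prod.dist_eq]
    have hz2 : dist z x ≤ ρ / 2 := le_trans (Metric.mem_closedBall.1 hz) (min_le_right _ _)
    have ht2 : dist t 0 ≤ ρ / 2 := by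
      rw [Real.dist_eq, sub_zero, abs_le]
      exact ⟨le_trans (neg_le_neg (min_le_right _ _)) ht.1, ht.2.trans (min_le_right _ _)⟩
    exact max_lt (by linarith) (by linarith)
  · exact h2.mono (prod_mono (Metric.closedBall_subset_closedBall (min_le_left _ _))
      (Icc_subset_Icc (neg_le_neg (min_le_left _ _)) (min_le_left _ _)))

lemma aux_locLip {n : ℕ} {X : Set (Fin n → ℝ)} (hX : IsOpen X)
    {f : (Fin n → ℝ) → (Fin n → ℝ)} (hf : ContDiffOn ℝ 1 f X) {C : Set (Fin n → ℝ)}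
    (hC : IsCompact C) (hCX : C ⊆ X) : ∃ K, LipschitzOnWith K f C := by
  apply LocallyLipschitzOn.exists_lipschitzOnWith_of_compact hC
  intro z hz
  have : ContDiffAt ℝ 1 f z := hf.contDiffAt (hX.mem_nhds (hCX hz))
  obtain ⟨K, t, ht, hK⟩ := this.exists_lipschitzOnWith
  exact ⟨K, t, mem_nhdsWithin_of_mem_nhds ht, hK⟩

/-- uniqueness on `[0,δ]` -/
lemma aux_unique {n : ℕ} {X : Set (Fin n → ℝ)} (hX : IsOpen X)
    {f : (Fin n → ℝ) → (Fin n → ℝ)} (hf : ContDiffOn ℝ 1 f X) {b : ℝ}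
    {p q : ℝ → Fin n → ℝ} (hp : IsSolOn f X (Icc 0 b) p) (hq : IsSolOn f X (Icc 0 b) q)
    (h0 : p 0 = q 0) : EqOn p q (Icc 0 b) := by
  have cp : ContinuousOn p (Icc 0 b) := fun t ht => (hp.2 t ht).continuousWithinAt
  have cq : ContinuousOn q (Icc 0 b) := fun t ht => (hq.2 t ht).continuousWithinAt
  obtain ⟨K, hK⟩ := aux_locLip hX hf
    ((isCompact_Icc.image_of_continuousOn cp).union (isCompact_Icc.image_of_continuousOn cq))
    (by
      rintro z (⟨t, ht, rfl⟩ | ⟨t, ht, rfl⟩)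
      · exact hp.1 t ht
      · exact hq.1 t ht)
  have key : ∀ {g : ℝ → Fin n → ℝ}, IsSolOn f X (Icc 0 b) g → ∀ t ∈ Ico 0 b,
      HasDerivWithinAt g (f (g t)) (Ici t) t := by
    intro g hg t ht
    refine (hg.2 t (Ico_subset_Icc_self ht)).mono_of_mem_nhdsWithin ?_
    exact mem_of_superset (Icc_mem_nhdsGE ht.2) (Icc_subset_Icc_left ht.1)
  exact ODE_solution_unique_of_mem_Icc_right (v := fun _ => f) (s := fun _ => _)
    (fun _ _ => hK) cp (key hp) (fun t ht => Or.inl ⟨t, Ico_subset_Icc_self ht, rfl⟩)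
    cq (key hq) (fun t ht => Or.inr ⟨t, Ico_subset_Icc_self ht, rfl⟩) h0

/-- the gradient of a first integral solves the adjoint variational equation. -/
lemma aux_adjoint {n : ℕ} {X : Set (Fin n → ℝ)} (hX : IsOpen X)
    {f : (Fin n → ℝ) → (Fin n → ℝ)} (hf : ContDiffOn ℝ 1 f X)
    {H : (Fin n → ℝ) → ℝ} (hH : ContDiffOn ℝ 1 H X)
    (hfi : ∀ x ∈ X, fderiv ℝ H x (f x) = 0)
    {y : ℝ → Fin n → ℝ} {t₀ : ℝ} (hyX : y t₀ ∈ X)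
    (hy : ∀ᶠ t in 𝓝 t₀, HasDerivAt y (f (y t)) t) (u : Fin n → ℝ) :
    HasDerivAt (fun t => fderiv ℝ H (y t) u)
      (-(fderiv ℝ H (y t₀) (fderiv ℝ f (y t₀) u))) t₀ := by
  have hyc : ContinuousAt y t₀ := hy.self_of_nhds.continuousAt
  have hfx : ContDiffAt ℝ 1 f (y t₀) := hf.contDiffAt (hX.mem_nhds hyX)
  have hHx : ContDiffAt ℝ 1 H (y t₀) := hH.contDiffAt (hX.mem_nhds hyX)
  have hDH : ∀ z ∈ X, HasFDerivAt H (fderiv ℝ H z) z := fun z hz =>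
    ((hH.contDiffAt (hX.mem_nhds hz)).differentiableAt (by norm_num)).hasFDerivAt
  have cDH : ContinuousAt (fderiv ℝ H) (y t₀) :=
    (hH.continuousOn_fderiv_of_isOpen hX le_rfl).continuousAt (hX.mem_nhds hyX)
  have cDf : ContinuousAt (fderiv ℝ f) (y t₀) :=
    (hf.continuousOn_fderiv_of_isOpen hX le_rfl).continuousAt (hX.mem_nhds hyX)
  have hyXe : ∀ᶠ t in 𝓝 t₀, y t ∈ X := hyc.eventually (hX.mem_nhds hyX)
  set l : Filter ℝ := 𝓝[≠] (0 : ℝ)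
  -- joint limits
  have tt : Tendsto (fun p : ℝ × ℝ => y p.2) (l ×ˢ 𝓝 t₀) (𝓝 (y t₀)) :=
    hyc.tendsto.comp tendsto_snd
  have ts : Tendsto (fun p : ℝ × ℝ => p.1) (l ×ˢ 𝓝 t₀) (𝓝 0) :=
    (tendsto_nhdsWithin_of_tendsto_nhds tendsto_id : Tendsto id l (𝓝 0)).comp tendsto_fst
  have tsu : Tendsto (fun p : ℝ × ℝ => y p.2 + p.1 • u) (l ×ˢ 𝓝 t₀) (𝓝 (y t₀)) := by
    simpa using tt.add (ts.smul_const u)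
  have hne : ∀ᶠ p : ℝ × ℝ in l ×ˢ 𝓝 t₀, p.1 ≠ 0 :=
    tendsto_fst.eventually (eventually_mem_nhdsWithin : ∀ᶠ s in l, s ∈ ({0}ᶜ : Set ℝ))
  have hq : Tendsto (fun p : ℝ × ℝ => p.1⁻¹ • (f (y p.2 + p.1 • u) - f (y p.2)))
      (l ×ˢ 𝓝 t₀) (𝓝 (fderiv ℝ f (y t₀) u)) := by
    have hs := (hfx.hasStrictFDerivAt (by norm_num)).isLittleO
    have h1 := hs.comp_tendsto (tsu.prodMk_nhds tt)
    have h2 : (fun p : ℝ × ℝ => p.1⁻¹ • (f (y p.2 + p.1 • u) - f (y p.2)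
        - fderiv ℝ f (y t₀) (p.1 • u))) =o[l ×ˢ 𝓝 t₀] (fun p : ℝ × ℝ => p.1⁻¹ • (p.1 • u)) := by
      refine (Asymptotics.isBigO_refl (fun p : ℝ × ℝ => p.1⁻¹) _).smul_isLittleO ?_
      simpa [Function.comp_def] using h1
    have h3 : (fun p : ℝ × ℝ => p.1⁻¹ • (f (y p.2 + p.1 • u) - f (y p.2)
        - fderiv ℝ f (y t₀) (p.1 • u))) =o[l ×ˢ 𝓝 t₀] (fun _ => u) :=
      h2.congr' EventuallyEq.rfl (by
        filter_upwards [hne] with p hp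
        rw [smul_smul, inv_mul_cancel₀ hp, one_smul])
    have h4 : Tendsto (fun p : ℝ × ℝ => p.1⁻¹ • (f (y p.2 + p.1 • u) - f (y p.2)
        - fderiv ℝ f (y t₀) (p.1 • u))) (l ×ˢ 𝓝 t₀) (𝓝 0) := by
      have := h3.trans_isBigO (Asymptotics.isBigO_const_const u (one_ne_zero (α := ℝ)) _)
      exact (Asymptotics.isLittleO_one_iff ℝ).1 this
    have h5 := h4.add_const (fderiv ℝ f (y t₀) u)
    rw [zero_add] at h5
    refine h5.congr' ?_
    filter_upwards [hne] with p hp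
    rw [map_smul, smul_sub, smul_smul, inv_mul_cancel₀ hp, one_smul, sub_add_cancel]
  have hF : Tendsto (fun p : ℝ × ℝ => p.1⁻¹ * fderiv ℝ H (y p.2 + p.1 • u) (f (y p.2)))
      (l ×ˢ 𝓝 t₀) (𝓝 (-(fderiv ℝ H (y t₀) (fderiv ℝ f (y t₀) u)))) := by
    have h1 : Tendsto (fun p : ℝ × ℝ => -(fderiv ℝ H (y p.2 + p.1 • u)
        (p.1⁻¹ • (f (y p.2 + p.1 • u) - f (y p.2))))) (l ×ˢ 𝓝 t₀)
        (𝓝 (-(fderiv ℝ H (y t₀) (fderiv ℝ f (y t₀) u)))) :=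
      (aux_apply (cDH.tendsto.comp tsu) hq).neg
    refine h1.congr' ?_
    filter_upwards [tsu.eventually (hX.mem_nhds hyX)] with p hp
    rw [map_smul, map_sub, hfi _ hp, smul_eq_mul]
    ring
  have hG : Tendsto (fun t => -(fderiv ℝ H (y t) (fderiv ℝ f (y t) u))) (𝓝 t₀)
      (𝓝 (-(fderiv ℝ H (y t₀) (fderiv ℝ f (y t₀) u)))) :=
    (aux_apply (cDH.tendsto.comp hyc.tendsto)
      (aux_apply (cDf.tendsto.comp hyc.tendsto) tendsto_const_nhds)).neg
  refine hasDerivAt_of_tendstoUniformlyOnFilter (l := l)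
    (f := fun s t => s⁻¹ * (H (y t + s • u) - H (y t)))
    (f' := fun s t => s⁻¹ * fderiv ℝ H (y t + s • u) (f (y t)))
    (g' := fun t => -(fderiv ℝ H (y t) (fderiv ℝ f (y t) u))) ?_ ?_ ?_
  · rw [Metric.tendstoUniformlyOnFilter_iff]
    intro ε hε
    have e1 := Metric.tendsto_nhds.1 hF (ε / 2) (by positivity)
    have e2 := Metric.tendsto_nhds.1 (hG.comp (tendsto_snd (f := l))) (ε / 2) (by positivity)
    filter_upwards [e1, e2] with p h1 h2
    refine lt_of_le_of_lt (dist_triangle_right _ _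
      (-(fderiv ℝ H (y t₀) (fderiv ℝ f (y t₀) u)))) ?_
    simp only [Function.comp_def] at h2
    linarith
  · filter_upwards [tsu.eventually (hX.mem_nhds hyX), tendsto_snd.eventually hyXe,
      tendsto_snd.eventually hy] with p h1 h2 h3
    have d1 : HasDerivAt (fun t => H (y t + p.1 • u))
        (fderiv ℝ H (y p.2 + p.1 • u) (f (y p.2))) p.2 :=
      (hDH _ h1).comp_hasDerivAt p.2 (h3.add_const (p.1 • u))
    have d2 : HasDerivAt (fun t => H (y t)) (fderiv ℝ H (y p.2) (f (y p.2))) p.2 :=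
      (hDH _ h2).comp_hasDerivAt p.2 h3
    rw [hfi _ h2] at d2
    simpa using (d1.sub d2).const_mul p.1⁻¹
  · filter_upwards [hyXe] with t ht
    have := (hDH _ ht).hasLineDerivAt u
    simpa using this.tendsto_slope_zero

lemma aux_abs {g : ℝ → ℝ} {g' t : ℝ} (hg : HasDerivAt g g' t) :
    HasDerivWithinAt (fun s => |g s|)
      (if g t = 0 then |g'| else SignType.sign (g t) * g') (Ici t) t := by
  split_ifs with h
  · rw [hasDerivWithinAt_iff_tendsto_slope]
    have h1 := (hasDerivWithinAt_iff_tendsto_slope.1 (hg.hasDerivWithinAt (s := Ici t))).abs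
    refine h1.congr' ?_
    filter_upwards [self_mem_nhdsWithin] with s hs
    have : t < s := lt_of_le_of_ne hs.1 (fun e => hs.2 e.symm)
    simp [slope_def_field, h, abs_div, abs_of_pos (sub_pos.2 this)]
  · have := (hasDerivAt_abs h).comp t hg
    exact this.hasDerivWithinAt

/-- right derivative of `|v i|` when `v' = a v`. -/
def auxS {n : ℕ} (a : Fin n → Fin n → ℝ) (v : Fin n → ℝ) (i : Fin n) : ℝ :=
  if v i = 0 then |∑ j, a i j * v j| else SignType.sign (v i) * ∑ j, a i j * v j

lemma auxS_ne {n : ℕ} {a : Fin n → Fin n → ℝ} {v : Fin n → ℝ} {i : Fin n} (h : v i ≠ 0) :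
    auxS a v i - ∑ j, a i j * |v j|
      = ∑ j, a i j * (SignType.sign (v i) * v j - |v j|) := by
  rw [auxS, if_neg h, Finset.mul_sum, ← Finset.sum_sub_distrib]
  exact Finset.sum_congr rfl fun j _ => by ring

lemma aux_sign_le (r s : ℝ) : (SignType.sign r : ℝ) * s - |s| ≤ 0 := by
  rcases lt_trichotomy r 0 with h | h | h
  · simp [sign_neg h]; exact neg_le_abs s
  · simp [h]
  · simp [sign_pos h]; exact le_abs_self s

lemma auxS_term {n : ℕ} {a : Fin n → Fin n → ℝ} (ha : ∀ i j, i ≠ j → 0 ≤ a i j)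
    (v : Fin n → ℝ) (i j : Fin n) : a i j * (SignType.sign (v i) * v j - |v j|) ≤ 0 := by
  by_cases hij : i = j
  · subst hij
    rw [sign_mul_self]; simp
  · exact mul_nonpos_of_nonneg_of_nonpos (ha i j hij) (aux_sign_le _ _)

lemma auxS_le {n : ℕ} {a : Fin n → Fin n → ℝ} (ha : ∀ i j, i ≠ j → 0 ≤ a i j)
    (v : Fin n → ℝ) (i : Fin n) : auxS a v i - ∑ j, a i j * |v j| ≤ 0 := by
  by_cases h : v i = 0
  · rw [auxS, if_pos h, sub_nonpos]
    refine (Finset.abs_sum_le_sum_abs _ _).trans (Finset.sum_le_sum fun j _ => ?_)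
    by_cases hij : i = j
    · subst hij; simp [h]
    · rw [abs_mul, abs_of_nonneg (ha i j hij)]
  · rw [auxS_ne h]
    exact Finset.sum_nonpos fun j _ => auxS_term ha v i j

lemma aux_alg {n : ℕ} (a : Fin n → Fin n → ℝ) (v w : Fin n → ℝ) :
    ∑ i, (-(∑ k, w k * a k i) * |v i| + w i * auxS a v i)
      = ∑ i, w i * (auxS a v i - ∑ j, a i j * |v j|) := by
  simp only [mul_sub, Finset.sum_sub_distrib, Finset.sum_add_distrib, neg_mul,
    Finset.sum_neg_distrib, Finset.sum_mul, Finset.mul_sum]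
  rw [Finset.sum_comm]
  simp only [mul_assoc]
  ring

lemma aux_contra {n : ℕ} {a : Fin n → Fin n → ℝ} (ha : ∀ i j, i ≠ j → 0 ≤ a i j)
    (hirr : matIrred a) {v w : Fin n → ℝ} (hw : ∀ i, 0 < w i) (hv : v ≠ 0)
    (hwv : ∑ i, w i * v i = 0)
    (hD : ∑ i, (-(∑ k, w k * a k i) * |v i| + w i * auxS a v i) = 0)
    (hz : ∀ i, v i = 0 → ∑ j, a i j * v j = 0) : False := by
  rw [aux_alg] at hD
  have hc : ∀ i, auxS a v i - ∑ j, a i j * |v j| = 0 := by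
    intro i
    have h1 := (Finset.sum_eq_zero_iff_of_nonpos (fun i _ =>
      mul_nonpos_of_nonneg_of_nonpos (hw i).le (auxS_le ha v i))).1 hD i (Finset.mem_univ i)
    exact (mul_eq_zero.1 h1).resolve_left (hw i).ne'
  obtain ⟨i0, hi0⟩ : ∃ i, v i ≠ 0 := by
    by_contra! h; exact hv (funext h)
  -- no zero coordinates
  have hZ : ∀ i, v i ≠ 0 := by
    by_contra! hne
    obtain ⟨i, hi, j, hj, hij⟩ := hirr {i | v i = 0} hne (fun h => hi0 (by
      have : i0 ∈ {i | v i = 0} := h ▸ mem_univ i0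
      exact this))
    have hi' : v i = 0 := hi
    have hj' : v j ≠ 0 := hj
    have h1 := hc i
    rw [auxS, if_pos hi', hz i hi', abs_zero, zero_sub, neg_eq_zero] at h1
    have h2 := (Finset.sum_eq_zero_iff_of_nonneg (fun j _ => by
      by_cases hij : i = j
      · subst hij; simp [hi']
      · exact mul_nonneg (ha i j hij) (abs_nonneg _))).1 h1 j (Finset.mem_univ j)
    rcases mul_eq_zero.1 h2 with h | h
    · exact hij h
    · exact hj' (abs_eq_zero.1 h)
  have hP1 : {i | 0 < v i}.Nonempty := by
    by_contra hne
    have hneg : ∀ i, v i < 0 := fun i => lt_of_le_of_ne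
      (not_lt.1 fun h => hne ⟨i, h⟩) (hZ i)
    have : ∑ i, w i * v i < 0 := Finset.sum_neg
      (fun i _ => mul_neg_of_pos_of_neg (hw i) (hneg i)) ⟨i0, Finset.mem_univ _⟩
    linarith
  have hP2 : {i | 0 < v i} ≠ univ := by
    intro h
    have hpos : ∀ i, 0 < v i := fun i => by
      have : i ∈ {i | 0 < v i} := h ▸ mem_univ i
      exact this
    have : 0 < ∑ i, w i * v i := Finset.sum_pos
      (fun i _ => mul_pos (hw i) (hpos i)) ⟨i0, Finset.mem_univ _⟩
    linarith
  obtain ⟨i, hi, j, hj, hij⟩ := hirr _ hP1 hP2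
  have hi' : 0 < v i := hi
  have hj' : v j < 0 := lt_of_le_of_ne (not_lt.1 hj) (hZ j)
  have h1 := hc i
  rw [auxS_ne hi'.ne'] at h1
  have h2 := (Finset.sum_eq_zero_iff_of_nonpos (fun j _ => auxS_term ha v i j)).1 h1 j
    (Finset.mem_univ j)
  rcases mul_eq_zero.1 h2 with h | h
  · exact hij h
  · simp [sign_pos hi', abs_of_neg hj'] at h
    linarith

def auxW {n : ℕ} (f : (Fin n → ℝ) → (Fin n → ℝ)) (H : (Fin n → ℝ) → ℝ) (z : Fin n → ℝ) : ℝ :=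
  ∑ i, fderiv ℝ H z (Pi.single i 1) * |f z i|

def auxD {n : ℕ} (f : (Fin n → ℝ) → (Fin n → ℝ)) (H : (Fin n → ℝ) → ℝ) (z : Fin n → ℝ) : ℝ :=
  ∑ i, (-(∑ k, fderiv ℝ H z (Pi.single k 1) * jacMat f z k i) * |f z i|
    + fderiv ℝ H z (Pi.single i 1) * auxS (jacMat f z) (f z) i)

lemma aux_lin {n : ℕ} {F : Type*} [NormedAddCommGroup F] [NormedSpace ℝ F]
    (L : (Fin n → ℝ) →L[ℝ] F) (u : Fin n → ℝ) : L u = ∑ j, u j • L (Pi.single j 1) := by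
  conv_lhs => rw [pi_eq_sum_univ' u]
  simp [map_sum]

lemma aux_jac {n : ℕ} (f : (Fin n → ℝ) → (Fin n → ℝ)) (z u : Fin n → ℝ) (i : Fin n) :
    fderiv ℝ f z u i = ∑ j, jacMat f z i j * u j := by
  rw [aux_lin (fderiv ℝ f z) u, Finset.sum_apply]
  exact Finset.sum_congr rfl fun j _ => by simp [jacMat, mul_comm]

lemma aux_vderiv {n : ℕ} {X : Set (Fin n → ℝ)} (hX : IsOpen X)
    {f : (Fin n → ℝ) → (Fin n → ℝ)} (hf : ContDiffOn ℝ 1 f X)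
    {y : ℝ → Fin n → ℝ} {t₀ : ℝ} (hyX : y t₀ ∈ X)
    (hy : HasDerivAt y (f (y t₀)) t₀) (i : Fin n) :
    HasDerivAt (fun t => f (y t) i) (∑ j, jacMat f (y t₀) i j * f (y t₀) j) t₀ := by
  have h1 : HasFDerivAt f (fderiv ℝ f (y t₀)) (y t₀) :=
    ((hf.contDiffAt (hX.mem_nhds hyX)).differentiableAt (by norm_num)).hasFDerivAt
  have h2 := hasDerivAt_pi.1 (h1.comp_hasDerivAt t₀ hy) i
  rw [aux_jac] at h2
  exact h2

lemma aux_Wderiv {n : ℕ} {X : Set (Fin n → ℝ)} (hX : IsOpen X)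
    {f : (Fin n → ℝ) → (Fin n → ℝ)} (hf : ContDiffOn ℝ 1 f X)
    {H : (Fin n → ℝ) → ℝ} (hH : ContDiffOn ℝ 1 H X)
    (hfi : ∀ x ∈ X, fderiv ℝ H x (f x) = 0)
    {y : ℝ → Fin n → ℝ} {t₀ : ℝ} (hyX : y t₀ ∈ X)
    (hy : ∀ᶠ t in 𝓝 t₀, HasDerivAt y (f (y t)) t) :
    HasDerivWithinAt (fun t => auxW f H (y t)) (auxD f H (y t₀)) (Ici t₀) t₀ := by
  unfold auxW auxD
  refine HasDerivWithinAt.fun_sum fun i _ => ?_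
  have h1 := (aux_adjoint hX hf hH hfi hyX hy (Pi.single i 1)).hasDerivWithinAt (s := Ici t₀)
  have h2 := aux_abs (aux_vderiv hX hf hyX hy.self_of_nhds i)
  have h3 : fderiv ℝ H (y t₀) (fderiv ℝ f (y t₀) (Pi.single i 1))
      = ∑ k, fderiv ℝ H (y t₀) (Pi.single k 1) * jacMat f (y t₀) k i := by
    rw [aux_lin (fderiv ℝ H (y t₀)) (fderiv ℝ f (y t₀) (Pi.single i 1))]
    exact Finset.sum_congr rfl fun j _ => by simp [jacMat, mul_comm]
  rw [h3] at h1
  exact h1.mul h2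

lemma aux_Wcont {n : ℕ} {X : Set (Fin n → ℝ)} (hX : IsOpen X)
    {f : (Fin n → ℝ) → (Fin n → ℝ)} (hf : ContDiffOn ℝ 1 f X)
    {H : (Fin n → ℝ) → ℝ} (hH : ContDiffOn ℝ 1 H X) : ContinuousOn (auxW f H) X := by
  unfold auxW
  refine continuousOn_finsetSum _ fun i _ => ?_
  have h1 := (hH.continuousOn_fderiv_of_isOpen hX le_rfl)
  have h2 := continuousOn_pi.1 hf.continuousOn i
  exact (h1.clm_apply continuousOn_const).mul h2.abs

lemma aux_mono {n : ℕ} {X : Set (Fin n → ℝ)} (hX : IsOpen X)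
    {f : (Fin n → ℝ) → (Fin n → ℝ)} (hf : ContDiffOn ℝ 1 f X) (hcoop : coopVF f X)
    {H : (Fin n → ℝ) → ℝ} (hH : ContDiffOn ℝ 1 H X)
    (hfi : ∀ x ∈ X, fderiv ℝ H x (f x) = 0)
    (hgrad : ∀ x ∈ X, ∀ i, 0 < fderiv ℝ H x (Pi.single i 1))
    {y : ℝ → Fin n → ℝ} {c d a b : ℝ} (hy : IsSolOn f X (Icc c d) y)
    (hca : c < a) (hab : a ≤ b) (hbd : b ≤ d) : auxW f H (y b) ≤ auxW f H (y a) := by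
  have hcont : ContinuousOn y (Icc c d) := fun t ht => (hy.2 t ht).continuousWithinAt
  have hsub : Icc a b ⊆ Icc c d := Icc_subset_Icc hca.le hbd
  refine image_le_of_deriv_right_le_deriv_boundary (f := fun t => auxW f H (y t))
    (f' := fun t => auxD f H (y t)) (B := fun _ => auxW f H (y a)) (B' := fun _ => 0)
    (a := a) (b := b) ?_ ?_ le_rfl continuousOn_const
    (fun t _ => hasDerivWithinAt_const _ _ _) ?_ (right_mem_Icc.2 hab)
  · exact (aux_Wcont hX hf hH).comp (hcont.mono hsub) (fun t ht => hy.1 t (hsub ht))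
  · intro t ht
    have ht' : t ∈ Ioo c d := ⟨hca.trans_le ht.1, ht.2.trans_le hbd⟩
    refine aux_Wderiv hX hf hH hfi (hy.1 t (Ioo_subset_Icc_self ht')) ?_
    filter_upwards [isOpen_Ioo.mem_nhds ht'] with s hs
    exact (hy.2 s (Ioo_subset_Icc_self hs)).hasDerivAt (Icc_mem_nhds hs.1 hs.2)
  · intro t ht
    have hX' := hy.1 t (hsub (Ico_subset_Icc_self ht))
    simp only [auxD]
    rw [aux_alg]
    exact Finset.sum_nonpos fun i _ => mul_nonpos_of_nonneg_of_nonpos (hgrad _ hX' i).le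
      (auxS_le (fun i j hij => hcoop _ hX' i j hij) _ i)

/-- a forward nonwandering point of a cooperative irreducible system
with a `C¹` first integral with positive gradient is an equilibrium. -/
theorem stmt_6 {n : ℕ} {X : Set (Fin n → ℝ)} (hX : IsOpen X)
    {f : (Fin n → ℝ) → (Fin n → ℝ)} (hf : ContDiffOn ℝ 1 f X) (hcoop : coopVF f X)
    (hirr : ∀ x ∈ X, matIrred (jacMat f x))
    {H : (Fin n → ℝ) → ℝ} (hH : ContDiffOn ℝ 1 H X)
    (hfi : ∀ x ∈ X, fderiv ℝ H x (f x) = 0)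
    (hgrad : ∀ x ∈ X, ∀ i, 0 < fderiv ℝ H x (Pi.single i 1))
    {x : Fin n → ℝ} (hx : x ∈ X)
    (hnw : ∀ ε > (0 : ℝ), ∀ T > (0 : ℝ), ∃ θ > T, ∃ η : ℝ → Fin n → ℝ,
      IsSolOn f X (Set.Icc 0 θ) η ∧ eunorm (η 0 - x) < ε ∧ eunorm (η θ - x) < ε) :
    f x = 0 := by
  classical
  by_contra hfx
  obtain ⟨r, hr, δ, hδ, α, hα, hαc⟩ := aux_flow hX hf hx
  have hxr : x ∈ Metric.closedBall x r := Metric.mem_closedBall_self hr.le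
  obtain ⟨hy0, hyd⟩ := hα x hxr
  set y : ℝ → Fin n → ℝ := fun t => α (x, t) with hydef
  have hsol : IsSolOn f X (Icc (-δ) δ) y := ⟨fun t ht => (hyd t ht).1, fun t ht => (hyd t ht).2⟩
  have hsub : Ioo 0 δ ⊆ Ioo (-δ) δ := Ioo_subset_Ioo_left (by linarith)
  have hyX : ∀ t ∈ Ioo 0 δ, y t ∈ X := fun t ht => hsol.1 t (Ioo_subset_Icc_self (hsub ht))
  have hyD : ∀ t ∈ Ioo (-δ) δ, HasDerivAt y (f (y t)) t := fun t ht =>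
    (hsol.2 t (Ioo_subset_Icc_self ht)).hasDerivAt (Icc_mem_nhds ht.1 ht.2)
  have hWc := aux_Wcont hX hf hH
  -- choose the nonwandering sequence
  have hseq : ∀ k : ℕ, ∃ θ > δ, ∃ η : ℝ → Fin n → ℝ, IsSolOn f X (Icc 0 θ) η ∧
      eunorm (η 0 - x) < 1 / ((k : ℝ) + 1) ∧ eunorm (η θ - x) < 1 / ((k : ℝ) + 1) :=
    fun k => hnw _ (by positivity) δ hδ
  choose θ hθ η hη h0 h1 using hseq
  have hto : ∀ z : ℕ → Fin n → ℝ, (∀ k : ℕ, eunorm (z k - x) < 1 / ((k : ℝ) + 1)) →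
      Tendsto z atTop (𝓝 x) := by
    intro z hz
    rw [tendsto_pi_nhds]
    intro i
    rw [tendsto_iff_dist_tendsto_zero]
    refine squeeze_zero (fun _ => dist_nonneg) (fun k => ?_)
      (tendsto_one_div_add_atTop_nhds_zero_nat (𝕜 := ℝ))
    refine le_trans ?_ (hz k).le
    rw [Real.dist_eq, eunorm]
    refine Real.abs_le_sqrt ?_
    exact Finset.single_le_sum (f := fun j => ((z k - x) j) ^ 2)
      (fun j _ => sq_nonneg _) (Finset.mem_univ i)
  have t0 := hto _ h0
  have t1 := hto _ h1
  have hconst : ∀ t ∈ Ioo 0 δ, auxW f H (y t) = auxW f H x := by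
    intro t ht
    apply le_antisymm
    · have := aux_mono hX hf hcoop hH hfi hgrad hsol (a := 0) (b := t) (by linarith) ht.1.le
        ht.2.le
      rwa [show y 0 = x from hy0] at this
    · have hev : ∀ᶠ k in atTop, η k t = α (η k 0, t) := by
        filter_upwards [t0.eventually (Metric.closedBall_mem_nhds x hr)] with k hk
        have hk1 := hα (η k 0) hk
        have s1 : Icc 0 δ ⊆ Icc 0 (θ k) := Icc_subset_Icc_right (hθ k).le
        have s2 : Icc 0 δ ⊆ Icc (-δ) δ := Icc_subset_Icc_left (by linarith)
        exact aux_unique hX hf (b := δ) (p := η k) (q := fun s => α (η k 0, s))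
          ⟨fun s hs => (hη k).1 s (s1 hs), fun s hs => ((hη k).2 s (s1 hs)).mono s1⟩
          ⟨fun s hs => (hk1.2 s (s2 hs)).1, fun s hs => ((hk1.2 s (s2 hs)).2).mono s2⟩
          hk1.1.symm (Ioo_subset_Icc_self ht)
      have hαt : ContinuousAt α (x, t) := hαc.continuousAt
        (prod_mem_nhds (Metric.closedBall_mem_nhds x hr)
          (Icc_mem_nhds (hsub ht).1 (hsub ht).2))
      have t2 : Tendsto (fun k => η k t) atTop (𝓝 (y t)) := by
        have : Tendsto (fun k => α (η k 0, t)) atTop (𝓝 (y t)) :=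
          hαt.tendsto.comp (t0.prodMk_nhds tendsto_const_nhds)
        exact this.congr' (hev.mono fun k hk => hk.symm)
      have t3 := ((hWc.continuousAt (hX.mem_nhds (hyX t ht))).tendsto).comp t2
      have t4 := ((hWc.continuousAt (hX.mem_nhds hx)).tendsto).comp t1
      refine le_of_tendsto_of_tendsto t4 t3 (Eventually.of_forall fun k => ?_)
      exact aux_mono hX hf hcoop hH hfi hgrad (hη k) ht.1 (ht.2.trans (hθ k)).le le_rfl
  have hD : ∀ t ∈ Ioo 0 δ, auxD f H (y t) = 0 := by
    intro t ht
    have d1 := aux_Wderiv hX hf hH hfi (hyX t ht)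
      (by filter_upwards [isOpen_Ioo.mem_nhds (hsub ht)] with s hs using hyD s hs)
    have d2 : HasDerivAt (fun s => auxW f H (y s)) 0 t :=
      (hasDerivAt_const t (auxW f H x)).congr_of_eventuallyEq (by
        filter_upwards [isOpen_Ioo.mem_nhds ht] with s hs using hconst s hs)
    exact (uniqueDiffWithinAt_Ici t).eq_deriv _ d1 (d2.hasDerivWithinAt)
  have hfc : ∀ t ∈ Ioo (-δ) δ, ∀ i, ContinuousAt (fun s => f (y s) i) t := by
    intro t ht i
    exact (aux_vderiv hX hf (hsol.1 t (Ioo_subset_Icc_self ht)) (hyD t ht) i).continuousAt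
  -- support of `f (y t)`
  let P : ℝ → Finset (Fin n) := fun t => Finset.univ.filter fun i => f (y t) i ≠ 0
  obtain ⟨_, ⟨t, ht, rfl⟩, hmax⟩ := Set.exists_max_image (P '' Ioo 0 δ) Finset.card
    (Set.toFinite _) ((nonempty_Ioo.2 hδ).image _)
  have hmax' : ∀ s ∈ Ioo 0 δ, (P s).card ≤ (P t).card := fun s hs => hmax _ ⟨s, hs, rfl⟩
  have hne : f (y t) ≠ 0 := by
    intro hzero
    obtain ⟨i, hi⟩ : ∃ i, f x i ≠ 0 := by
      by_contra! h; exact hfx (funext h)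
    have e1 : ∀ᶠ s in 𝓝 (0 : ℝ), f (y s) i ≠ 0 :=
      (hfc 0 ⟨by linarith, hδ⟩ i).eventually_ne (by
        rw [show y 0 = x from hy0]; exact hi)
    have e2 : ∀ᶠ s in 𝓝[>] (0 : ℝ), s ∈ Ioo 0 δ := Ioo_mem_nhdsGT hδ
    obtain ⟨s, hs1, hs2⟩ := ((e1.filter_mono nhdsWithin_le_nhds).and e2).exists
    have h2 := hmax' s hs2
    have h3 : (P t).card = 0 := by simp [P, hzero]
    have h4 : 0 < (P s).card := Finset.card_pos.2 ⟨i, by simp [P, hs1]⟩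
    omega
  refine aux_contra (a := jacMat f (y t)) (fun i j hij => hcoop _ (hyX t ht) i j hij)
    (hirr _ (hyX t ht)) (v := f (y t)) (w := fun i => fderiv ℝ H (y t) (Pi.single i 1))
    (hgrad _ (hyX t ht)) hne ?_ (hD t ht) ?_
  · have := hfi _ (hyX t ht)
    rw [aux_lin (fderiv ℝ H (y t)) (f (y t))] at this
    rw [← this]
    exact Finset.sum_congr rfl fun j _ => by simp [mul_comm]
  · intro i hi
    by_contra hc
    have d := aux_vderiv hX hf (hyX t ht) (hyD t (hsub ht)) i
    have e1 : ∀ᶠ s in 𝓝[≠] t, f (y s) i ≠ 0 := d.eventually_ne hc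
    have e2 : ∀ᶠ s in 𝓝 t, ∀ j, f (y t) j ≠ 0 → f (y s) j ≠ 0 := by
      rw [eventually_all]
      intro j
      by_cases hj : f (y t) j = 0
      · simp [hj]
      · exact ((hfc t (hsub ht) j).eventually_ne hj).mono fun s hs _ => hs
    have e3 : ∀ᶠ s in 𝓝 t, s ∈ Ioo 0 δ := isOpen_Ioo.mem_nhds ht
    obtain ⟨s, ⟨hs1, hs2⟩, hs3⟩ := ((e1.and (e2.filter_mono nhdsWithin_le_nhds)).and
      (e3.filter_mono nhdsWithin_le_nhds)).exists
    have hlt : P t ⊂ P s := by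
      rw [Finset.ssubset_iff_of_subset]
      · exact ⟨i, by simp [P, hs1], by simp [P, hi]⟩
      · intro j hj
        simp only [P, Finset.mem_filter, Finset.mem_univ, true_and] at hj ⊢
        exact hs2 j hj
    exact absurd (hmax' s hs3) (not_le.2 (Finset.card_lt_card hlt))
end
end

section
/- Let X ⊆ ℝⁿ be open, let f : X → ℝⁿ be a C¹ cooperative irreducible vector field, and let H : X → ℝ be a C¹ first integral for ẋ = f(x) with positive gradient. Suppose x ∈ X has the property that for every ε > 0 and every T > 0 there exist θ > T and a solution η : [−θ,0] → X of ẋ = f(x) such that ‖η(0) − x‖ < ε and ‖η(−θ) − x‖ < ε (i.e. x is backward nonwandering). Then x is an equilibrium: f(x) = 0. -/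
open Set Filter Topology

noncomputable section

theorem stmt7_clm {α E F : Type*} [NormedAddCommGroup E] [NormedSpace ℝ E]
    [NormedAddCommGroup F] [NormedSpace ℝ F] {l : Filter α} {A : α → E →L[ℝ] F} {v : α → E}
    {A0 : E →L[ℝ] F} {v0 : E} (hA : Tendsto A l (𝓝 A0)) (hv : Tendsto v l (𝓝 v0)) :
    Tendsto (fun a => A a (v a)) l (𝓝 (A0 v0)) :=
  (isBoundedBilinearMap_apply.continuous.tendsto (A0, v0)).comp (hA.prodMk_nhds hv)

theorem stmt7_pderiv {E : Type*} [NormedAddCommGroup E] [NormedSpace ℝ E] {X : Set E} (hX : IsOpen X)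
    {f : E → E} (hf : ContDiffOn ℝ 1 f X) {H : E → ℝ} (hH : ContDiffOn ℝ 1 H X)
    (hfi : ∀ x ∈ X, fderiv ℝ H x (f x) = 0) {γ : ℝ → E} {t : ℝ} (hγt : γ t ∈ X)
    (hγ : ∀ᶠ s in 𝓝 t, HasDerivAt γ (f (γ s)) s) (e : E) :
    HasDerivAt (fun s => fderiv ℝ H (γ s) e) (-(fderiv ℝ H (γ t) (fderiv ℝ f (γ t) e))) t := by
  have hfat : ∀ y ∈ X, ContDiffAt ℝ 1 f y := fun y hy => hf.contDiffAt (hX.mem_nhds hy)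
  have hHat : ∀ y ∈ X, ContDiffAt ℝ 1 H y := fun y hy => hH.contDiffAt (hX.mem_nhds hy)
  have hDH : ∀ y ∈ X, ContinuousAt (fderiv ℝ H) y := fun y hy =>
    (hH.continuousOn_fderiv_of_isOpen hX le_rfl).continuousAt (hX.mem_nhds hy)
  have hDf : ∀ y ∈ X, ContinuousAt (fderiv ℝ f) y := fun y hy =>
    (hf.continuousOn_fderiv_of_isOpen hX le_rfl).continuousAt (hX.mem_nhds hy)
  have hc : ContinuousAt γ t := hγ.self_of_nhds.continuousAt
  have hl2 : Tendsto (fun n : ℝ × ℝ => γ n.2) (𝓝[≠] (0:ℝ) ×ˢ 𝓝 t) (𝓝 (γ t)) :=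
    hc.tendsto.comp tendsto_snd
  have hfst : Tendsto (fun n : ℝ × ℝ => n.1) (𝓝[≠] (0:ℝ) ×ˢ 𝓝 t) (𝓝 0) :=
    (tendsto_fst (f := 𝓝[≠] (0:ℝ)) (g := 𝓝 t)).mono_right nhdsWithin_le_nhds
  have hl1 : Tendsto (fun n : ℝ × ℝ => γ n.2 + n.1 • e) (𝓝[≠] (0:ℝ) ×ˢ 𝓝 t) (𝓝 (γ t)) := by
    have := hl2.add (hfst.smul_const e)
    simpa using this
  have hne : ∀ᶠ n : ℝ × ℝ in 𝓝[≠] (0:ℝ) ×ˢ 𝓝 t, n.1 ≠ 0 :=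
    tendsto_fst.eventually (self_mem_nhdsWithin)
  have hq : Tendsto (fun n : ℝ × ℝ => n.1⁻¹ • (f (γ n.2 + n.1 • e) - f (γ n.2)))
      (𝓝[≠] (0:ℝ) ×ˢ 𝓝 t) (𝓝 (fderiv ℝ f (γ t) e)) := by
    have hs := ((hfat _ hγt).hasStrictFDerivAt one_ne_zero).isLittleO
    have h2 := hs.comp_tendsto (hl1.prodMk_nhds hl2)
    have h3 := (Asymptotics.isBigO_refl (fun n : ℝ × ℝ => n.1⁻¹)
      (𝓝[≠] (0:ℝ) ×ˢ 𝓝 t)).smul_isLittleO h2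
    have h4 : (fun n : ℝ × ℝ => n.1⁻¹ • (f (γ n.2 + n.1 • e) - f (γ n.2)) - fderiv ℝ f (γ t) e)
        =o[𝓝[≠] (0:ℝ) ×ˢ 𝓝 t] (fun _ => e) := by
      refine h3.congr' ?_ ?_
      · filter_upwards [hne] with n hn
        simp [smul_sub, smul_smul, hn]
      · filter_upwards [hne] with n hn
        simp [smul_smul, hn]
    have h5 := h4.isBigO.trans_tendsto
    have h6 : Tendsto (fun n : ℝ × ℝ => n.1⁻¹ • (f (γ n.2 + n.1 • e) - f (γ n.2)) - fderiv ℝ f (γ t) e) (𝓝[≠] (0:ℝ) ×ˢ 𝓝 t) (𝓝 0) := by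
      by_cases he : e = 0
      · subst he; simp
      · exact (Asymptotics.isLittleO_const_iff he).1 h4
    simpa using h6.add_const (fderiv ℝ f (γ t) e)
  have hK : Tendsto (fun n : ℝ × ℝ => -(fderiv ℝ H (γ n.2 + n.1 • e)
      (n.1⁻¹ • (f (γ n.2 + n.1 • e) - f (γ n.2))))) (𝓝[≠] (0:ℝ) ×ˢ 𝓝 t)
      (𝓝 (-(fderiv ℝ H (γ t) (fderiv ℝ f (γ t) e)))) :=
    (stmt7_clm ((hDH _ hγt).tendsto.comp hl1) hq).neg
  have hg : Tendsto (fun n : ℝ × ℝ => -(fderiv ℝ H (γ n.2) (fderiv ℝ f (γ n.2) e)))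
      (𝓝[≠] (0:ℝ) ×ˢ 𝓝 t) (𝓝 (-(fderiv ℝ H (γ t) (fderiv ℝ f (γ t) e)))) :=
    (stmt7_clm ((hDH _ hγt).tendsto.comp hl2)
      (stmt7_clm ((hDf _ hγt).tendsto.comp hl2) tendsto_const_nhds)).neg
  refine hasDerivAt_of_tendstoUniformlyOnFilter (l := 𝓝[≠] (0:ℝ))
    (f := fun s t => s⁻¹ * (H (γ t + s • e) - H (γ t)))
    (f' := fun s t => -(fderiv ℝ H (γ t + s • e) (s⁻¹ • (f (γ t + s • e) - f (γ t)))))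
    (g' := fun t => -(fderiv ℝ H (γ t) (fderiv ℝ f (γ t) e))) ?_ ?_ ?_
  · rw [Metric.tendstoUniformlyOnFilter_iff]
    intro ε hε
    have := hg.dist hK
    rw [dist_self] at this
    exact this.eventually (gt_mem_nhds hε)
  · filter_upwards [hne, hl1.eventually (hX.mem_nhds hγt), hl2.eventually (hX.mem_nhds hγt),
      tendsto_snd.eventually hγ] with n hn h1 h2 h3
    have a1 : HasDerivAt (fun t => H (γ t + n.1 • e)) (fderiv ℝ H (γ n.2 + n.1 • e) (f (γ n.2))) n.2 :=
      HasFDerivAt.comp_hasDerivAt (f := fun t => γ t + n.1 • e) n.2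
      ((hHat _ h1).differentiableAt one_ne_zero).hasFDerivAt (h3.add_const _)
    have a2 : HasDerivAt (fun t => H (γ t)) (fderiv ℝ H (γ n.2) (f (γ n.2))) n.2 :=
      ((hHat _ h2).differentiableAt one_ne_zero).hasFDerivAt.comp_hasDerivAt n.2 h3
    refine ((a1.sub a2).const_mul (n.1⁻¹)).congr_deriv ?_
    rw [map_smul, map_sub, hfi _ h1, hfi _ h2]
    simp
  · filter_upwards [hc.eventually (hX.mem_nhds hγt)] with y hy
    have := ((hHat _ hy).differentiableAt one_ne_zero).hasFDerivAt.hasLineDerivAt e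
    have := hasDerivAt_iff_tendsto_slope_zero.1 this
    simpa using this

theorem stmt7_absright {q : ℝ → ℝ} {q' t : ℝ} (h : HasDerivAt q q' t) :
    HasDerivWithinAt (fun s => |q s|) ((if q t = 0 then (SignType.sign q' : ℝ) else (SignType.sign (q t) : ℝ)) * q') (Ici t) t := by
  split_ifs with h0
  · rw [sign_mul_self]
    rw [hasDerivWithinAt_iff_tendsto_slope]
    have h1 := (hasDerivWithinAt_iff_tendsto_slope.1 (h.hasDerivWithinAt (s := Ici t))).abs
    refine h1.congr' ?_
    filter_upwards [self_mem_nhdsWithin] with y hy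
    have : 0 < y - t := sub_pos.2 (lt_of_le_of_ne hy.1 (Ne.symm hy.2))
    simp [slope_def_field, h0, abs_div, abs_of_pos this]
  · exact ((hasDerivAt_abs h0).comp t h).hasDerivWithinAt

theorem stmt7_lin {n : ℕ} {F : Type*} [NormedAddCommGroup F] [NormedSpace ℝ F]
    (L : (Fin n → ℝ) →L[ℝ] F) (v : Fin n → ℝ) :
    L v = ∑ j, v j • L (Pi.single j 1) := by
  have : v = ∑ j, v j • (Pi.single j 1 : Fin n → ℝ) := by
    ext i
    simp [Finset.sum_apply, Pi.single_apply]
  conv_lhs => rw [this]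
  simp [map_sum]

/-- derivative of the i-th weighted component -/
def stmt7_dq {n : ℕ} (f : (Fin n → ℝ) → (Fin n → ℝ)) (H : (Fin n → ℝ) → ℝ)
    (y : Fin n → ℝ) (i : Fin n) : ℝ :=
  ∑ j, (fderiv ℝ H y (Pi.single i 1) * jacMat f y i j * f y j
    - fderiv ℝ H y (Pi.single j 1) * jacMat f y j i * f y i)

theorem stmt7_qderiv {n : ℕ} {X : Set (Fin n → ℝ)} (hX : IsOpen X)
    {f : (Fin n → ℝ) → (Fin n → ℝ)} (hf : ContDiffOn ℝ 1 f X)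
    {H : (Fin n → ℝ) → ℝ} (hH : ContDiffOn ℝ 1 H X)
    (hfi : ∀ x ∈ X, fderiv ℝ H x (f x) = 0) {γ : ℝ → Fin n → ℝ} {t : ℝ} (hγt : γ t ∈ X)
    (hγ : ∀ᶠ s in 𝓝 t, HasDerivAt γ (f (γ s)) s) (i : Fin n) :
    HasDerivAt (fun s => fderiv ℝ H (γ s) (Pi.single i 1) * f (γ s) i) (stmt7_dq f H (γ t) i) t := by
  have h1 := stmt7_pderiv hX hf hH hfi hγt hγ (Pi.single i 1)
  have h2 : HasDerivAt (fun s => f (γ s)) (fderiv ℝ f (γ t) (f (γ t))) t :=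
    ((hf.contDiffAt (hX.mem_nhds hγt)).differentiableAt one_ne_zero).hasFDerivAt.comp_hasDerivAt t
      hγ.self_of_nhds
  have h3 := hasDerivAt_pi.1 h2 i
  refine (h1.mul h3).congr_deriv ?_
  rw [stmt7_lin (fderiv ℝ f (γ t)) (f (γ t)),
    stmt7_lin (fderiv ℝ H (γ t)) (fderiv ℝ f (γ t) (Pi.single i 1))]
  simp only [stmt7_dq, jacMat, Finset.sum_apply, Pi.smul_apply, smul_eq_mul, Finset.sum_sub_distrib,
    neg_mul, Finset.sum_mul, Finset.mul_sum]
  rw [neg_add_eq_sub]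
  congr 1 <;> exact Finset.sum_congr rfl fun j _ => by ring

theorem stmt7_alg {n : ℕ} (p w s : Fin n → ℝ) (A : Fin n → Fin n → ℝ) :
    ∑ i, s i * ∑ j, (p i * A i j * w j - p j * A j i * w i) =
      ∑ i, ∑ j, p i * A i j * (s i * w j - s j * w j) := by
  simp only [Finset.mul_sum, mul_sub, Finset.sum_sub_distrib]
  congr 1
  · exact Finset.sum_congr rfl fun i _ => Finset.sum_congr rfl fun j _ => by ring
  · rw [Finset.sum_comm]
    exact Finset.sum_congr rfl fun i _ => Finset.sum_congr rfl fun j _ => by ring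

theorem stmt7_term {n : ℕ} {p w s : Fin n → ℝ} {A : Fin n → Fin n → ℝ} (hp : ∀ i, 0 < p i)
    (hA : ∀ i j, i ≠ j → 0 ≤ A i j) (hs : ∀ i, |s i| ≤ 1) (hsw : ∀ i, s i * w i = |w i|) (i j : Fin n) :
    p i * A i j * (s i * w j - s j * w j) ≤ 0 := by
  by_cases h : i = j
  · subst h; simp
  · refine mul_nonpos_of_nonneg_of_nonpos (mul_nonneg (hp i).le (hA i j h)) ?_
    rw [hsw]
    have : |s i * w j| ≤ |w j| := by
      rw [abs_mul]; exact mul_le_of_le_one_left (abs_nonneg _) (hs i)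
    linarith [le_abs_self (s i * w j)]

def stmt7_V {n : ℕ} (f : (Fin n → ℝ) → (Fin n → ℝ)) (H : (Fin n → ℝ) → ℝ)
    (y : Fin n → ℝ) : ℝ := ∑ i, |fderiv ℝ H y (Pi.single i 1) * f y i|

theorem stmt7_Vcont {n : ℕ} {X : Set (Fin n → ℝ)} (hX : IsOpen X)
    {f : (Fin n → ℝ) → (Fin n → ℝ)} (hf : ContDiffOn ℝ 1 f X)
    {H : (Fin n → ℝ) → ℝ} (hH : ContDiffOn ℝ 1 H X) : ContinuousOn (stmt7_V f H) X := by
  have h1 := hH.continuousOn_fderiv_of_isOpen hX le_rfl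
  have h2 := hf.continuousOn
  unfold stmt7_V
  refine continuousOn_finsetSum _ fun i _ => ?_
  exact ((h1.clm_apply continuousOn_const).mul (continuousOn_pi.1 h2 i)).abs

theorem stmt7_signabs (a : ℝ) : |((SignType.sign a : SignType) : ℝ)| ≤ 1 := by
  rcases lt_trichotomy a 0 with h | h | h <;> simp [h]

theorem stmt7_anti {n : ℕ} {X : Set (Fin n → ℝ)} (hX : IsOpen X)
    {f : (Fin n → ℝ) → (Fin n → ℝ)} (hf : ContDiffOn ℝ 1 f X) (hcoop : coopVF f X)
    {H : (Fin n → ℝ) → ℝ} (hH : ContDiffOn ℝ 1 H X)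
    (hfi : ∀ x ∈ X, fderiv ℝ H x (f x) = 0)
    (hgrad : ∀ x ∈ X, ∀ i, 0 < fderiv ℝ H x (Pi.single i 1)) {γ : ℝ → Fin n → ℝ} {a b : ℝ}
    (hab : a < b) (hγ : IsSolOn f X (Icc a b) γ) : stmt7_V f H (γ b) ≤ stmt7_V f H (γ a) := by
  have hγc : ContinuousOn γ (Icc a b) := fun t ht => (hγ.2 t ht).continuousWithinAt
  have hVc : ContinuousOn (fun t => stmt7_V f H (γ t)) (Icc a b) :=
    (stmt7_Vcont hX hf hH).comp hγc hγ.1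
  have hd : ∀ t ∈ Ioo a b, ∀ᶠ s in 𝓝 t, HasDerivAt γ (f (γ s)) s := fun t ht => by
    filter_upwards [Ioo_mem_nhds ht.1 ht.2] with s hs
    exact (hγ.2 s (Ioo_subset_Icc_self hs)).hasDerivAt (Icc_mem_nhds hs.1 hs.2)
  have key : ∀ c ∈ Ioo a b, stmt7_V f H (γ b) ≤ stmt7_V f H (γ c) := by
    intro c hc
    let s : ℝ → Fin n → ℝ := fun t i =>
      if fderiv ℝ H (γ t) (Pi.single i 1) * f (γ t) i = 0 then
        (SignType.sign (stmt7_dq f H (γ t) i) : ℝ)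
      else (SignType.sign (fderiv ℝ H (γ t) (Pi.single i 1) * f (γ t) i) : ℝ)
    refine image_le_of_deriv_right_le_deriv_boundary (a := c) (b := b)
      (f := fun t => stmt7_V f H (γ t))
      (f' := fun t => ∑ i, s t i * stmt7_dq f H (γ t) i)
      (B := fun _ => stmt7_V f H (γ c)) (B' := fun _ => 0)
      (hVc.mono (Icc_subset_Icc_left hc.1.le)) ?_ le_rfl continuousOn_const
      (fun _ _ => hasDerivWithinAt_const _ _ _) ?_ (right_mem_Icc.2 hc.2.le)
    · intro t ht
      have ht' : t ∈ Ioo a b := ⟨hc.1.trans_le ht.1, ht.2⟩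
      have := HasDerivWithinAt.fun_sum (u := Finset.univ) fun i _ =>
        stmt7_absright (stmt7_qderiv hX hf hH hfi (hγ.1 t (Ioo_subset_Icc_self ht')) (hd t ht') i)
      exact this
    · intro t ht
      have ht' : γ t ∈ X := hγ.1 t ⟨hc.1.le.trans ht.1, ht.2.le⟩
      simp only [stmt7_dq]
      rw [stmt7_alg (fun i => fderiv ℝ H (γ t) (Pi.single i 1)) (f (γ t)) (s t)]
      refine Finset.sum_nonpos fun i _ => Finset.sum_nonpos fun j _ =>
        stmt7_term (hgrad _ ht') (hcoop _ ht') ?_ ?_ i j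
      · intro i
        simp only [s]
        split_ifs <;> exact stmt7_signabs _
      · intro i
        have hp := hgrad _ ht' i
        simp only [s]
        split_ifs with h
        · have : f (γ t) i = 0 := by simpa [hp.ne'] using h
          simp [this]
        · rw [sign_mul, sign_pos hp, one_mul, sign_mul_self]
  have hlim : Tendsto (fun t => stmt7_V f H (γ t)) (𝓝[>] a) (𝓝 (stmt7_V f H (γ a))) := by
    have := hVc a (left_mem_Icc.2 hab.le)
    refine Tendsto.mono_left this ?_
    rw [← nhdsWithin_Ioo_eq_nhdsGT hab]
    exact nhdsWithin_mono _ Ioo_subset_Icc_self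
  refine ge_of_tendsto hlim ?_
  filter_upwards [Ioo_mem_nhdsGT hab] with t ht using key t ht

theorem stmt7_strict {n : ℕ} {X : Set (Fin n → ℝ)} (hX : IsOpen X)
    {f : (Fin n → ℝ) → (Fin n → ℝ)} (hf : ContDiffOn ℝ 1 f X) (hcoop : coopVF f X)
    (hirr : ∀ x ∈ X, matIrred (jacMat f x))
    {H : (Fin n → ℝ) → ℝ} (hH : ContDiffOn ℝ 1 H X)
    (hfi : ∀ x ∈ X, fderiv ℝ H x (f x) = 0)
    (hgrad : ∀ x ∈ X, ∀ i, 0 < fderiv ℝ H x (Pi.single i 1)) {γ : ℝ → Fin n → ℝ} {a b : ℝ}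
    (hab : a < b) (hγX : ∀ t ∈ Ioo a b, γ t ∈ X)
    (hγ : ∀ t ∈ Ioo a b, HasDerivAt γ (f (γ t)) t)
    (hne : ∀ t ∈ Ioo a b, f (γ t) ≠ 0) {c : ℝ}
    (hV : ∀ t ∈ Ioo a b, stmt7_V f H (γ t) = c) : False := by
  obtain ⟨t, ht, hmax⟩ := Set.Finite.exists_maximalFor' (fun t => {i | f (γ t) i ≠ 0}) (Ioo a b)
    (Set.toFinite _) (nonempty_Ioo.2 hab)
  have hnhds : Ioo a b ∈ 𝓝 t := Ioo_mem_nhds ht.1 ht.2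
  have hfc : ContinuousAt (fun s => f (γ s)) t :=
    ContinuousAt.comp (hf.continuousOn.continuousAt (hX.mem_nhds (hγX t ht)))
      (hγ t ht).continuousAt
  have hzero : ∀ i, f (γ t) i = 0 → ∀ᶠ s in 𝓝 t, f (γ s) i = 0 := by
    have h1 : ∀ᶠ s in 𝓝 t, ∀ i, f (γ t) i ≠ 0 → f (γ s) i ≠ 0 := by
      rw [eventually_all]
      intro i
      by_cases h : f (γ t) i = 0
      · simp [h]
      · have := (continuousAt_pi.1 hfc i).eventually_ne h
        filter_upwards [this] with s hs _ using hs
    intro i hi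
    filter_upwards [h1, hnhds] with s hs hs'
    by_contra h
    exact hmax hs' (fun i hi => hs i hi) h hi
  have hy := hγX t ht
  have hd : ∀ᶠ s in 𝓝 t, HasDerivAt γ (f (γ s)) s := by
    filter_upwards [hnhds] with s hs using hγ s hs
  have hVd : HasDerivAt (fun s => stmt7_V f H (γ s))
      (∑ i, (SignType.sign (f (γ t) i) : ℝ) * stmt7_dq f H (γ t) i) t := by
    refine HasDerivAt.fun_sum fun i _ => ?_
    by_cases h : f (γ t) i = 0
    · simp only [h, sign_zero, SignType.coe_zero, zero_mul]
      refine (hasDerivAt_const t (0:ℝ)).congr_of_eventuallyEq ?_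
      filter_upwards [hzero i h] with s hs
      simp [hs]
    · have hq := stmt7_qderiv hX hf hH hfi hy hd i
      have hp := hgrad _ hy i
      have := (hasDerivAt_abs (mul_ne_zero hp.ne' h)).comp t hq
      rw [sign_mul, sign_pos hp, one_mul] at this
      exact this
  have h0 : (∑ i, (SignType.sign (f (γ t) i) : ℝ) * stmt7_dq f H (γ t) i) = 0 := by
    refine hVd.unique ((hasDerivAt_const t c).congr_of_eventuallyEq ?_)
    filter_upwards [hnhds] with s hs using hV s hs
  simp only [stmt7_dq] at h0
  rw [stmt7_alg (fun i => fderiv ℝ H (γ t) (Pi.single i 1)) (f (γ t))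
    (fun i => (SignType.sign (f (γ t) i) : ℝ))] at h0
  have hterm := stmt7_term (w := f (γ t)) (s := fun i => (SignType.sign (f (γ t) i) : ℝ))
    (hgrad _ hy) (hcoop _ hy) (fun i => stmt7_signabs _) (fun i => sign_mul_self _)
  have hbal : ∑ j, fderiv ℝ H (γ t) (Pi.single j 1) * f (γ t) j = 0 := by
    rw [← hfi _ hy, stmt7_lin (fderiv ℝ H (γ t)) (f (γ t))]
    exact Finset.sum_congr rfl fun j _ => by simp [mul_comm]
  -- some coordinate is positive
  have hpos : ∃ i, 0 < f (γ t) i := by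
    by_contra! hcon
    refine hne t ht (funext fun i => ?_)
    have := (Finset.sum_eq_zero_iff_of_nonpos fun j _ =>
      mul_nonpos_of_nonneg_of_nonpos (hgrad _ hy j).le (hcon j)).1 hbal i (Finset.mem_univ i)
    simpa [(hgrad _ hy i).ne'] using this
  have hneg : ∃ i, ¬ 0 < f (γ t) i := by
    by_contra! hcon
    obtain ⟨i, hi⟩ := hpos
    have := (Finset.sum_eq_zero_iff_of_nonneg fun j _ =>
      mul_nonneg (hgrad _ hy j).le (hcon j).le).1 hbal i (Finset.mem_univ i)
    have := mul_pos (hgrad _ hy i) hi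
    linarith
  obtain ⟨i, hi, j, hj, hij⟩ := hirr _ hy {i | ¬ 0 < f (γ t) i} hneg (by
    obtain ⟨i, hi⟩ := hpos
    intro h
    have : i ∈ {i | ¬ 0 < f (γ t) i} := h ▸ mem_univ i
    exact this hi)
  simp only [mem_ofPred_eq, not_not] at hi hj
  have hijne : i ≠ j := fun h => hi (h ▸ hj)
  have hz := (Finset.sum_eq_zero_iff_of_nonpos fun j _ => Finset.sum_nonpos fun k _ =>
    hterm j k).1 h0 i (Finset.mem_univ i)
  have hz2 := (Finset.sum_eq_zero_iff_of_nonpos fun k _ => hterm i k).1 hz j (Finset.mem_univ j)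
  have hApos : 0 < jacMat f (γ t) i j := lt_of_le_of_ne (hcoop _ hy i j hijne) (Ne.symm hij)
  have hle : ((SignType.sign (f (γ t) i) : SignType) : ℝ) ≤ 0 := by
    rcases lt_or_eq_of_le (not_lt.1 hi) with h | h <;> simp [h]
  have hone : ((SignType.sign (f (γ t) j) : SignType) : ℝ) = 1 := by simp [hj]
  rw [hone] at hz2
  have h3 := mul_pos (hgrad _ hy i) hApos
  have h4 : (SignType.sign (f (γ t) i) : ℝ) * f (γ t) j - 1 * f (γ t) j < 0 := by
    nlinarith
  have := mul_neg_of_pos_of_neg h3 h4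
  exact this.ne hz2

theorem stmt7_right {E : Type*} [NormedAddCommGroup E] [NormedSpace ℝ E] {g : ℝ → E} {g' : E}
    {a b t : ℝ} (ht : t ∈ Ico a b) (h : HasDerivWithinAt g g' (Icc a b) t) :
    HasDerivWithinAt g g' (Ici t) t :=
  h.mono_of_mem_nhdsWithin (Icc_mem_nhdsGE_of_mem ht)

theorem stmt7_stay {E : Type*} [NormedAddCommGroup E] [NormedSpace ℝ E] {f : E → E} {x : E}
    {r M a b : ℝ} (hM : ∀ y ∈ Metric.closedBall x r, ‖f y‖ ≤ M) (hM0 : 0 ≤ M) {g : ℝ → E}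
    (hg : ∀ t ∈ Icc a b, HasDerivWithinAt g (f (g t)) (Icc a b) t)
    (ha : ‖g a - x‖ ≤ r / 2) (hb : r / 2 + (M + 1) * (b - a) ≤ r) :
    ∀ t ∈ Icc a b, g t ∈ Metric.closedBall x r := by
  have hB : ∀ t ∈ Icc a b, r / 2 + (M + 1) * (t - a) ≤ r := by
    intro t ht
    have : (M + 1) * (t - a) ≤ (M + 1) * (b - a) :=
      mul_le_mul_of_nonneg_left (by linarith [ht.2]) (by linarith)
    linarith
  have := image_norm_le_of_norm_deriv_right_lt_deriv_boundary (f := fun t => g t - x)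
    (f' := fun t => f (g t)) (a := a) (b := b)
    (B := fun t => r / 2 + (M + 1) * (t - a)) (B' := fun _ => M + 1)
    (fun t ht => (hg t ht).continuousWithinAt.sub continuousWithinAt_const)
    (fun t ht => (stmt7_right ht (hg t (Ico_subset_Icc_self ht))).sub_const x)
    (by simpa using ha)
    (fun t => by
      have := (((hasDerivAt_id t).sub_const a).const_mul (M + 1)).const_add (r / 2)
      simpa using this)
    (fun t ht h => by
      have : g t ∈ Metric.closedBall x r := by
        rw [mem_closedBall_iff_norm, h]
        exact hB t (Ico_subset_Icc_self ht)
      linarith [hM _ this])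
  intro t ht
  rw [mem_closedBall_iff_norm]
  exact (this ht).trans (hB t ht)

theorem stmt7_eunorm {n : ℕ} (v : Fin n → ℝ) : ‖v‖ ≤ eunorm v := by
  refine (pi_norm_le_iff_of_nonneg (Real.sqrt_nonneg _)).2 fun i => ?_
  rw [Real.norm_eq_abs]
  exact Real.abs_le_sqrt (Finset.single_le_sum (f := fun i => v i ^ 2) (fun i _ => sq_nonneg _) (Finset.mem_univ i))

/-- a backward nonwandering point of a cooperative irreducible system
with a `C¹` first integral with positive gradient is an equilibrium. -/
theorem stmt_7 {n : ℕ} {X : Set (Fin n → ℝ)} (hX : IsOpen X)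
    {f : (Fin n → ℝ) → (Fin n → ℝ)} (hf : ContDiffOn ℝ 1 f X) (hcoop : coopVF f X)
    (hirr : ∀ x ∈ X, matIrred (jacMat f x))
    {H : (Fin n → ℝ) → ℝ} (hH : ContDiffOn ℝ 1 H X)
    (hfi : ∀ x ∈ X, fderiv ℝ H x (f x) = 0)
    (hgrad : ∀ x ∈ X, ∀ i, 0 < fderiv ℝ H x (Pi.single i 1))
    {x : Fin n → ℝ} (hx : x ∈ X)
    (hnw : ∀ ε > (0 : ℝ), ∀ T > (0 : ℝ), ∃ θ > T, ∃ η : ℝ → Fin n → ℝ,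
      IsSolOn f X (Set.Icc (-θ) 0) η ∧ eunorm (η 0 - x) < ε ∧
        eunorm (η (-θ) - x) < ε) :
    f x = 0 := by
  by_contra hx0
  have hfx : ContDiffAt ℝ 1 f x := hf.contDiffAt (hX.mem_nhds hx)
  obtain ⟨γ, hγ0, ε, hε, hγ⟩ :=
    hfx.exists_forall_mem_closedBall_exists_eq_forall_mem_Ioo_hasDerivAt₀ 0
  simp only [zero_sub, zero_add] at hγ
  obtain ⟨K, s, hs, hK⟩ := hfx.exists_lipschitzOnWith
  obtain ⟨r, hr, hball⟩ := Metric.nhds_basis_closedBall.mem_iff.1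
    (inter_mem (inter_mem hs (hX.mem_nhds hx)) (hfx.continuousAt.eventually_ne hx0))
  have hKb : LipschitzOnWith K f (Metric.closedBall x r) := hK.mono fun y hy => (hball hy).1.1
  obtain ⟨M, hM0, hM⟩ : ∃ M : ℝ, 0 ≤ M ∧ ∀ y ∈ Metric.closedBall x r, ‖f y‖ ≤ M := by
    refine ⟨‖f x‖ + K * r, by positivity, fun y hy => ?_⟩
    have h1 := hKb.dist_le_mul y hy x (Metric.mem_closedBall_self hr.le)
    have h2 : (K : ℝ) * dist y x ≤ K * r := mul_le_mul_of_nonneg_left hy K.2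
    rw [dist_eq_norm] at h1
    have h3 : ‖f y‖ ≤ ‖f x‖ + ‖f y - f x‖ := norm_le_norm_add_norm_sub' _ _
    linarith
  obtain ⟨τ, hτ0, hτε, hτM⟩ : ∃ τ : ℝ, 0 < τ ∧ τ < ε ∧ r / 2 + (M + 1) * τ ≤ r := by
    refine ⟨min (ε / 2) (r / 2 / (M + 1)), lt_min (by linarith) (by positivity),
      (min_le_left _ _).trans_lt (by linarith), ?_⟩
    have h1 : (M + 1) * min (ε / 2) (r / 2 / (M + 1)) ≤ (M + 1) * (r / 2 / (M + 1)) :=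
      mul_le_mul_of_nonneg_left (min_le_right _ _) (by linarith)
    rw [mul_div_cancel₀ _ (by linarith)] at h1
    linarith
  have hγd : ∀ t ∈ Icc 0 τ, HasDerivAt γ (f (γ t)) t := fun t ht =>
    hγ t ⟨by linarith [ht.1], by linarith [ht.2]⟩
  have hγb : ∀ t ∈ Icc 0 τ, γ t ∈ Metric.closedBall x r :=
    stmt7_stay hM hM0 (fun t ht => (hγd t ht).hasDerivWithinAt) (by rw [hγ0]; simp; linarith)
      (by simpa using hτM)
  have hγX : ∀ t ∈ Icc 0 τ, γ t ∈ X := fun t ht => (hball (hγb t ht)).1.2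
  have hVc : ∀ y ∈ X, ContinuousAt (stmt7_V f H) y := fun y hy =>
    (stmt7_Vcont hX hf hH).continuousAt (hX.mem_nhds hy)
  choose! θ hθ η hη hη0 hηθ using fun k : ℕ =>
    hnw (1 / ((k : ℝ) + 1)) Nat.one_div_pos_of_nat τ hτ0
  have hlim1 : Tendsto (fun k => η k 0) atTop (𝓝 x) := by
    rw [tendsto_iff_norm_sub_tendsto_zero]
    exact squeeze_zero (fun _ => norm_nonneg _)
      (fun k => (stmt7_eunorm _).trans (hη0 k).le) tendsto_one_div_add_atTop_nhds_zero_nat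
  have hlim2 : Tendsto (fun k => dist (η k (-θ k)) x) atTop (𝓝 0) := by
    refine squeeze_zero (fun _ => dist_nonneg)
      (fun k => ?_) tendsto_one_div_add_atTop_nhds_zero_nat
    rw [dist_eq_norm]
    exact (stmt7_eunorm _).trans (hηθ k).le
  refine stmt7_strict hX hf hcoop hirr hH hfi hgrad hτ0
    (fun t ht => hγX t (Ioo_subset_Icc_self ht)) (fun t ht => hγd t (Ioo_subset_Icc_self ht))
    (fun t ht => (hball (hγb t (Ioo_subset_Icc_self ht))).2) (c := stmt7_V f H x) ?_
  intro t ht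
  refine le_antisymm ?_ ?_
  · have := stmt7_anti hX hf hcoop hH hfi hgrad (γ := γ) ht.1
      ⟨fun u hu => hγX u ⟨hu.1, hu.2.trans ht.2.le⟩,
        fun u hu => (hγd u ⟨hu.1, hu.2.trans ht.2.le⟩).hasDerivWithinAt⟩
    rwa [hγ0] at this
  · have hlim3 : Tendsto (fun k => η k (-θ k + t)) atTop (𝓝 (γ t)) := by
      rw [tendsto_iff_dist_tendsto_zero]
      have hev : ∀ᶠ k in atTop, dist (η k (-θ k)) x < r / 2 :=
        hlim2.eventually (gt_mem_nhds (by linarith))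
      have hz : Tendsto (fun k => dist (η k (-θ k)) x * Real.exp (K * t)) atTop (𝓝 0) := by
        simpa using hlim2.mul_const (Real.exp (K * t))
      refine squeeze_zero' (Eventually.of_forall fun _ => dist_nonneg) ?_ hz
      filter_upwards [hev] with k hk
      have hsub : Icc (-θ k) (-θ k + τ) ⊆ Icc (-θ k) 0 :=
        Icc_subset_Icc_right (by linarith [hθ k])
      have hd : ∀ u ∈ Icc (-θ k) (-θ k + τ),
          HasDerivWithinAt (η k) (f (η k u)) (Icc (-θ k) (-θ k + τ)) u :=
        fun u hu => ((hη k).2 u (hsub hu)).mono hsub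
      have hin := stmt7_stay hM hM0 hd (by rw [← dist_eq_norm]; exact hk.le)
        (by simpa using hτM)
      have hmem : ∀ u ∈ Icc (-θ k) (-θ k + τ), u + θ k ∈ Icc 0 τ := fun u hu =>
        ⟨by linarith [hu.1], by linarith [hu.2]⟩
      have hd2 : ∀ u ∈ Icc (-θ k) (-θ k + τ),
          HasDerivAt (fun u => γ (u + θ k)) (f (γ (u + θ k))) u :=
        fun u hu => (hγd _ (hmem u hu)).comp_add_const u (θ k)
      have := dist_le_of_trajectories_ODE_of_mem (v := fun _ => f) (K := K)
        (s := fun _ => Metric.closedBall x r) (f := η k) (g := fun u => γ (u + θ k))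
        (a := -θ k) (b := -θ k + τ) (δ := dist (η k (-θ k)) x)
        (fun _ _ => hKb) (fun u hu => (hd u hu).continuousWithinAt)
        (fun u hu => stmt7_right hu (hd u (Ico_subset_Icc_self hu)))
        (fun u hu => hin u (Ico_subset_Icc_self hu))
        (fun u hu => (hd2 u hu).continuousAt.continuousWithinAt)
        (fun u hu => (hd2 u (Ico_subset_Icc_self hu)).hasDerivWithinAt)
        (fun u hu => hγb _ (hmem u (Ico_subset_Icc_self hu)))
        (by simp [hγ0]) (-θ k + t) ⟨by linarith [ht.1], by linarith [ht.2]⟩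
      have e1 : -θ k + t + θ k = t := by ring
      have e2 : -θ k + t - -θ k = t := by ring
      simpa only [e1, e2] using this
    refine le_of_tendsto_of_tendsto' ((hVc x hx).tendsto.comp hlim1)
      ((hVc _ (hγX t (Ioo_subset_Icc_self ht))).tendsto.comp hlim3) fun k => ?_
    have hsub : Icc (-θ k + t) 0 ⊆ Icc (-θ k) 0 := Icc_subset_Icc_left (by linarith [ht.1])
    exact stmt7_anti hX hf hcoop hH hfi hgrad (by linarith [ht.2, hθ k])
      ⟨fun u hu => (hη k).1 u (hsub hu), fun u hu => ((hη k).2 u (hsub hu)).mono hsub⟩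
end
end

section
/- Let X ⊆ ℝⁿ be open, let f : X → ℝⁿ be a C¹ cooperative irreducible vector field, and let H : X → ℝ be a C¹ first integral for ẋ = f(x) with positive gradient. Then for every solution γ : [0,∞) → X of ẋ = f(x), the ω-limit set of γ contains at most one point (it is either empty or a singleton). -/
open Set Filter Topology

noncomputable section

section helpers

variable {n : ℕ}

lemma h_lin_apply (L : (Fin n → ℝ) →L[ℝ] ℝ) (v : Fin n → ℝ) :
    L v = ∑ i, v i * L (Pi.single i 1) := by
  conv_lhs => rw [pi_eq_sum_univ' v]
  rw [map_sum]
  refine Finset.sum_congr rfl fun i _ => ?_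
  rw [map_smul, smul_eq_mul]

lemma h_pos_mono {L : (Fin n → ℝ) →L[ℝ] ℝ} (hL : ∀ i, 0 < L (Pi.single i 1))
    {v w : Fin n → ℝ} (h : ∀ i, v i ≤ w i) : L v ≤ L w := by
  rw [h_lin_apply L v, h_lin_apply L w]
  exact Finset.sum_le_sum fun i _ => mul_le_mul_of_nonneg_right (h i) (hL i).le

lemma h_pos_zero {L : (Fin n → ℝ) →L[ℝ] ℝ} (hL : ∀ i, 0 < L (Pi.single i 1))
    {v : Fin n → ℝ} (h : ∀ i, 0 ≤ v i) (h0 : L v = 0) : v = 0 := by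
  rw [h_lin_apply L v,
    Finset.sum_eq_zero_iff_of_nonneg (fun i _ => mul_nonneg (h i) (hL i).le)] at h0
  ext i
  have := h0 i (Finset.mem_univ i)
  rcases mul_eq_zero.1 this with h1 | h1
  · exact h1
  · exact absurd h1 (hL i).ne'

lemma h_row (A : (Fin n → ℝ) →L[ℝ] (Fin n → ℝ)) (v : Fin n → ℝ) (i : Fin n) :
    A v i = ∑ j, v j * A (Pi.single j 1) i :=
  h_lin_apply ((ContinuousLinearMap.proj i).comp A) v

lemma h_coop_row {A : (Fin n → ℝ) →L[ℝ] (Fin n → ℝ)}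
    (hA : ∀ i j : Fin n, i ≠ j → 0 ≤ A (Pi.single j 1) i)
    {v w : Fin n → ℝ} (h : ∀ i, v i ≤ w i) {i : Fin n} (hi : v i = w i) : A v i ≤ A w i := by
  rw [h_row A v, h_row A w]
  refine Finset.sum_le_sum fun j _ => ?_
  by_cases hj : i = j
  · subst hj; rw [hi]
  · exact mul_le_mul_of_nonneg_right (h j) (hA i j hj)

lemma h_coop_row0 {A : (Fin n → ℝ) →L[ℝ] (Fin n → ℝ)}
    (hA : ∀ i j : Fin n, i ≠ j → 0 ≤ A (Pi.single j 1) i)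
    {w : Fin n → ℝ} (h : ∀ i, 0 ≤ w i) {i : Fin n} (hi : w i = 0) : 0 ≤ A w i := by
  have := h_coop_row hA (v := 0) (w := w) h (i := i) hi.symm
  simpa using this

lemma h_row_pos {A : (Fin n → ℝ) →L[ℝ] (Fin n → ℝ)}
    (hA : ∀ i j : Fin n, i ≠ j → 0 ≤ A (Pi.single j 1) i)
    (hirr : matIrred (fun i j => A (Pi.single j 1) i))
    {v : Fin n → ℝ} (h : ∀ i, 0 ≤ v i) (h1 : ∃ i, 0 < v i) (h2 : ∃ i, v i = 0) :
    ∃ i, v i = 0 ∧ 0 < A v i := by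
  obtain ⟨a, ha⟩ := h1
  obtain ⟨i, hi, j, hj, hij⟩ := hirr {i | v i = 0} h2 (by
    intro hS
    have : a ∈ {i | v i = 0} := hS ▸ mem_univ a
    exact ha.ne' this)
  have hi' : v i = 0 := hi
  have hj' : v j ≠ 0 := hj
  have hne : i ≠ j := by rintro rfl; exact hj hi
  refine ⟨i, hi', ?_⟩
  rw [h_row]
  refine Finset.sum_pos' (fun k _ => ?_) ⟨j, Finset.mem_univ j, ?_⟩
  · by_cases hk : i = k
    · subst hk; simp [hi']
    · exact mul_nonneg (h k) (hA i k hk)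
  · exact mul_pos (lt_of_le_of_ne (h j) hj'.symm) (lt_of_le_of_ne (hA i j hne) hij.symm)

lemma h_kernel {A : (Fin n → ℝ) →L[ℝ] (Fin n → ℝ)}
    (hA : ∀ i j : Fin n, i ≠ j → 0 ≤ A (Pi.single j 1) i)
    (hirr : matIrred (fun i j => A (Pi.single j 1) i))
    {p : (Fin n → ℝ) →L[ℝ] ℝ} (hp : ∀ i, 0 < p (Pi.single i 1))
    (hpA : ∀ v, p (A v) = 0) {u : Fin n → ℝ} (hu : A u = 0) (hpu : p u = 0) : u = 0 := by
  set v : Fin n → ℝ := fun i => max (u i) 0 with hv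
  have hv0 : ∀ i, 0 ≤ v i := fun i => le_max_right _ _
  have hAv : A v = 0 := by
    refine h_pos_zero hp (fun i => ?_) (hpA v)
    by_cases hi : 0 ≤ u i
    · have := h_coop_row hA (v := u) (w := v) (fun i => le_max_left _ _) (i := i)
        (by simp [hv, hi])
      simpa [hu] using this
    · exact h_coop_row0 hA hv0 (by simp [hv, (not_le.1 hi).le])
  by_cases h1 : ∃ i, 0 < v i
  · by_cases h2 : ∃ i, v i = 0
    · obtain ⟨i, -, hi⟩ := h_row_pos hA hirr hv0 h1 h2
      simp [hAv] at hi
    · refine h_pos_zero hp (fun i => ?_) hpu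
      by_contra hi
      exact h2 ⟨i, by simp [hv, (not_le.1 hi).le]⟩
  · have : -u = 0 := by
      refine h_pos_zero hp (fun i => ?_) (by simp [hpu])
      by_contra hi
      refine h1 ⟨i, lt_max_of_lt_left ?_⟩
      simpa using hi
    simpa using this

lemma h_max_deriv {φ : ℝ → ℝ} {d t : ℝ} (h : HasDerivWithinAt φ d (Ici t) t) :
    HasDerivWithinAt (fun s => max (φ s) 0)
      (if 0 < φ t then d else if φ t < 0 then 0 else max d 0) (Ici t) t := by
  have hc := h.continuousWithinAt
  split_ifs with h1 h2
  · have : ∀ᶠ s in 𝓝[Ici t] t, 0 < φ s := hc.eventually (lt_mem_nhds h1)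
    refine h.congr_of_eventuallyEq ?_ (by simp [h1.le])
    filter_upwards [this] with s hs
    simp [hs.le]
  · have : ∀ᶠ s in 𝓝[Ici t] t, φ s < 0 := hc.eventually (gt_mem_nhds h2)
    refine (hasDerivWithinAt_const t (Ici t) (0 : ℝ)).congr_of_eventuallyEq ?_ (by simp [h2.le])
    filter_upwards [this] with s hs
    simp [hs.le]
  · have h0 : φ t = 0 := le_antisymm (not_lt.1 h1) (not_lt.1 h2)
    rw [hasDerivWithinAt_iff_tendsto_slope] at h ⊢
    have h3 := h.max (tendsto_const_nhds (x := (0 : ℝ)))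
    refine h3.congr' ?_
    filter_upwards [self_mem_nhdsWithin] with s hs
    have hst : 0 < s - t := sub_pos.2 (lt_of_le_of_ne hs.1 (Ne.symm hs.2))
    simp only [slope_def_field, h0, sub_zero, max_self]
    rw [← max_div_div_right hst.le, zero_div]

end helpers
section local_estimates

variable {n : ℕ} {X : Set (Fin n → ℝ)} {f : (Fin n → ℝ) → (Fin n → ℝ)}
  {H : (Fin n → ℝ) → ℝ}

/-- positive part of the vector field -/
def posPartVF (f : (Fin n → ℝ) → (Fin n → ℝ)) (x : Fin n → ℝ) : Fin n → ℝ :=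
  fun i => max (f x i) 0

/-- the Lyapunov function -/
def lyapV (f : (Fin n → ℝ) → (Fin n → ℝ)) (H : (Fin n → ℝ) → ℝ) (x : Fin n → ℝ) : ℝ :=
  fderiv ℝ H x (posPartVF f x)

lemma h_fder {F : Type*} [NormedAddCommGroup F] [NormedSpace ℝ F] (hX : IsOpen X)
    {g : (Fin n → ℝ) → F} (hg : ContDiffOn ℝ 1 g X) {x : Fin n → ℝ} (hx : x ∈ X) :
    HasFDerivAt g (fderiv ℝ g x) x :=
  ((hg.contDiffAt (hX.mem_nhds hx)).differentiableAt one_ne_zero).hasFDerivAt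

lemma h_fder_cont {F : Type*} [NormedAddCommGroup F] [NormedSpace ℝ F] (hX : IsOpen X)
    {g : (Fin n → ℝ) → F} (hg : ContDiffOn ℝ 1 g X) {x : Fin n → ℝ} (hx : x ∈ X) :
    ContinuousAt (fderiv ℝ g) x :=
  (hg.continuousOn_fderiv_of_isOpen hX le_rfl).continuousAt (hX.mem_nhds hx)

lemma h_posPart_cont (hX : IsOpen X) (hf : ContDiffOn ℝ 1 f X) {x : Fin n → ℝ} (hx : x ∈ X) :
    ContinuousAt (posPartVF f) x := by
  have h := (h_fder hX hf hx).continuousAt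
  refine continuousAt_pi.2 fun i => ?_
  exact ((continuous_apply i).continuousAt.comp h).max continuousAt_const

lemma h_lyap_cont (hX : IsOpen X) (hf : ContDiffOn ℝ 1 f X) (hH : ContDiffOn ℝ 1 H X)
    {x : Fin n → ℝ} (hx : x ∈ X) : ContinuousAt (lyapV f H) x :=
  (h_fder_cont hX hH hx).clm_apply (h_posPart_cont hX hf hx)

lemma h_local_est (hX : IsOpen X) (hf : ContDiffOn ℝ 1 f X) (hH : ContDiffOn ℝ 1 H X)
    (hfi : ∀ x ∈ X, fderiv ℝ H x (f x) = 0)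
    (hgrad : ∀ x ∈ X, ∀ i, 0 < fderiv ℝ H x (Pi.single i 1))
    {x : ℝ → Fin n → ℝ} {t0 b : ℝ} (hb : t0 < b) (hx : ∀ t ∈ Ico t0 b, x t ∈ X)
    (hxc : ContinuousOn x (Ico t0 b))
    (hx' : ∀ t ∈ Ico t0 b, HasDerivWithinAt x (f (x t)) (Ici t) t)
    {u' : ℝ → Fin n → ℝ}
    (hu' : ∀ t ∈ Ico t0 b, HasDerivWithinAt (fun s => posPartVF f (x s)) (u' t) (Ici t) t)
    {w : Fin n → ℝ}
    (hw : ∀ ε > 0, ∀ᶠ t in 𝓝[≥] t0, ∀ i,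
      u' t i - fderiv ℝ f (x t0) (posPartVF f (x t)) i ≤ w i + ε)
    {r : ℝ} (hr : fderiv ℝ H (x t0) w < r) :
    ∀ᶠ z in 𝓝[>] t0, lyapV f H (x z) - lyapV f H (x t0) ≤ r * (z - t0) := by
  have ht0 : t0 ∈ Ico t0 b := ⟨le_rfl, hb⟩
  have hx0 := hx t0 ht0
  -- choice of ε
  obtain ⟨ε, hε, hεr⟩ : ∃ ε > 0, fderiv ℝ H (x t0) (fun i => w i + 2 * ε) < r := by
    have hc : Continuous fun ε : ℝ => fderiv ℝ H (x t0) (fun i => w i + 2 * ε) := by fun_prop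
    have h1 : ∀ᶠ ε in 𝓝 (0 : ℝ), fderiv ℝ H (x t0) (fun i => w i + 2 * ε) < r := by
      refine hc.continuousAt.eventually (gt_mem_nhds ?_)
      simpa using hr
    have h2 : ∀ᶠ ε in 𝓝[>] (0 : ℝ), fderiv ℝ H (x t0) (fun i => w i + 2 * ε) < r :=
      h1.filter_mono nhdsWithin_le_nhds
    obtain ⟨ε, h3, h4⟩ := (h2.and self_mem_nhdsWithin).exists
    exact ⟨ε, h4, h3⟩
  set M : ℝ := ‖posPartVF f (x t0)‖ + 1 with hM
  have hM0 : 0 < M := by positivity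
  -- neighbourhood in space
  obtain ⟨ρ, hρ, hball⟩ : ∃ ρ > 0, ∀ a ∈ Metric.ball (x t0) ρ, ∀ c ∈ Metric.ball (x t0) ρ,
      a ∈ X ∧ fderiv ℝ H a (fun i => w i + 2 * ε) < r ∧
      ‖f a - f c - fderiv ℝ f (x t0) (a - c)‖ ≤ ε / M * ‖a - c‖ := by
    have h1 : ∀ᶠ a in 𝓝 (x t0), a ∈ X := hX.mem_nhds hx0
    have h2 : ∀ᶠ a in 𝓝 (x t0), fderiv ℝ H a (fun i => w i + 2 * ε) < r :=
      ((h_fder_cont hX hH hx0).clm_apply continuousAt_const).eventually (gt_mem_nhds hεr)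
    have h3 := ((hf.contDiffAt (hX.mem_nhds hx0)).hasStrictFDerivAt one_ne_zero).isLittleO.def
      (div_pos hε hM0)
    obtain ⟨ρ1, hρ1, h12⟩ := Metric.eventually_nhds_iff_ball.1 (h1.and h2)
    obtain ⟨ρ2, hρ2, h3'⟩ := Metric.eventually_nhds_iff_ball.1 h3
    refine ⟨min ρ1 ρ2, lt_min hρ1 hρ2, fun a ha c hc => ?_⟩
    have ha1 := h12 a (Metric.ball_subset_ball (min_le_left _ _) ha)
    refine ⟨ha1.1, ha1.2, ?_⟩
    have := h3' (a, c) (by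
      rw [← ball_prod_same]
      exact ⟨Metric.ball_subset_ball (min_le_right _ _) ha,
        Metric.ball_subset_ball (min_le_right _ _) hc⟩)
    simpa using this
  -- neighbourhood in time
  have hxct : ContinuousWithinAt x (Ici t0) t0 := (hx' t0 ht0).continuousWithinAt
  have e1 : ∀ᶠ t in 𝓝[≥] t0, x t ∈ Metric.ball (x t0) (ρ / 2) :=
    hxct.eventually (Metric.ball_mem_nhds _ (half_pos hρ))
  have e2 : ∀ᶠ t in 𝓝[≥] t0, ‖posPartVF f (x t)‖ < M :=
    (hu' t0 ht0).continuousWithinAt.norm.eventually (gt_mem_nhds (by simp [hM]))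
  have e3 : ∀ᶠ t in 𝓝[≥] t0, t < b := nhdsWithin_le_nhds (gt_mem_nhds hb)
  obtain ⟨d, hd, hdI⟩ := (mem_nhdsGE_iff_exists_Icc_subset).1
    (((e1.and e2).and (e3.and (hw ε hε))))
  have hd' : t0 < d := hd
  filter_upwards [Ioo_mem_nhdsGT hd'] with z hz
  -- now z fixed
  have key : ∀ h ∈ Ioo 0 (ρ / (2 * M)),
      h⁻¹ * (H (x z + h • posPartVF f (x z)) - H (x z))
        - h⁻¹ * (H (x t0 + h • posPartVF f (x t0)) - H (x t0)) ≤ r * (z - t0) := by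
    intro h hh
    have hh0 : 0 < h := hh.1
    have hin : ∀ t ∈ Icc t0 d, x t ∈ Metric.ball (x t0) ρ ∧
        x t + h • posPartVF f (x t) ∈ Metric.ball (x t0) ρ := by
      intro t ht
      obtain ⟨⟨k1, k2⟩, -⟩ := hdI ht
      refine ⟨Metric.ball_subset_ball (by linarith) k1, ?_⟩
      rw [mem_ball_iff_norm] at k1 ⊢
      have k3 : ‖h • posPartVF f (x t)‖ < ρ / 2 := by
        rw [norm_smul, Real.norm_eq_abs, abs_of_pos hh0]
        calc h * ‖posPartVF f (x t)‖ ≤ h * M := by gcongr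
          _ < ρ / (2 * M) * M := by gcongr; exact hh.2
          _ = ρ / 2 := by field_simp
      calc ‖x t + h • posPartVF f (x t) - x t0‖
          = ‖(x t - x t0) + h • posPartVF f (x t)‖ := by congr 1; abel
        _ ≤ ‖x t - x t0‖ + ‖h • posPartVF f (x t)‖ := norm_add_le _ _
        _ < ρ := by linarith
    set G : ℝ → ℝ := fun t => H (x t + h • posPartVF f (x t)) - H (x t) with hG
    set G' : ℝ → ℝ := fun t => fderiv ℝ H (x t + h • posPartVF f (x t)) (f (x t) + h • u' t)
      - fderiv ℝ H (x t) (f (x t)) with hG'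
    have hIco : ∀ t ∈ Icc t0 d, t ∈ Ico t0 b := fun t ht => ⟨ht.1, (hdI ht).2.1⟩
    have hder : ∀ t ∈ Icc t0 d, HasDerivWithinAt G (G' t) (Ici t) t := by
      intro t ht
      obtain ⟨i1, i2⟩ := hin t ht
      have m1 := (hball _ i1 _ i1).1
      have m2 := (hball _ i2 _ i2).1
      have d1 := (hx' t (hIco t ht)).add ((hu' t (hIco t ht)).const_smul h)
      exact ((h_fder hX hH m2).comp_hasDerivWithinAt t d1).sub
        ((h_fder hX hH m1).comp_hasDerivWithinAt t (hx' t (hIco t ht)))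
    have hcont : ContinuousOn G (Icc t0 d) := by
      intro t ht
      obtain ⟨i1, i2⟩ := hin t ht
      have m1 := (hball _ i1 _ i1).1
      have m2 := (hball _ i2 _ i2).1
      have c1 : ContinuousWithinAt x (Icc t0 d) t := (hxc t (hIco t ht)).mono hIco
      have c2 : ContinuousWithinAt (fun s => posPartVF f (x s)) (Icc t0 d) t :=
        (h_posPart_cont hX hf m1).comp_continuousWithinAt c1
      exact (ContinuousAt.comp_continuousWithinAt (f := fun s => x s + h • posPartVF f (x s))
        (h_fder hX hH m2).continuousAt (c1.add (c2.const_smul h))).sub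
        ((h_fder hX hH m1).continuousAt.comp_continuousWithinAt c1)
    have hbd : ∀ t ∈ Icc t0 d, G' t ≤ h * r := by
      intro t ht
      obtain ⟨i1, i2⟩ := hin t ht
      have m1 := (hball _ i1 _ i1).1
      obtain ⟨m2, m3, m4⟩ := hball _ i2 _ i1
      obtain ⟨⟨-, k2⟩, -, k4⟩ := hdI ht
      have k5 : ‖f (x t + h • posPartVF f (x t)) - f (x t)
          - fderiv ℝ f (x t0) (h • posPartVF f (x t))‖ ≤ h * ε := by
        rw [add_sub_cancel_left] at m4
        refine m4.trans ?_
        rw [norm_smul, Real.norm_eq_abs, abs_of_pos hh0]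
        calc ε / M * (h * ‖posPartVF f (x t)‖) ≤ ε / M * (h * M) := by gcongr
          _ = h * ε := by field_simp
      have hcw : ∀ i, (f (x t) + h • u' t - f (x t + h • posPartVF f (x t))) i
          ≤ (h • (fun i => w i + 2 * ε)) i := by
        intro i
        have k6 := (norm_le_pi_norm _ i).trans k5
        rw [Real.norm_eq_abs, abs_le] at k6
        have k7 := k6.1
        have k8 := mul_le_mul_of_nonneg_left (k4 i) hh0.le
        simp only [map_smul, Pi.sub_apply, Pi.smul_apply, smul_eq_mul, Pi.add_apply] at k7 k8 ⊢
        linarith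
      have k9 := h_pos_mono (hgrad _ m2) hcw
      rw [map_sub, hfi _ m2, map_smul, smul_eq_mul, sub_zero] at k9
      have k10 : h * fderiv ℝ H (x t + h • posPartVF f (x t)) (fun i => w i + 2 * ε) ≤ h * r := by
        gcongr
      simp only [hG']
      rw [hfi _ m1]
      linarith
    have hfin := image_le_of_deriv_right_le_deriv_boundary (f := G) (f' := G') (a := t0) (b := d)
      (B := fun t => G t0 + h * r * (t - t0)) (B' := fun _ => h * r) hcont
      (fun t ht => hder t (Ico_subset_Icc_self ht)) (by simp) (by fun_prop)
      (fun t _ => by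
        have := ((hasDerivAt_id t).sub_const t0).const_mul (h * r) |>.const_add (G t0)
        simpa using this.hasDerivWithinAt)
      (fun t ht => hbd t (Ico_subset_Icc_self ht)) (Ioo_subset_Icc_self hz)
    have hfin' : G z - G t0 ≤ h * (r * (z - t0)) := by
      have : G z ≤ G t0 + h * r * (z - t0) := hfin
      linarith
    calc h⁻¹ * G z - h⁻¹ * G t0 = h⁻¹ * (G z - G t0) := by ring
      _ ≤ h⁻¹ * (h * (r * (z - t0))) := by gcongr
      _ = r * (z - t0) := by field_simp
  have hlim : ∀ a ∈ X, Tendsto (fun h : ℝ => h⁻¹ * (H (a + h • posPartVF f a) - H a))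
      (𝓝[>] 0) (𝓝 (lyapV f H a)) := by
    intro a ha
    have h1 : HasDerivAt (fun h : ℝ => a + h • posPartVF f a) (posPartVF f a) 0 := by
      simpa using ((hasDerivAt_id (0 : ℝ)).smul_const (posPartVF f a)).const_add a
    have h2 := (h_fder hX hH ha).comp_hasDerivAt_of_eq (0 : ℝ) h1 (by simp)
    have h3 := h2.tendsto_slope_zero_right
    simpa [lyapV] using h3
  have hz' : z ∈ Ico t0 b := ⟨hz.1.le, (hdI (Ioo_subset_Icc_self hz)).2.1⟩
  refine le_of_tendsto ((hlim _ (hx z hz')).sub (hlim _ hx0)) ?_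
  filter_upwards [Ioo_mem_nhdsGT (show (0 : ℝ) < ρ / (2 * M) by positivity)] with h hh
  exact key h hh


lemma h_comp_deriv (hX : IsOpen X) (hf : ContDiffOn ℝ 1 f X) {x : ℝ → Fin n → ℝ} {t : ℝ}
    (hx : x t ∈ X) (hx' : HasDerivWithinAt x (f (x t)) (Ici t) t) (i : Fin n) :
    HasDerivWithinAt (fun s => f (x s) i) (fderiv ℝ f (x t) (f (x t)) i) (Ici t) t :=
  hasDerivWithinAt_pi.1 ((h_fder hX hf hx).comp_hasDerivWithinAt t hx') i

lemma h_slope (hX : IsOpen X) (hf : ContDiffOn ℝ 1 f X) (hcoop : coopVF f X)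
    (hH : ContDiffOn ℝ 1 H X)
    (hfi : ∀ x ∈ X, fderiv ℝ H x (f x) = 0)
    (hgrad : ∀ x ∈ X, ∀ i, 0 < fderiv ℝ H x (Pi.single i 1))
    {x : ℝ → Fin n → ℝ} {t0 b : ℝ} (hb : t0 < b) (hx : ∀ t ∈ Ico t0 b, x t ∈ X)
    (hxc : ContinuousOn x (Ico t0 b))
    (hx' : ∀ t ∈ Ico t0 b, HasDerivWithinAt x (f (x t)) (Ici t) t)
    {r : ℝ} (hr : 0 < r) :
    ∀ᶠ z in 𝓝[>] t0, lyapV f H (x z) - lyapV f H (x t0) ≤ r * (z - t0) := by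
  have ht0 : t0 ∈ Ico t0 b := ⟨le_rfl, hb⟩
  have hx0 := hx t0 ht0
  refine h_local_est hX hf hH hfi hgrad hb hx hxc hx'
    (u' := fun t i => if 0 < f (x t) i then fderiv ℝ f (x t) (f (x t)) i else
      if f (x t) i < 0 then 0 else max (fderiv ℝ f (x t) (f (x t)) i) 0)
    (fun t ht => hasDerivWithinAt_pi.2 fun i =>
      h_max_deriv (h_comp_deriv hX hf (hx t ht) (hx' t ht) i))
    (w := 0) ?_ (by simpa using hr)
  intro ε hε
  have hxct : ContinuousWithinAt x (Ici t0) t0 := (hx' t0 ht0).continuousWithinAt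
  have c1 : ContinuousWithinAt (fun t => fderiv ℝ f (x t) (posPartVF f (x t))
      - fderiv ℝ f (x t0) (posPartVF f (x t))) (Ici t0) t0 := by
    have a1 := (h_fder_cont hX hf hx0).comp_continuousWithinAt hxct
    have a2 := (h_posPart_cont hX hf hx0).comp_continuousWithinAt hxct
    exact (a1.clm_apply a2).sub (continuousWithinAt_const.clm_apply a2)
  have c2 := Filter.Tendsto.eventually_lt_const (u := ε) (by simpa using hε) c1.norm
  have e3 : ∀ᶠ t in 𝓝[≥] t0, t < b := nhdsWithin_le_nhds (gt_mem_nhds hb)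
  filter_upwards [c2, e3, self_mem_nhdsWithin] with t h1 h2 h3 i
  have hm := hx t ⟨h3, h2⟩
  have k1 := (norm_le_pi_norm _ i).trans h1.le
  rw [Real.norm_eq_abs, abs_le] at k1
  have k2 := k1.2
  simp only [Pi.sub_apply] at k2
  have hA := hcoop _ hm
  have hu0 : ∀ j, 0 ≤ posPartVF f (x t) j := fun j => le_max_right _ _
  have hu1 : ∀ j, f (x t) j ≤ posPartVF f (x t) j := fun j => le_max_left _ _
  have k3 : (if 0 < f (x t) i then fderiv ℝ f (x t) (f (x t)) i else
      if f (x t) i < 0 then 0 else max (fderiv ℝ f (x t) (f (x t)) i) 0)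
      ≤ fderiv ℝ f (x t) (posPartVF f (x t)) i := by
    split_ifs with q1 q2
    · exact h_coop_row hA hu1 (by simp [posPartVF, q1.le])
    · exact h_coop_row0 hA hu0 (by simp [posPartVF, q2.le])
    · have q3 : f (x t) i = 0 := le_antisymm (not_lt.1 q1) (not_lt.1 q2)
      exact max_le (h_coop_row hA hu1 (by simp [posPartVF, q3]))
        (h_coop_row0 hA hu0 (by simp [posPartVF, q3]))
  simp only [Pi.zero_apply]
  linarith

lemma h_antitone (hX : IsOpen X) (hf : ContDiffOn ℝ 1 f X) (hcoop : coopVF f X)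
    (hH : ContDiffOn ℝ 1 H X)
    (hfi : ∀ x ∈ X, fderiv ℝ H x (f x) = 0)
    (hgrad : ∀ x ∈ X, ∀ i, 0 < fderiv ℝ H x (Pi.single i 1))
    {x : ℝ → Fin n → ℝ} (hx : ∀ t, 0 ≤ t → x t ∈ X)
    (hxc : ContinuousOn x (Ici 0))
    (hx' : ∀ t, 0 ≤ t → HasDerivWithinAt x (f (x t)) (Ici t) t) {s t : ℝ} (hs : 0 ≤ s)
    (hst : s ≤ t) : lyapV f H (x t) ≤ lyapV f H (x s) := by
  have hcV : ContinuousOn (fun t => lyapV f H (x t)) (Icc s t) := fun q hq =>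
    (h_lyap_cont hX hf hH (hx q (hs.trans hq.1))).comp_continuousWithinAt
      ((hxc q (hs.trans hq.1)).mono fun z hz => hs.trans hz.1)
  have key : ∀ ε > 0, lyapV f H (x t) ≤ lyapV f H (x s) + ε * (t - s) := by
    intro ε hε
    refine image_le_of_liminf_slope_right_lt_deriv_boundary' (f := fun t => lyapV f H (x t))
      (f' := fun _ => 0) (B := fun t => lyapV f H (x s) + ε * (t - s)) (B' := fun _ => ε)
      hcV ?_ (by simp) (by fun_prop) ?_ (fun _ _ _ => hε) ⟨hst, le_rfl⟩
    · intro q hq r hr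
      have h0 : 0 ≤ q := hs.trans hq.1
      have := h_slope hX hf hcoop hH hfi hgrad (x := x) (t0 := q) (b := q + 1) (by linarith)
        (fun z hz => hx z (h0.trans hz.1)) (hxc.mono fun z hz => h0.trans hz.1)
        (fun z hz => hx' z (h0.trans hz.1)) (half_pos hr)
      refine Eventually.frequently ?_
      filter_upwards [this, self_mem_nhdsWithin] with z hz hz'
      have hz'' : 0 < z - q := sub_pos.2 hz'
      rw [slope_def_field, div_lt_iff₀ hz'']
      have : r / 2 * (z - q) < r * (z - q) := by gcongr; linarith
      linarith
    · intro q _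
      have := ((hasDerivAt_id q).sub_const s).const_mul ε |>.const_add (lyapV f H (x s))
      simpa using this.hasDerivWithinAt
  have hlim : Tendsto (fun ε : ℝ => lyapV f H (x s) + ε * (t - s)) (𝓝[>] 0)
      (𝓝 (lyapV f H (x s))) := by
    have : Continuous fun ε : ℝ => lyapV f H (x s) + ε * (t - s) := by fun_prop
    have h := this.tendsto 0
    simp only [zero_mul, add_zero] at h
    exact h.mono_left nhdsWithin_le_nhds
  refine ge_of_tendsto hlim ?_
  filter_upwards [self_mem_nhdsWithin] with ε hε using key ε hε

lemma h_strict (hX : IsOpen X) (hf : ContDiffOn ℝ 1 f X) (hcoop : coopVF f X)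
    (hirr : ∀ x ∈ X, matIrred (jacMat f x))
    (hH : ContDiffOn ℝ 1 H X)
    (hfi : ∀ x ∈ X, fderiv ℝ H x (f x) = 0)
    (hgrad : ∀ x ∈ X, ∀ i, 0 < fderiv ℝ H x (Pi.single i 1))
    {x : ℝ → Fin n → ℝ} {b : ℝ} (hb : 0 < b) (hx : ∀ t ∈ Ico 0 b, x t ∈ X)
    (hxc : ContinuousOn x (Ico 0 b))
    (hx' : ∀ t ∈ Ico 0 b, HasDerivWithinAt x (f (x t)) (Ici t) t) {L : ℝ}
    (hL : ∀ t ∈ Ico 0 b, lyapV f H (x t) = L) : f (x 0) = 0 := by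
  classical
  by_contra hne
  have h0b : (0 : ℝ) ∈ Ico 0 b := ⟨le_rfl, hb⟩
  set P : ℝ → Finset (Fin n) := fun t => Finset.univ.filter fun i => 0 < f (x t) i with hP
  have hmemP : ∀ t i, i ∈ P t ↔ 0 < f (x t) i := by simp [hP]
  obtain ⟨s, hs, hmax⟩ : ∃ s ∈ Ico 0 b, ∀ t ∈ Ico 0 b, (P t).card ≤ (P s).card := by
    have hfinite : ((fun t => (P t).card) '' Ico 0 b).Finite :=
      (Set.finite_Iic n).subset (by
        rintro _ ⟨t, -, rfl⟩
        simpa using Finset.card_le_univ (P t))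
    obtain ⟨m, ⟨s, hs, rfl⟩, hm⟩ := Set.exists_max_image _ id hfinite ⟨_, mem_image_of_mem _ h0b⟩
    exact ⟨s, hs, fun t ht => hm _ (mem_image_of_mem _ ht)⟩
  have hP0 : 0 < (P 0).card := by
    rw [Finset.card_pos]
    by_contra hem
    rw [Finset.not_nonempty_iff_eq_empty] at hem
    apply hne
    have h1 : -f (x 0) = 0 := by
      refine h_pos_zero (hgrad _ (hx 0 h0b)) (fun i => ?_) (by simp [hfi _ (hx 0 h0b)])
      have : i ∉ P 0 := by simp [hem]
      rw [hmemP] at this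
      simpa using this
    simpa using h1
  obtain ⟨a, ha⟩ := Finset.card_pos.1 (hP0.trans_le (hmax 0 h0b))
  have hxs := hx s hs
  set u0 := posPartVF f (x s) with hu0
  have hu0n : ∀ i, 0 ≤ u0 i := fun i => le_max_right _ _
  have hu0z : ∀ i, i ∉ P s → u0 i = 0 := fun i hi => by
    rw [hmemP] at hi
    simpa [hu0, posPartVF] using hi
  have hu0p : ∀ i, i ∈ P s → u0 i = f (x s) i := fun i hi => by
    rw [hmemP] at hi
    simp [hu0, posPartVF, hi.le]
  have hex1 : ∃ i, 0 < u0 i := ⟨a, by rw [hu0p a ha]; exact (hmemP _ _).1 ha⟩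
  have hex2 : ∃ i, u0 i = 0 := by
    by_contra hno
    push Not at hno
    have hall : ∀ i, i ∈ P s := fun i => by
      by_contra hi
      exact hno i (hu0z i hi)
    have := h_pos_zero (hgrad _ hxs) (fun i => ((hmemP s i).1 (hall i)).le) (hfi _ hxs)
    have h2 := (hmemP s a).1 ha
    simp [this] at h2
  obtain ⟨c, hc0, hcpos⟩ := h_row_pos (hcoop _ hxs) (hirr _ hxs) hu0n hex1 hex2
  -- local constancy of `P`
  have hxct : ContinuousWithinAt x (Ici s) s := (hx' s hs).continuousWithinAt
  have hgc : ContinuousWithinAt (fun t => f (x t)) (Ici s) s :=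
    (h_fder hX hf hxs).continuousAt.comp_continuousWithinAt hxct
  have hPc : ∀ᶠ t in 𝓝[≥] s, t < b ∧ P t = P s := by
    have e1 : ∀ᶠ t in 𝓝[≥] s, ∀ i ∈ P s, 0 < f (x t) i := by
      rw [eventually_all_finset]
      intro i hi
      exact ((continuous_apply i).continuousAt.comp_continuousWithinAt hgc).eventually
        (lt_mem_nhds ((hmemP s i).1 hi))
    have e3 : ∀ᶠ t in 𝓝[≥] s, t < b := nhdsWithin_le_nhds (gt_mem_nhds hs.2)
    filter_upwards [e1, e3, self_mem_nhdsWithin] with t h1 h2 h3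
    refine ⟨h2, (Finset.eq_of_subset_of_card_le (fun i hi => (hmemP t i).2 (h1 i hi))
      (hmax t ⟨hs.1.trans h3, h2⟩)).symm⟩
  obtain ⟨d, hd, hdI⟩ := (mem_nhdsGE_iff_exists_Ico_subset).1 hPc
  have hd' : s < d := hd
  have hsub : ∀ t ∈ Ico s d, t ∈ Ico 0 b := fun t ht => ⟨hs.1.trans ht.1, (hdI ht).1⟩
  set u' : ℝ → Fin n → ℝ := fun t i => if i ∈ P s then fderiv ℝ f (x t) (f (x t)) i else 0
    with hu'
  set w : Fin n → ℝ := fun i => u' s i - fderiv ℝ f (x s) u0 i with hw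
  have hu1 : ∀ j, f (x s) j ≤ u0 j := fun j => le_max_left _ _
  have hwle : ∀ i, w i ≤ 0 := by
    intro i
    simp only [hw, hu']
    split_ifs with hi
    · have := h_coop_row (hcoop _ hxs) hu1 (i := i) (hu0p i hi).symm
      linarith
    · have := h_coop_row0 (hcoop _ hxs) hu0n (i := i) (hu0z i hi)
      linarith
  have hcP : c ∉ P s := fun hc => by
    have := (hmemP s c).1 hc
    rw [hu0p c hc] at hc0
    linarith
  have hwc : w c < 0 := by
    simp only [hw, hu', hcP, if_false]
    linarith
  have hpw : fderiv ℝ H (x s) w < 0 := by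
    have hle : fderiv ℝ H (x s) w ≤ fderiv ℝ H (x s) 0 := h_pos_mono (hgrad _ hxs) hwle
    rw [map_zero] at hle
    refine lt_of_le_of_ne hle fun heq => ?_
    have := h_pos_zero (hgrad _ hxs) (v := -w) (fun i => by simpa using hwle i) (by simp [heq])
    have h2 : w c = 0 := by
      have := congrFun this c
      simpa using this
    linarith
  have hest := h_local_est hX hf hH hfi hgrad hd' (fun t ht => hx t (hsub t ht))
    (hxc.mono hsub) (fun t ht => hx' t (hsub t ht)) (u' := u') (by
      intro t ht
      refine hasDerivWithinAt_pi.2 fun i => ?_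
      have hev : ∀ᶠ q in 𝓝[≥] t, q ∈ Ico s d :=
        mem_of_superset (Ico_mem_nhdsGE ht.2) (Ico_subset_Ico_left ht.1)
      have hdi := h_comp_deriv hX hf (hx t (hsub t ht)) (hx' t (hsub t ht)) i
      simp only [hu']
      split_ifs with hi
      · have hq : ∀ q ∈ Ico s d, posPartVF f (x q) i = f (x q) i := by
          intro q hq
          have h1 : i ∈ P q := by rw [(hdI hq).2]; exact hi
          simp [posPartVF, ((hmemP q i).1 h1).le]
        exact hdi.congr_of_eventuallyEq (hev.mono hq) (hq t ht)
      · have hq : ∀ q ∈ Ico s d, posPartVF f (x q) i = 0 := by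
          intro q hq
          have h1 : i ∉ P q := by rw [(hdI hq).2]; exact hi
          rw [hmemP] at h1
          simpa [posPartVF] using h1
        exact (hasDerivWithinAt_const t (Ici t) (0 : ℝ)).congr_of_eventuallyEq
          (hev.mono hq) (hq t ht)) (w := w) (by
      intro ε hε
      rw [eventually_all]
      intro i
      have a1 := (h_fder_cont hX hf hxs).comp_continuousWithinAt hxct
      have a2 := (h_posPart_cont hX hf hxs).comp_continuousWithinAt hxct
      have c1 : ContinuousWithinAt (fun t => u' t i) (Ici s) s := by
        simp only [hu']
        split_ifs with hi
        · exact (continuous_apply i).continuousAt.comp_continuousWithinAt (a1.clm_apply hgc)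
        · exact continuousWithinAt_const
      have c2 : ContinuousWithinAt (fun t => fderiv ℝ f (x s) (posPartVF f (x t)) i)
          (Ici s) s :=
        (continuous_apply i).continuousAt.comp_continuousWithinAt
          ((continuousWithinAt_const (b := fderiv ℝ f (x s))).clm_apply a2)
      have c3 := Filter.Tendsto.eventually_lt_const (u := w i + ε) (by
        simp only [hw, Pi.sub_apply]; linarith) (c1.sub c2)
      exact c3.mono fun t ht => ht.le) (r := fderiv ℝ H (x s) w / 2) (by linarith)
  obtain ⟨z, hz, hz1, hz2⟩ := (hest.and (Ioo_mem_nhdsGT hd')).exists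
  rw [hL z (hsub z ⟨hz1.le, hz2⟩), hL s hs, sub_self] at hz
  have : fderiv ℝ H (x s) w / 2 * (z - s) < 0 :=
    mul_neg_of_neg_of_pos (by linarith) (by linarith)
  linarith

lemma h_isolated (hX : IsOpen X) (hf : ContDiffOn ℝ 1 f X) (hcoop : coopVF f X)
    (hirr : ∀ x ∈ X, matIrred (jacMat f x))
    (hH : ContDiffOn ℝ 1 H X)
    (hfi : ∀ x ∈ X, fderiv ℝ H x (f x) = 0)
    (hgrad : ∀ x ∈ X, ∀ i, 0 < fderiv ℝ H x (Pi.single i 1))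
    {y : Fin n → ℝ} (hy : y ∈ X) (hfy : f y = 0) :
    ∀ᶠ z in 𝓝[≠] y, ¬ (f z = 0 ∧ H z = H y) := by
  have hpA : ∀ v, fderiv ℝ H y (fderiv ℝ f y v) = 0 := by
    intro v
    have h1 : HasDerivAt (fun h : ℝ => y + h • v) v 0 := by
      simpa using ((hasDerivAt_id (0 : ℝ)).smul_const v).const_add y
    have h2 := ((h_fder hX hf hy).comp_hasDerivAt_of_eq (0 : ℝ) h1 (by simp)).tendsto_slope_zero_right
    have hc : Tendsto (fun h : ℝ => y + h • v) (𝓝[>] 0) (𝓝 y) := by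
      have := h1.continuousAt.tendsto.mono_left (nhdsWithin_le_nhds (s := Ioi (0 : ℝ)))
      simpa using this
    have h3 := (h_fder_cont hX hH hy).tendsto.comp hc
    have h4 := (isBoundedBilinearMap_apply (𝕜 := ℝ) (E := Fin n → ℝ) (F := ℝ)).continuous.tendsto _ |>.comp (h3.prodMk_nhds h2)
    refine tendsto_nhds_unique h4 (tendsto_const_nhds.congr' ?_)
    filter_upwards [hc.eventually (hX.mem_nhds hy)] with h hh
    simp [hfy, hfi _ hh]
  have hD := (h_fder hX hf hy).prodMk (h_fder hX hH hy)
  obtain ⟨K, -, hK⟩ := LinearMap.exists_antilipschitzWith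
    (((fderiv ℝ f y).prod (fderiv ℝ H y) : (Fin n → ℝ) →L[ℝ] (Fin n → ℝ) × ℝ) :
      (Fin n → ℝ) →ₗ[ℝ] (Fin n → ℝ) × ℝ) (by
    rw [LinearMap.ker_eq_bot']
    intro u hu
    have hu' : fderiv ℝ f y u = 0 ∧ fderiv ℝ H y u = 0 := by simpa using hu
    exact h_kernel (hcoop y hy) (hirr y hy) (hgrad y hy) hpA hu'.1 hu'.2)
  filter_upwards [hD.eventually_ne (c := (f y, H y)) ⟨K, hK⟩] with z hz hcon
  exact hz (by simp [hcon.1, hcon.2, hfy])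

end local_estimates

section final

variable {n : ℕ} {X : Set (Fin n → ℝ)} {f : (Fin n → ℝ) → (Fin n → ℝ)}
  {H : (Fin n → ℝ) → ℝ}

lemma h_stay {x : ℝ → Fin n → ℝ} {y : Fin n → ℝ} {a τ R M : ℝ}
    (hM : ∀ z ∈ Metric.closedBall y R, ‖f z‖ ≤ M) (hM0 : 0 ≤ M)
    (hxc : ContinuousOn x (Icc a (a + τ)))
    (hx' : ∀ t ∈ Ico a (a + τ), HasDerivWithinAt x (f (x t)) (Ici t) t)
    (ha : dist (x a) y ≤ R / 2) (hτ : (M + 1) * τ ≤ R / 2) :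
    ∀ t ∈ Icc a (a + τ), x t ∈ Metric.closedBall y R := by
  have hB : ∀ t ≤ a + τ, R / 2 + (M + 1) * (t - a) ≤ R := by
    intro t ht
    have : (M + 1) * (t - a) ≤ (M + 1) * τ := by gcongr; linarith
    linarith
  intro t ht
  rw [mem_closedBall_iff_norm]
  have := image_norm_le_of_norm_deriv_right_lt_deriv_boundary (f := fun t => x t - y)
    (f' := fun t => f (x t)) (a := a) (b := a + τ) (hxc.sub continuousOn_const)
    (fun t ht => (hx' t ht).sub_const y)
    (B := fun t => R / 2 + (M + 1) * (t - a)) (B' := fun _ => M + 1)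
    (by simpa [dist_eq_norm] using ha)
    (fun t => by
      have := ((hasDerivAt_id t).sub_const a).const_mul (M + 1) |>.const_add (R / 2)
      simpa using this)
    (fun t ht h => by
      have := hM (x t) (by
        rw [mem_closedBall_iff_norm, h]; exact hB t ht.2.le)
      linarith) ht
  exact this.trans (hB t ht.2)

lemma h_omega_eq (hX : IsOpen X) (hf : ContDiffOn ℝ 1 f X) (hcoop : coopVF f X)
    (hirr : ∀ x ∈ X, matIrred (jacMat f x))
    (hH : ContDiffOn ℝ 1 H X)
    (hfi : ∀ x ∈ X, fderiv ℝ H x (f x) = 0)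
    (hgrad : ∀ x ∈ X, ∀ i, 0 < fderiv ℝ H x (Pi.single i 1))
    {x : ℝ → Fin n → ℝ} (hx : ∀ t, 0 ≤ t → x t ∈ X)
    (hxc : ContinuousOn x (Ici 0))
    (hx' : ∀ t, 0 ≤ t → HasDerivWithinAt x (f (x t)) (Ici t) t)
    {y : Fin n → ℝ} (hy : y ∈ omegaSet X x) : f y = 0 := by
  -- limits of the Lyapunov function
  have hle : ∀ y ∈ omegaSet X x, ∀ t, 0 ≤ t → lyapV f H y ≤ lyapV f H (x t) := by
    rintro y ⟨hyX, t, ht, hty⟩ s hs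
    refine le_of_tendsto ((h_lyap_cont hX hf hH hyX).tendsto.comp hty) ?_
    filter_upwards [ht.eventually_ge_atTop s] with k hk
    exact h_antitone hX hf hcoop hH hfi hgrad hx hxc hx' hs hk
  have hle2 : ∀ y ∈ omegaSet X x, ∀ z ∈ omegaSet X x, lyapV f H y ≤ lyapV f H z := by
    rintro y hy z ⟨hzX, t, ht, htz⟩
    refine ge_of_tendsto ((h_lyap_cont hX hf hH hzX).tendsto.comp htz) ?_
    filter_upwards [ht.eventually_ge_atTop 0] with k hk
    exact hle y hy _ hk
  have hy0 := hy
  obtain ⟨hyX, t, ht, hty⟩ := hy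
  have hfat := hf.contDiffAt (hX.mem_nhds hyX)
  obtain ⟨K, S, hS, hlip⟩ := hfat.exists_lipschitzOnWith
  obtain ⟨R, hR, hRS⟩ := Metric.nhds_basis_closedBall.mem_iff.1 (inter_mem hS (hX.mem_nhds hyX))
  have hlipR : LipschitzOnWith K f (Metric.closedBall y R) := hlip.mono fun z hz => (hRS hz).1
  obtain ⟨M, hM⟩ := (isCompact_closedBall y R).exists_bound_of_continuousOn hlipR.continuousOn
  have hM0 : 0 ≤ M := (norm_nonneg _).trans (hM y (Metric.mem_closedBall_self hR.le))
  obtain ⟨r, hr, ε, hε, hex⟩ :=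
    hfat.exists_forall_mem_closedBall_exists_eq_forall_mem_Ioo_hasDerivAt 0
  obtain ⟨ξ, hξ0, hξ⟩ := hex y (Metric.mem_closedBall_self hr.le)
  set τ := min (ε / 2) (R / 2 / (M + 1)) with hτdef
  have hτ : 0 < τ := by positivity
  have hτ1 : τ < ε := (min_le_left _ _).trans_lt (half_lt_self hε)
  have hτ2 : (M + 1) * τ ≤ R / 2 := by
    have : τ ≤ R / 2 / (M + 1) := min_le_right _ _
    rw [le_div_iff₀ (by positivity)] at this
    linarith
  have hξd : ∀ s ∈ Icc 0 τ, HasDerivAt ξ (f (ξ s)) s := fun s hs =>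
    hξ s ⟨by linarith [hs.1], by linarith [hs.2]⟩
  have hξc : ContinuousOn ξ (Icc 0 τ) := fun s hs => (hξd s hs).continuousAt.continuousWithinAt
  have hξR : ∀ s ∈ Icc 0 τ, ξ s ∈ Metric.closedBall y R := by
    have := h_stay (x := ξ) (a := 0) (τ := τ) hM hM0 (by simpa using hξc)
      (fun s hs => (hξd s ⟨hs.1, by simpa using hs.2.le⟩).hasDerivWithinAt)
      (by rw [hξ0, dist_self]; positivity) hτ2
    simpa using this
  -- ξ stays in the omega limit set
  have hclose : ∀ s ∈ Icc 0 τ, Tendsto (fun k => x (t k + s)) atTop (𝓝 (ξ s)) := by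
    intro s hs
    rw [tendsto_iff_dist_tendsto_zero]
    have hlim : Tendsto (fun k => dist (x (t k)) y * Real.exp (K * s)) atTop (𝓝 0) := by
      have := (tendsto_iff_dist_tendsto_zero.1 hty).mul_const (Real.exp (K * s))
      simpa using this
    refine squeeze_zero' (Eventually.of_forall fun _ => dist_nonneg) ?_ hlim
    filter_upwards [ht.eventually_ge_atTop 0,
      hty.eventually (Metric.closedBall_mem_nhds y (half_pos hR))] with k hk hk2
    set g : ℝ → Fin n → ℝ := fun q => x (t k + q) with hg
    have hgd : ∀ q, 0 ≤ q → HasDerivWithinAt g (f (g q)) (Ici q) q := by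
      intro q hq
      have h1 := hx' (t k + q) (by linarith)
      have h2 : HasDerivWithinAt (fun q => t k + q) 1 (Ici q) q :=
        ((hasDerivAt_id q).const_add (t k)).hasDerivWithinAt
      have := h1.scomp q h2 (fun z hz => by simpa using hz)
      rw [one_smul] at this
      exact this
    have hgc : ContinuousOn g (Icc 0 τ) := by
      refine hxc.comp (by fun_prop) fun q hq => ?_
      have := hq.1
      simp only [mem_Ici]; linarith
    have hgR : ∀ q ∈ Icc 0 τ, g q ∈ Metric.closedBall y R := by
      have := h_stay (x := g) (a := 0) (τ := τ) hM hM0 (by simpa using hgc)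
        (fun q hq => hgd q hq.1) (by simpa [hg] using hk2) hτ2
      simpa using this
    have := dist_le_of_trajectories_ODE_of_mem (v := fun _ => f)
      (s := fun _ => Metric.closedBall y R) (K := K) (a := 0) (b := τ) (f := g) (g := ξ)
      (δ := dist (x (t k)) y) (fun _ _ => hlipR) hgc (fun q hq => hgd q hq.1)
      (fun q hq => hgR q (Ico_subset_Icc_self hq)) hξc
      (fun q hq => (hξd q (Ico_subset_Icc_self hq)).hasDerivWithinAt)
      (fun q hq => hξR q (Ico_subset_Icc_self hq)) (by simp [hg, hξ0]) s hs
    simpa using this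
  have hξω : ∀ s ∈ Icc 0 τ, ξ s ∈ omegaSet X x := fun s hs =>
    ⟨(hRS (hξR s hs)).2, fun k => t k + s, tendsto_atTop_add_const_right _ s ht, hclose s hs⟩
  have := h_strict hX hf hcoop hirr hH hfi hgrad hτ (x := ξ)
    (fun s hs => (hRS (hξR s (Ico_subset_Icc_self hs))).2) (hξc.mono Ico_subset_Icc_self)
    (fun s hs => (hξd s (Ico_subset_Icc_self hs)).hasDerivWithinAt) (L := lyapV f H y)
    (fun s hs => le_antisymm (hle2 _ (hξω s (Ico_subset_Icc_self hs)) _ hy0)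
      (hle2 _ hy0 _ (hξω s (Ico_subset_Icc_self hs))))
  rwa [hξ0] at this

lemma h_H_const (hX : IsOpen X) (hH : ContDiffOn ℝ 1 H X)
    (hfi : ∀ x ∈ X, fderiv ℝ H x (f x) = 0)
    {x : ℝ → Fin n → ℝ} (hx : ∀ t, 0 ≤ t → x t ∈ X)
    (hxc : ContinuousOn x (Ici 0))
    (hx' : ∀ t, 0 ≤ t → HasDerivWithinAt x (f (x t)) (Ici t) t)
    {y : Fin n → ℝ} (hy : y ∈ omegaSet X x) : H y = H (x 0) := by
  have hconst : ∀ t, 0 ≤ t → H (x t) = H (x 0) := by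
    intro t ht
    refine constant_of_has_deriv_right_zero (f := fun s => H (x s)) (a := 0) (b := t)
      ((hH.continuousOn.comp hxc hx).mono Icc_subset_Ici_self) (fun s hs => ?_) t ⟨ht, le_rfl⟩
    have := (h_fder hX hH (hx s hs.1)).comp_hasDerivWithinAt s (hx' s hs.1)
    rw [hfi _ (hx s hs.1)] at this
    exact this
  obtain ⟨hyX, t, ht, hty⟩ := hy
  refine tendsto_nhds_unique ((h_fder hX hH hyX).continuousAt.tendsto.comp hty)
    (tendsto_const_nhds.congr' ?_)
  filter_upwards [ht.eventually_ge_atTop 0] with k hk using (hconst _ hk).symm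

lemma h_sphere {x : ℝ → Fin n → ℝ} (hxc : ContinuousOn x (Ici 0))
    {y y' : Fin n → ℝ} (hy : y ∈ omegaSet X x) (hy' : y' ∈ omegaSet X x) {r : ℝ} (hr : 0 < r)
    (hr' : r < dist y' y) (hrX : Metric.closedBall y r ⊆ X) :
    ∃ z ∈ omegaSet X x, dist z y = r := by
  obtain ⟨-, t, ht, hty⟩ := hy
  obtain ⟨-, t', ht', hty'⟩ := hy'
  have hfreq : ∃ᶠ s in atTop, x s ∈ Metric.sphere y r := by
    rw [frequently_atTop]
    intro a
    obtain ⟨k, hk1, hk2⟩ := ((ht.eventually_ge_atTop (max a 0)).and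
      ((tendsto_iff_dist_tendsto_zero.1 hty).eventually_lt_const hr)).exists
    obtain ⟨k', hk1', hk2'⟩ := ((ht'.eventually_ge_atTop (t k)).and
      ((hty'.dist tendsto_const_nhds).eventually_const_lt hr')).exists
    have h0 : 0 ≤ t k := (le_max_right _ _).trans hk1
    have hc : ContinuousOn (fun s => dist (x s) y) (Icc (t k) (t' k')) :=
      fun s hs => Filter.Tendsto.dist
        ((hxc s (h0.trans hs.1)).mono fun q hq => h0.trans hq.1) tendsto_const_nhds
    obtain ⟨s, hs, hsr⟩ := intermediate_value_Icc hk1' hc ⟨hk2.le, hk2'.le⟩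
    exact ⟨s, ((le_max_left _ _).trans hk1).trans hs.1, hsr⟩
  obtain ⟨z, hz, hcl⟩ := (isCompact_sphere y r).exists_mapClusterPt_of_frequently hfreq
  refine ⟨z, ⟨hrX (Metric.sphere_subset_closedBall hz), ?_⟩, hz⟩
  have hch : ∀ k : ℕ, ∃ s : ℝ, (k : ℝ) ≤ s ∧ dist (x s) z < 1 / ((k : ℝ) + 1) := by
    intro k
    have h1 := hcl.frequently (Metric.ball_mem_nhds z (show 0 < 1 / ((k : ℝ) + 1) by positivity))
    obtain ⟨s, hs1, hs2⟩ := (frequently_atTop.1 h1) k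
    exact ⟨s, hs1, hs2⟩
  choose s hs1 hs2 using hch
  refine ⟨s, tendsto_atTop_mono hs1 tendsto_natCast_atTop_atTop, ?_⟩
  rw [tendsto_iff_dist_tendsto_zero]
  exact squeeze_zero (fun _ => dist_nonneg) (fun k => (hs2 k).le)
    tendsto_one_div_add_atTop_nhds_zero_nat

end final

/-- ω-limit sets are empty or singletons. -/
theorem stmt_8 {n : ℕ} {X : Set (Fin n → ℝ)} (hX : IsOpen X)
    {f : (Fin n → ℝ) → (Fin n → ℝ)} (hf : ContDiffOn ℝ 1 f X) (hcoop : coopVF f X)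
    (hirr : ∀ x ∈ X, matIrred (jacMat f x))
    {H : (Fin n → ℝ) → ℝ} (hH : ContDiffOn ℝ 1 H X)
    (hfi : ∀ x ∈ X, fderiv ℝ H x (f x) = 0)
    (hgrad : ∀ x ∈ X, ∀ i, 0 < fderiv ℝ H x (Pi.single i 1)) :
    ∀ γ : ℝ → Fin n → ℝ, IsSolOn f X (Set.Ici 0) γ →
      (omegaSet X γ).Subsingleton := by
  intro γ hγ y hy y' hy'
  have hx : ∀ t, 0 ≤ t → γ t ∈ X := fun t ht => hγ.1 t ht
  have hxc : ContinuousOn γ (Ici 0) := fun t ht => (hγ.2 t ht).continuousWithinAt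
  have hx' : ∀ t, 0 ≤ t → HasDerivWithinAt γ (f (γ t)) (Ici t) t := fun t ht =>
    (hγ.2 t ht).mono (Ici_subset_Ici.2 ht)
  have hE : ∀ z ∈ omegaSet X γ, f z = 0 := fun z hz =>
    h_omega_eq hX hf hcoop hirr hH hfi hgrad hx hxc hx' hz
  have hHc : ∀ z ∈ omegaSet X γ, H z = H (γ 0) := fun z hz =>
    h_H_const hX hH hfi hx hxc hx' hz
  by_contra hne
  have hiso := h_isolated hX hf hcoop hirr hH hfi hgrad hy.1 (hE y hy)
  rw [eventually_nhdsWithin_iff] at hiso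
  obtain ⟨ρ, hρ, hb⟩ := Metric.nhds_basis_closedBall.mem_iff.1
    (inter_mem hiso (hX.mem_nhds hy.1))
  have hd : 0 < dist y' y := dist_pos.2 (Ne.symm hne)
  set r := min ρ (dist y' y / 2) with hr
  have hr0 : 0 < r := by positivity
  obtain ⟨z, hz, hzr⟩ := h_sphere hxc hy hy' hr0
    ((min_le_right _ _).trans_lt (half_lt_self hd))
    (fun q hq => (hb (Metric.closedBall_subset_closedBall (min_le_left _ _) hq)).2)
  have hzy : z ≠ y := dist_pos.1 (hzr ▸ hr0)
  have hzb : z ∈ Metric.closedBall y ρ := by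
    rw [Metric.mem_closedBall, hzr]; exact min_le_left _ _
  exact (hb hzb).1 hzy ⟨hE z hz, (hHc z hz).trans (hHc y hy).symm⟩
end
end

section
/- Let X ⊆ ℝⁿ be open, let f : X → ℝⁿ be a C¹ cooperative irreducible vector field, and let H : X → ℝ be a C¹ first integral for ẋ = f(x) with positive gradient. If γ : (−∞,0] → X is a solution of ẋ = f(x) whose α-limit set is nonempty, then γ(0) is an equilibrium: f(γ(0)) = 0. -/
open Set Filter Topology

noncomputable section

/-- The Lyapunov function: sum of positive parts of `∂ᵢH · fᵢ`. -/
def lyap {n : ℕ} (f : (Fin n → ℝ) → (Fin n → ℝ)) (H : (Fin n → ℝ) → ℝ) (x : Fin n → ℝ) : ℝ :=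
  ∑ i, max (fderiv ℝ H x (Pi.single i 1) * f x i) 0

lemma sum_alg {n : ℕ} (A : Fin n → Fin n → ℝ) (p v : Fin n → ℝ) (S : Finset (Fin n)) :
    ∑ i ∈ S, (p i * ∑ j, A i j * v j - v i * ∑ j, p j * A j i)
      = ∑ i ∈ S, ∑ j ∈ Sᶜ, (p i * A i j * v j - p j * A j i * v i) := by
  have h1 : ∀ i, p i * ∑ j, A i j * v j - v i * ∑ j, p j * A j i
      = ∑ j, (p i * A i j * v j - p j * A j i * v i) := by
    intro i
    rw [Finset.mul_sum, Finset.mul_sum, ← Finset.sum_sub_distrib]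
    refine Finset.sum_congr rfl fun j _ => by ring
  have h2 : ∀ i, ∑ j, (p i * A i j * v j - p j * A j i * v i)
      = ∑ j ∈ S, (p i * A i j * v j - p j * A j i * v i)
        + ∑ j ∈ Sᶜ, (p i * A i j * v j - p j * A j i * v i) := fun i =>
    (Finset.sum_add_sum_compl S _).symm
  simp_rw [h1, h2]
  rw [Finset.sum_add_distrib]
  have h3 : ∑ i ∈ S, ∑ j ∈ S, (p i * A i j * v j - p j * A j i * v i) = 0 := by
    simp_rw [Finset.sum_sub_distrib]
    rw [sub_eq_zero, Finset.sum_comm]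
  rw [h3, zero_add]

lemma term_nonpos {n : ℕ} {A : Fin n → Fin n → ℝ} {p v : Fin n → ℝ}
    (hA : ∀ i j, i ≠ j → 0 ≤ A i j) (hp : ∀ i, 0 < p i) {S : Finset (Fin n)}
    (h1 : ∀ i ∈ S, 0 ≤ p i * v i) (h2 : ∀ i, i ∉ S → p i * v i ≤ 0) :
    ∀ i ∈ S, ∀ j ∈ Sᶜ, p i * A i j * v j - p j * A j i * v i ≤ 0 := by
  intro i hi j hj
  have hj' : j ∉ S := by simpa using hj
  have hij : i ≠ j := fun h => hj' (h ▸ hi)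
  have hvi : 0 ≤ v i := nonneg_of_mul_nonneg_right (h1 i hi) (hp i)
  have hvj : v j ≤ 0 := by
    by_contra h
    push Not at h
    exact absurd (h2 j hj') (not_le.mpr (mul_pos (hp j) h))
  have e1 : p i * A i j * v j ≤ 0 :=
    mul_nonpos_of_nonneg_of_nonpos (mul_nonneg (hp i).le (hA i j hij)) hvj
  have e2 : 0 ≤ p j * A j i * v i :=
    mul_nonneg (mul_nonneg (hp j).le (hA j i hij.symm)) hvi
  linarith

lemma clm_expand {n : ℕ} (L : (Fin n → ℝ) →L[ℝ] ℝ) (u : Fin n → ℝ) :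
    L u = ∑ j, L (Pi.single j 1) * u j := by
  conv_lhs => rw [← Finset.univ_sum_single u]
  rw [map_sum]
  refine Finset.sum_congr rfl fun j _ => ?_
  have : (Pi.single j (u j) : Fin n → ℝ) = u j • Pi.single j 1 := by
    rw [← Pi.single_smul]; simp
  rw [this, map_smul, smul_eq_mul, mul_comm]

lemma clm_expand' {n : ℕ} (L : (Fin n → ℝ) →L[ℝ] (Fin n → ℝ)) (u : Fin n → ℝ) (i : Fin n) :
    L u i = ∑ j, L (Pi.single j 1) i * u j :=
  clm_expand ((ContinuousLinearMap.proj i : (Fin n → ℝ) →L[ℝ] ℝ).comp L) u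

lemma max_right_deriv {g : ℝ → ℝ} {g' t : ℝ} (h : HasDerivAt g g' t) :
    HasDerivWithinAt (fun s => max (g s) 0)
      (if 0 < g t ∨ (g t = 0 ∧ 0 < g') then g' else 0) (Ici t) t := by
  rcases lt_trichotomy (g t) 0 with hg | hg | hg
  · have hn : ¬ (0 < g t ∨ (g t = 0 ∧ 0 < g')) := by
      rintro (h | h) <;> linarith [h]
    rw [if_neg hn]
    have : HasDerivAt (fun s => max (g s) 0) 0 t := by
      refine (hasDerivAt_const t (0:ℝ)).congr_of_eventuallyEq ?_
      filter_upwards [h.continuousAt.eventually_lt continuousAt_const hg] with s hs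
      exact max_eq_right hs.le
    exact this.hasDerivWithinAt
  · have e : (if 0 < g t ∨ (g t = 0 ∧ 0 < g') then g' else 0) = max g' 0 := by
      simp only [hg, lt_irrefl, false_or, true_and]
      split_ifs with h0
      · exact (max_eq_left h0.le).symm
      · exact (max_eq_right (not_lt.mp h0)).symm
    rw [e, ← hasDerivWithinAt_Ioi_iff_Ici, hasDerivWithinAt_iff_tendsto_slope' (by simp)]
    have h1 := (hasDerivWithinAt_iff_tendsto_slope' (s := Ioi t) (by simp)).mp h.hasDerivWithinAt
    refine (h1.max (tendsto_const_nhds (x := (0:ℝ)))).congr' ?_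
    filter_upwards [self_mem_nhdsWithin] with s hs
    have hs' : 0 < s - t := sub_pos.mpr hs
    simp only [slope_def_field, hg, sub_zero, max_self]
    rw [← max_div_div_right hs'.le, zero_div]
  · rw [if_pos (Or.inl hg)]
    have : HasDerivAt (fun s => max (g s) 0) g' t := by
      refine h.congr_of_eventuallyEq ?_
      filter_upwards [continuousAt_const.eventually_lt h.continuousAt hg] with s hs
      exact max_eq_left hs.le
    exact this.hasDerivWithinAt

lemma tendsto_clm_app {ι E F : Type*} [NormedAddCommGroup E] [NormedSpace ℝ E]
    [NormedAddCommGroup F] [NormedSpace ℝ F] {l : Filter ι} {L : ι → E →L[ℝ] F} {u : ι → E}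
    {L0 : E →L[ℝ] F} {u0 : E} (hL : Tendsto L l (𝓝 L0)) (hu : Tendsto u l (𝓝 u0)) :
    Tendsto (fun i => L i (u i)) l (𝓝 (L0 u0)) :=
  ((isBoundedBilinearMap_apply (𝕜 := ℝ) (E := E) (F := F)).continuous.tendsto (L0, u0)).comp
    (hL.prodMk_nhds hu)

lemma grad_deriv {n : ℕ} {X : Set (Fin n → ℝ)} (hX : IsOpen X)
    {f : (Fin n → ℝ) → (Fin n → ℝ)} (hf : ContDiffOn ℝ 1 f X)
    {H : (Fin n → ℝ) → ℝ} (hH : ContDiffOn ℝ 1 H X)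
    (hfi : ∀ x ∈ X, fderiv ℝ H x (f x) = 0)
    {x : ℝ → Fin n → ℝ} {t : ℝ} (hxX : x t ∈ X)
    (hx : ∀ᶠ s in 𝓝 t, HasDerivAt x (f (x s)) s) (e : Fin n → ℝ) :
    HasDerivAt (fun s => fderiv ℝ H (x s) e)
      (-fderiv ℝ H (x t) (fderiv ℝ f (x t) e)) t := by
  have hxc : ContinuousAt x t := hx.self_of_nhds.continuousAt
  have hdH : ∀ z ∈ X, HasFDerivAt H (fderiv ℝ H z) z := fun z hz =>
    ((hH.differentiableOn one_ne_zero).differentiableAt (hX.mem_nhds hz)).hasFDerivAt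
  have hcH : ContinuousAt (fderiv ℝ H) (x t) :=
    (hH.continuousOn_fderiv_of_isOpen hX le_rfl).continuousAt (hX.mem_nhds hxX)
  have hcf : ContinuousAt (fderiv ℝ f) (x t) :=
    (hf.continuousOn_fderiv_of_isOpen hX le_rfl).continuousAt (hX.mem_nhds hxX)
  have hsf : HasStrictFDerivAt f (fderiv ℝ f (x t)) (x t) :=
    (hf.contDiffAt (hX.mem_nhds hxX)).hasStrictFDerivAt one_ne_zero
  -- the perturbed base point
  have hz0 : Tendsto (fun q : ℝ × ℝ => x q.2 + q.1 • e) (𝓝[≠] (0:ℝ) ×ˢ 𝓝 t) (𝓝 (x t)) := by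
    have h1 : Tendsto (fun q : ℝ × ℝ => x q.2) (𝓝[≠] (0:ℝ) ×ˢ 𝓝 t) (𝓝 (x t)) :=
      hxc.tendsto.comp tendsto_snd
    have h2 : Tendsto (fun q : ℝ × ℝ => q.1) (𝓝[≠] (0:ℝ) ×ˢ 𝓝 t) (𝓝 0) :=
      tendsto_fst.mono_right nhdsWithin_le_nhds
    simpa using h1.add (h2.smul_const e)
  have hx2 : Tendsto (fun q : ℝ × ℝ => x q.2) (𝓝[≠] (0:ℝ) ×ˢ 𝓝 t) (𝓝 (x t)) :=
    hxc.tendsto.comp tendsto_snd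
  have hne : ∀ᶠ q : ℝ × ℝ in 𝓝[≠] (0:ℝ) ×ˢ 𝓝 t, q.1 ≠ 0 :=
    tendsto_fst.eventually (self_mem_nhdsWithin)
  -- difference quotient of f
  have hquot : Tendsto (fun q : ℝ × ℝ => q.1⁻¹ • (f (x q.2 + q.1 • e) - f (x q.2)))
      (𝓝[≠] (0:ℝ) ×ˢ 𝓝 t) (𝓝 (fderiv ℝ f (x t) e)) := by
    have ho := (hasStrictFDerivAt_iff_isLittleO.mp hsf).comp_tendsto (hz0.prodMk_nhds hx2)
    have ho2 : (fun q : ℝ × ℝ => f (x q.2 + q.1 • e) - f (x q.2) - q.1 • fderiv ℝ f (x t) e)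
        =o[𝓝[≠] (0:ℝ) ×ˢ 𝓝 t] (fun q : ℝ × ℝ => q.1) := by
      have hb : (fun q : ℝ × ℝ => q.1 • e) =O[𝓝[≠] (0:ℝ) ×ˢ 𝓝 t] (fun q : ℝ × ℝ => q.1) := by
        refine Asymptotics.IsBigO.of_bound ‖e‖ (Eventually.of_forall fun q => ?_)
        rw [norm_smul, mul_comm]
      refine (Asymptotics.IsLittleO.trans_isBigO (g := fun q : ℝ × ℝ => q.1 • e) ?_ hb)
      simpa [Function.comp_def] using ho
    have h3 := (Asymptotics.isLittleO_iff_tendsto' (f := fun q : ℝ × ℝ =>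
      ‖f (x q.2 + q.1 • e) - f (x q.2) - q.1 • fderiv ℝ f (x t) e‖) (g := fun q : ℝ × ℝ => ‖q.1‖)
      (hne.mono fun q hq h => absurd (norm_eq_zero.mp h) hq)).mp ho2.norm_norm
    rw [tendsto_iff_norm_sub_tendsto_zero]
    refine h3.congr' (hne.mono fun q hq => ?_)
    have : q.1⁻¹ • (f (x q.2 + q.1 • e) - f (x q.2)) - fderiv ℝ f (x t) e
        = q.1⁻¹ • (f (x q.2 + q.1 • e) - f (x q.2) - q.1 • fderiv ℝ f (x t) e) := by
      rw [smul_sub q.1⁻¹ (_ - _), inv_smul_smul₀ hq]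
    change _ = ‖q.1⁻¹ • (f (x q.2 + q.1 • e) - f (x q.2)) - fderiv ℝ f (x t) e‖
    rw [this, norm_smul, norm_inv, div_eq_inv_mul]
  refine hasDerivAt_of_tendstoUniformlyOnFilter (l := 𝓝[≠] (0:ℝ))
    (f := fun s r => s⁻¹ * (H (x r + s • e) - H (x r)))
    (f' := fun s r => -fderiv ℝ H (x r + s • e) (s⁻¹ • (f (x r + s • e) - f (x r))))
    (g' := fun r => -fderiv ℝ H (x r) (fderiv ℝ f (x r) e)) ?_ ?_ ?_
  · rw [tendstoUniformlyOnFilter_iff_tendsto]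
    have hA : Tendsto (fun q : ℝ × ℝ => -fderiv ℝ H (x q.2) (fderiv ℝ f (x q.2) e))
        (𝓝[≠] (0:ℝ) ×ˢ 𝓝 t) (𝓝 (-fderiv ℝ H (x t) (fderiv ℝ f (x t) e))) :=
      (tendsto_clm_app (hcH.tendsto.comp hx2)
        (tendsto_clm_app (hcf.tendsto.comp hx2) tendsto_const_nhds)).neg
    have hB : Tendsto (fun q : ℝ × ℝ => -fderiv ℝ H (x q.2 + q.1 • e)
          (q.1⁻¹ • (f (x q.2 + q.1 • e) - f (x q.2))))
        (𝓝[≠] (0:ℝ) ×ˢ 𝓝 t) (𝓝 (-fderiv ℝ H (x t) (fderiv ℝ f (x t) e))) :=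
      (tendsto_clm_app (hcH.tendsto.comp hz0) hquot).neg
    exact (hA.prodMk_nhds hB).mono_right (nhds_le_uniformity _)
  · filter_upwards [hz0.eventually (hX.mem_nhds hxX), hx2.eventually (hX.mem_nhds hxX),
      tendsto_snd.eventually hx] with q h1 h2 h3
    have d1 : HasDerivAt (fun r => H (x r + q.1 • e)) (fderiv ℝ H (x q.2 + q.1 • e) (f (x q.2))) q.2 :=
      (hdH _ h1).comp_hasDerivAt q.2 (h3.add_const _)
    have d2 : HasDerivAt (fun r => H (x r)) (fderiv ℝ H (x q.2) (f (x q.2))) q.2 :=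
      (hdH _ h2).comp_hasDerivAt q.2 h3
    have d3 := (d1.sub d2).const_mul q.1⁻¹
    refine d3.congr_deriv ?_
    rw [hfi _ h2, map_smul, map_sub, hfi _ h1, smul_eq_mul]
    ring
  · filter_upwards [hxc.eventually (hX.mem_nhds hxX)] with r hr
    have := ((hdH _ hr).hasLineDerivAt e).tendsto_slope_zero
    simpa [smul_eq_mul] using this

section flow

variable {n : ℕ} {X : Set (Fin n → ℝ)} {f : (Fin n → ℝ) → (Fin n → ℝ)} {H : (Fin n → ℝ) → ℝ}

lemma w_deriv (hX : IsOpen X) (hf : ContDiffOn ℝ 1 f X) (hH : ContDiffOn ℝ 1 H X)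
    (hfi : ∀ x ∈ X, fderiv ℝ H x (f x) = 0)
    {x : ℝ → Fin n → ℝ} {t : ℝ} (hxX : x t ∈ X)
    (hx : ∀ᶠ s in 𝓝 t, HasDerivAt x (f (x s)) s) (i : Fin n) :
    HasDerivAt (fun s => fderiv ℝ H (x s) (Pi.single i 1) * f (x s) i)
      (fderiv ℝ H (x t) (Pi.single i 1) * ∑ j, jacMat f (x t) i j * f (x t) j
        - f (x t) i * ∑ j, fderiv ℝ H (x t) (Pi.single j 1) * jacMat f (x t) j i) t := by
  have h1 := grad_deriv hX hf hH hfi hxX hx (Pi.single i 1)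
  have hdf : HasFDerivAt f (fderiv ℝ f (x t)) (x t) :=
    ((hf.differentiableOn one_ne_zero).differentiableAt (hX.mem_nhds hxX)).hasFDerivAt
  have h2 : HasDerivAt (fun s => f (x s)) (fderiv ℝ f (x t) (f (x t))) t :=
    hdf.comp_hasDerivAt t hx.self_of_nhds
  have h3 := h1.mul ((hasDerivAt_pi.mp h2) i)
  refine h3.congr_deriv ?_
  rw [clm_expand' _ (f (x t)) i, clm_expand (fderiv ℝ H (x t)) (fderiv ℝ f (x t) _)]
  simp only [jacMat]
  ring

lemma lyap_cont (hX : IsOpen X) (hf : ContDiffOn ℝ 1 f X) (hH : ContDiffOn ℝ 1 H X) :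
    ContinuousOn (lyap f H) X := by
  unfold lyap
  refine continuousOn_finsetSum _ fun i _ => ContinuousOn.sup ?_ continuousOn_const
  exact ((hH.continuousOn_fderiv_of_isOpen hX le_rfl).clm_apply continuousOn_const).mul
    (continuousOn_pi.mp hf.continuousOn i)

lemma lyap_zero (hfi : ∀ x ∈ X, fderiv ℝ H x (f x) = 0)
    (hgrad : ∀ x ∈ X, ∀ i, 0 < fderiv ℝ H x (Pi.single i 1)) {z : Fin n → ℝ} (hz : z ∈ X)
    (h : ∀ i, fderiv ℝ H z (Pi.single i 1) * f z i ≤ 0) : f z = 0 := by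
  have h0 := hfi z hz
  rw [clm_expand] at h0
  have := (Finset.sum_eq_zero_iff_of_nonpos (fun i _ => h i)).mp h0
  funext i
  have h2 := this i (Finset.mem_univ i)
  exact (mul_eq_zero.mp h2).resolve_left (hgrad z hz i).ne'

lemma lyap_anti (hX : IsOpen X) (hf : ContDiffOn ℝ 1 f X) (hcoop : coopVF f X)
    (hH : ContDiffOn ℝ 1 H X)
    (hfi : ∀ x ∈ X, fderiv ℝ H x (f x) = 0)
    (hgrad : ∀ x ∈ X, ∀ i, 0 < fderiv ℝ H x (Pi.single i 1))
    {x : ℝ → Fin n → ℝ} {I : Set ℝ} (hI : IsOpen I) (hxX : ∀ t ∈ I, x t ∈ X)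
    (hx : ∀ t ∈ I, HasDerivAt x (f (x t)) t) {a b : ℝ} (hab : a ≤ b) (hIab : Icc a b ⊆ I) :
    lyap f H (x b) ≤ lyap f H (x a) := by
  classical
  let w : Fin n → ℝ → ℝ := fun i s => fderiv ℝ H (x s) (Pi.single i 1) * f (x s) i
  let w' : Fin n → ℝ → ℝ := fun i t =>
    (fderiv ℝ H (x t) (Pi.single i 1) * ∑ j, jacMat f (x t) i j * f (x t) j
        - f (x t) i * ∑ j, fderiv ℝ H (x t) (Pi.single j 1) * jacMat f (x t) j i)
  have hw : ∀ t ∈ I, ∀ i, HasDerivAt (w i) (w' i t) t := fun t ht i =>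
    w_deriv hX hf hH hfi (hxX t ht) (Filter.Eventually.mono (hI.mem_nhds ht) hx) i
  have hxc : ContinuousOn x (Icc a b) := fun t ht =>
    (hx t (hIab ht)).continuousAt.continuousWithinAt
  refine image_le_of_deriv_right_le_deriv_boundary (f := fun s => lyap f H (x s))
    (f' := fun t => ∑ i, if 0 < w i t ∨ (w i t = 0 ∧ 0 < w' i t) then w' i t else 0)
    (B := fun _ => lyap f H (x a)) (B' := fun _ => 0) (a := a) (b := b)
    ?_ ?_ le_rfl continuousOn_const (fun t _ => hasDerivWithinAt_const _ _ _) ?_ ⟨hab, le_rfl⟩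
  · exact (lyap_cont hX hf hH).comp hxc fun t ht => hxX t (hIab ht)
  · intro t ht
    exact HasDerivWithinAt.fun_sum fun i _ =>
      max_right_deriv (hw t (hIab (Ico_subset_Icc_self ht)) i)
  · intro t ht
    have htI := hIab (Ico_subset_Icc_self ht)
    rw [← Finset.sum_filter, sum_alg]
    have := term_nonpos (A := jacMat f (x t)) (p := fun i => fderiv ℝ H (x t) (Pi.single i 1))
      (v := f (x t)) (hcoop _ (hxX t htI)) (hgrad _ (hxX t htI))
      (S := Finset.univ.filter fun i => 0 < w i t ∨ (w i t = 0 ∧ 0 < w' i t)) ?_ ?_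
    · exact Finset.sum_nonpos fun i hi => Finset.sum_nonpos fun j hj => this i hi j hj
    · intro i hi
      rcases (Finset.mem_filter.mp hi).2 with h | h
      · exact h.le
      · exact h.1.ge
    · intro i hi
      by_contra hc
      push Not at hc
      exact hi (Finset.mem_filter.mpr ⟨Finset.mem_univ _, Or.inl hc⟩)

lemma lyap_const (hX : IsOpen X) (hf : ContDiffOn ℝ 1 f X) (hcoop : coopVF f X)
    (hirr : ∀ x ∈ X, matIrred (jacMat f x))
    (hH : ContDiffOn ℝ 1 H X)
    (hfi : ∀ x ∈ X, fderiv ℝ H x (f x) = 0)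
    (hgrad : ∀ x ∈ X, ∀ i, 0 < fderiv ℝ H x (Pi.single i 1))
    {x : ℝ → Fin n → ℝ} {I : Set ℝ} (hI : IsOpen I) (hne : I.Nonempty) (hxX : ∀ t ∈ I, x t ∈ X)
    (hx : ∀ t ∈ I, HasDerivAt x (f (x t)) t) {c : ℝ} (hc : ∀ t ∈ I, lyap f H (x t) = c) :
    c = 0 := by
  classical
  let w : Fin n → ℝ → ℝ := fun i s => fderiv ℝ H (x s) (Pi.single i 1) * f (x s) i
  have hw := fun (t : ℝ) (ht : t ∈ I) (i : Fin n) =>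
    w_deriv hX hf hH hfi (hxX t ht) (Filter.Eventually.mono (hI.mem_nhds ht) hx) i
  -- choose a time with maximal number of nonzero components
  let N : ℝ → ℕ := fun t => (Finset.univ.filter fun i => w i t ≠ 0).card
  obtain ⟨t, ht, hmax⟩ : ∃ t ∈ I, ∀ s ∈ I, N s ≤ N t := by
    have hfin : (N '' I).Finite := (Set.finite_Iic n).subset (by
      rintro _ ⟨s, _, rfl⟩
      exact (Finset.card_le_univ _).trans (by simp))
    obtain ⟨m, ⟨t, ht, rfl⟩, hm⟩ := hfin.exists_maximal (hne.image N)
    refine ⟨t, ht, fun s hs => ?_⟩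
    by_contra hlt
    exact hlt (hm ⟨s, hs, rfl⟩ (not_le.mp hlt).le)
  have hnz : ∀ᶠ s in 𝓝 t, ∀ i, w i t ≠ 0 → w i s ≠ 0 := by
    refine eventually_all.mpr fun i => ?_
    by_cases h : w i t = 0
    · exact Eventually.of_forall fun s hs => absurd h hs
    · filter_upwards [(hw t ht i).continuousAt.eventually_ne h] with s hs _ using hs
  have hpos : ∀ᶠ s in 𝓝 t, ∀ i, 0 < w i t → 0 < w i s := by
    refine eventually_all.mpr fun i => ?_
    by_cases h : 0 < w i t
    · filter_upwards [continuousAt_const.eventually_lt (hw t ht i).continuousAt h] with s hs _ using hs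
    · exact Eventually.of_forall fun s hs => absurd hs h
  have hneg : ∀ᶠ s in 𝓝 t, ∀ i, w i t < 0 → w i s < 0 := by
    refine eventually_all.mpr fun i => ?_
    by_cases h : w i t < 0
    · filter_upwards [(hw t ht i).continuousAt.eventually_lt continuousAt_const h] with s hs _ using hs
    · exact Eventually.of_forall fun s hs => absurd hs h
  set S : Finset (Fin n) := Finset.univ.filter fun i => 0 < w i t with hS
  have hloc : ∀ᶠ s in 𝓝 t, ∑ i ∈ S, w i s = c := by
    filter_upwards [hnz, hpos, hneg, hI.mem_nhds ht] with s h1 h2 h3 hs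
    have hsub : (Finset.univ.filter fun i => w i t ≠ 0) ⊆ Finset.univ.filter fun i => w i s ≠ 0 := by
      intro i hi
      simp only [Finset.mem_filter, Finset.mem_univ, true_and] at hi ⊢
      exact h1 i hi
    have heq := Finset.eq_of_subset_of_card_le hsub (hmax s hs)
    have hz : ∀ i, w i t = 0 → w i s = 0 := by
      intro i hi
      by_contra hcon
      have : i ∈ Finset.univ.filter fun i => w i t ≠ 0 := by
        rw [heq]; simpa using hcon
      simp [hi] at this
    rw [← hc s hs, hS, Finset.sum_filter]
    refine Finset.sum_congr rfl fun i _ => ?_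
    change _ = max (w i s) 0
    rcases lt_trichotomy (w i t) 0 with h | h | h
    · rw [if_neg (not_lt.mpr h.le), max_eq_right (h3 i h).le]
    · rw [if_neg (by rw [h]; exact lt_irrefl _), hz i h, max_self]
    · rw [if_pos h, max_eq_left (h2 i h).le]
  have hd0 : HasDerivAt (fun s => ∑ i ∈ S, w i s) 0 t :=
    (hasDerivAt_const t c).congr_of_eventuallyEq hloc
  have hsum := (HasDerivAt.fun_sum fun i (_ : i ∈ S) => hw t ht i).unique hd0
  rw [sum_alg (jacMat f (x t)) (fun i => fderiv ℝ H (x t) (Pi.single i 1)) (f (x t)) S] at hsum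
  have hSn : ∀ i, i ∉ S → w i t ≤ 0 := by
    intro i hi
    by_contra h
    exact hi (by simpa [hS] using h)
  have hSp : ∀ i ∈ S, 0 < w i t := fun i hi => (Finset.mem_filter.mp hi).2
  have hterm := term_nonpos (A := jacMat f (x t))
    (p := fun i => fderiv ℝ H (x t) (Pi.single i 1))
    (v := f (x t)) (hcoop _ (hxX t ht)) (hgrad _ (hxX t ht)) (S := S)
    (fun i hi => (hSp i hi).le) hSn
  have hz1 := (Finset.sum_eq_zero_iff_of_nonpos
    (fun i hi => Finset.sum_nonpos fun j hj => hterm i hi j hj)).mp hsum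
  have hz2 : ∀ i ∈ S, ∀ j ∉ S, jacMat f (x t) j i = 0 := by
    intro i hi j hj
    have hj' : j ∈ Sᶜ := by simpa using hj
    have h0 := (Finset.sum_eq_zero_iff_of_nonpos (fun j hj => hterm i hi j hj)).mp (hz1 i hi) j hj'
    have hij : i ≠ j := fun h => hj (h ▸ hi)
    have pi := hgrad _ (hxX t ht) i
    have pj := hgrad _ (hxX t ht) j
    have hvi : 0 < f (x t) i := pos_of_mul_pos_right (hSp i hi) pi.le
    have hvj : f (x t) j ≤ 0 := by
      by_contra h
      push Not at h
      exact absurd (hSn j hj) (not_le.mpr (mul_pos pj h))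
    have e1 : fderiv ℝ H (x t) (Pi.single i 1) * jacMat f (x t) i j * f (x t) j ≤ 0 :=
      mul_nonpos_of_nonneg_of_nonpos (mul_nonneg pi.le (hcoop _ (hxX t ht) i j hij)) hvj
    have e2 : 0 ≤ jacMat f (x t) j i := hcoop _ (hxX t ht) j i hij.symm
    by_contra hcon
    have e3 : 0 < fderiv ℝ H (x t) (Pi.single j 1) * jacMat f (x t) j i * f (x t) i :=
      mul_pos (mul_pos pj (lt_of_le_of_ne e2 (Ne.symm hcon))) hvi
    linarith
  have hSe : S = ∅ := by
    by_contra hSne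
    obtain ⟨i0, hi0⟩ := Finset.nonempty_iff_ne_empty.mpr hSne
    by_cases hfull : S = Finset.univ
    · have h0 := hfi _ (hxX t ht)
      rw [clm_expand] at h0
      have : 0 < ∑ i, fderiv ℝ H (x t) (Pi.single i 1) * f (x t) i :=
        Finset.sum_pos (fun i _ => hSp i (by rw [hfull]; exact Finset.mem_univ i))
          ⟨i0, Finset.mem_univ _⟩
      linarith
    · obtain ⟨j, hj, i, hi, hji⟩ := hirr _ (hxX t ht) ((S : Set (Fin n))ᶜ)
        (by
          rw [Set.nonempty_compl]
          exact fun h => hfull (Finset.coe_eq_univ.mp h))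
        (fun h => by
          have : i0 ∈ ((S : Set (Fin n))ᶜ) := by rw [h]; trivial
          exact this hi0)
      have hi' : i ∈ S := by simpa using hi
      exact hji (hz2 i hi' j hj)
  have := hloc.self_of_nhds
  rw [hSe, Finset.sum_empty] at this
  exact this.symm

lemma limit_orbit (hX : IsOpen X) (hf : ContDiffOn ℝ 1 f X) {γ : ℝ → Fin n → ℝ}
    (hγ : ∀ t < 0, HasDerivAt γ (f (γ t)) t) {y : Fin n → ℝ} (hy : y ∈ X)
    {T : ℕ → ℝ} (hT : Tendsto T atTop atBot) (hTy : Tendsto (fun k => γ (T k)) atTop (𝓝 y)) :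
    ∃ δ > 0, ∃ x : ℝ → Fin n → ℝ, (∀ t ∈ Ioo 0 δ, x t ∈ X) ∧
      (∀ t ∈ Ioo 0 δ, HasDerivAt x (f (x t)) t) ∧
      ∀ s ∈ Ioo 0 δ, Tendsto (fun k => γ (T k + s)) atTop (𝓝 (x s)) := by
  have hfy : ContDiffAt ℝ 1 f y := hf.contDiffAt (hX.mem_nhds hy)
  obtain ⟨x, hx0, ε, hε, hx⟩ :=
    hfy.exists_forall_mem_closedBall_exists_eq_forall_mem_Ioo_hasDerivAt₀ 0
  simp only [zero_sub, zero_add] at hx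
  obtain ⟨K, U, hU, hK⟩ := (hfy.hasStrictFDerivAt one_ne_zero).exists_lipschitzOnWith
  have hbd : ∀ᶠ z in 𝓝 y, ‖f z‖ < ‖f y‖ + 1 :=
    hfy.continuousAt.norm.eventually_lt continuousAt_const (by simp)
  obtain ⟨r, hr, hrs⟩ := Metric.nhds_basis_closedBall.mem_iff.mp
    (inter_mem (inter_mem hU hbd) (hX.mem_nhds hy))
  set M := ‖f y‖ + 1 with hM
  have hMpos : 0 < M := by positivity
  have hxc : ContinuousAt x 0 := (hx 0 ⟨by linarith, hε⟩).continuousAt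
  have hxball : ∀ᶠ s in 𝓝 (0:ℝ), x s ∈ Metric.closedBall y r :=
    hxc.eventually (by rw [hx0]; exact Metric.closedBall_mem_nhds y hr)
  obtain ⟨ρ, hρ, hρs⟩ := Metric.nhds_basis_ball.mem_iff.mp hxball
  set δ := min (min (ε / 2) (ρ / 2)) (r / 2 / M) with hδ
  have hδpos : 0 < δ := by positivity
  have hδε : δ ≤ ε / 2 := (min_le_left _ _).trans (min_le_left _ _)
  have hδρ : δ ≤ ρ / 2 := (min_le_left _ _).trans (min_le_right _ _)
  have hδM : M * δ ≤ r / 2 := by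
    have : δ ≤ r / 2 / M := min_le_right _ _
    rw [le_div_iff₀ hMpos] at this
    linarith
  have hxd : ∀ t ∈ Icc 0 δ, HasDerivAt x (f (x t)) t := fun t ht =>
    hx t ⟨by linarith [ht.1], by linarith [ht.2]⟩
  have hxr : ∀ t ∈ Icc 0 δ, x t ∈ Metric.closedBall y r := fun t ht => hρs (by
    rw [Metric.mem_ball, Real.dist_eq, sub_zero, abs_of_nonneg ht.1]
    linarith [ht.2])
  refine ⟨δ, hδpos, x, fun t ht => (hrs (hxr t (Ioo_subset_Icc_self ht))).2,
    fun t ht => hxd t (Ioo_subset_Icc_self ht), fun s hs => ?_⟩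
  have hest : ∀ᶠ k in atTop, dist (γ (T k + s)) (x s)
      ≤ dist (γ (T k)) y * Real.exp (K * (s - 0)) := by
    filter_upwards [hT.eventually (eventually_lt_atBot (-δ)),
      hTy.eventually (Metric.closedBall_mem_nhds y (half_pos hr))] with k hk1 hk2
    have hgd : ∀ t ∈ Icc 0 δ, HasDerivAt (fun u => γ (T k + u)) (f (γ (T k + t))) t :=
      fun t ht => (hγ (T k + t) (by linarith [ht.2])).comp_const_add (T k) t
    have hgc : ContinuousOn (fun u => γ (T k + u)) (Icc 0 δ) := fun t ht =>
      (hgd t ht).continuousAt.continuousWithinAt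
    have hgb : ∀ ⦃t⦄, t ∈ Icc 0 δ → ‖γ (T k + t) - y‖ ≤ r / 2 + M * t := by
      refine image_norm_le_of_norm_deriv_right_lt_deriv_boundary
        (f := fun t => γ (T k + t) - y) (f' := fun t => f (γ (T k + t)))
        (B := fun t => r / 2 + M * t) (B' := fun _ => M)
        (hgc.sub continuousOn_const) ?_ ?_ ?_ ?_
      · exact fun t ht => ((hgd t (Ico_subset_Icc_self ht)).sub_const y).hasDerivWithinAt
      · simpa [dist_eq_norm] using hk2
      · intro t
        simpa using ((hasDerivAt_id t).const_mul M).const_add (r / 2)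
      · intro t ht he
        have : γ (T k + t) ∈ Metric.closedBall y r := by
          rw [mem_closedBall_iff_norm, he]
          have := mul_le_mul_of_nonneg_left ht.2.le hMpos.le
          linarith
        exact (hrs this).1.2
    have hgr : ∀ t ∈ Icc 0 δ, γ (T k + t) ∈ Metric.closedBall y r := by
      intro t ht
      rw [mem_closedBall_iff_norm]
      have := mul_le_mul_of_nonneg_left ht.2 hMpos.le
      linarith [hgb ht]
    refine dist_le_of_trajectories_ODE_of_mem (v := fun _ => f) (s := fun _ => U) (K := K)
      (f := fun u => γ (T k + u)) (g := x) (a := 0) (b := δ)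
      (fun _ _ => hK) hgc
      (fun t ht => (hgd t (Ico_subset_Icc_self ht)).hasDerivWithinAt)
      (fun t ht => (hrs (hgr t (Ico_subset_Icc_self ht))).1.1)
      (fun t ht => (hxd t ht).continuousAt.continuousWithinAt)
      (fun t ht => (hxd t (Ico_subset_Icc_self ht)).hasDerivWithinAt)
      (fun t ht => (hrs (hxr t (Ico_subset_Icc_self ht))).1.1)
      ?_ s (Ioo_subset_Icc_self hs)
    simp [hx0]
  rw [tendsto_iff_dist_tendsto_zero]
  refine squeeze_zero' (Eventually.of_forall fun _ => dist_nonneg) hest ?_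
  simpa using (tendsto_iff_dist_tendsto_zero.mp hTy).mul_const (Real.exp (K * (s - 0)))

end flow

/-- if the α-limit set of a solution is nonempty, the solution
starts (hence stays) at an equilibrium. -/
theorem stmt_9 {n : ℕ} {X : Set (Fin n → ℝ)} (hX : IsOpen X)
    {f : (Fin n → ℝ) → (Fin n → ℝ)} (hf : ContDiffOn ℝ 1 f X) (hcoop : coopVF f X)
    (hirr : ∀ x ∈ X, matIrred (jacMat f x))
    {H : (Fin n → ℝ) → ℝ} (hH : ContDiffOn ℝ 1 H X)
    (hfi : ∀ x ∈ X, fderiv ℝ H x (f x) = 0)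
    (hgrad : ∀ x ∈ X, ∀ i, 0 < fderiv ℝ H x (Pi.single i 1))
    {γ : ℝ → Fin n → ℝ} (hγ : IsSolOn f X (Set.Iic 0) γ)
    (hα : (alphaSet X γ).Nonempty) :
    f (γ 0) = 0 := by
  have hγd : ∀ t < 0, HasDerivAt γ (f (γ t)) t := fun t ht =>
    (hγ.2 t (le_of_lt ht)).hasDerivAt (Iic_mem_nhds ht)
  have hγX : ∀ t < 0, γ t ∈ X := fun t ht => hγ.1 t (le_of_lt ht)
  obtain ⟨y, hy, T, hT, hTy⟩ := hα
  have hanti : ∀ a b : ℝ, a ≤ b → b < 0 → lyap f H (γ b) ≤ lyap f H (γ a) := fun a b hab hb =>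
    lyap_anti hX hf hcoop hH hfi hgrad isOpen_Iio hγX hγd hab
      (fun s hs => lt_of_le_of_lt hs.2 hb)
  have hcont : ∀ z ∈ X, ContinuousAt (lyap f H) z := fun z hz =>
    (lyap_cont hX hf hH).continuousAt (hX.mem_nhds hz)
  have hTl : Tendsto (fun k => lyap f H (γ (T k))) atTop (𝓝 (lyap f H y)) :=
    (hcont y hy).tendsto.comp hTy
  have hle : ∀ t < 0, lyap f H (γ t) ≤ lyap f H y := fun t ht =>
    ge_of_tendsto hTl ((hT.eventually (eventually_le_atBot t)).mono fun k hk => hanti _ _ hk ht)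
  obtain ⟨δ, hδ, x, hxX, hx, hlim⟩ := limit_orbit hX hf hγd hy hT hTy
  have hxc : ∀ s ∈ Ioo 0 δ, lyap f H (x s) = lyap f H y := by
    intro s hs
    have hl : Tendsto (fun k => lyap f H (γ (T k + s))) atTop (𝓝 (lyap f H (x s))) :=
      (hcont _ (hxX s hs)).tendsto.comp (hlim s hs)
    have hTs : Tendsto (fun k => T k + s) atTop atBot := tendsto_atBot_add_const_right _ s hT
    refine le_antisymm ?_ ?_
    · exact le_of_tendsto hl ((hTs.eventually (eventually_lt_atBot 0)).mono fun k hk => hle _ hk)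
    · refine le_of_tendsto hTl ?_
      filter_upwards [hT.eventually (eventually_lt_atBot 0)] with k hk
      exact ge_of_tendsto hl
        ((hTs.eventually (eventually_le_atBot (T k))).mono fun m hm => hanti _ _ hm hk)
  have hzero : lyap f H y = 0 :=
    lyap_const hX hf hcoop hirr hH hfi hgrad isOpen_Ioo (nonempty_Ioo.mpr hδ) hxX hx hxc
  have hft : ∀ t < 0, f (γ t) = 0 := by
    intro t ht
    refine lyap_zero hfi hgrad (hγX t ht) fun i => ?_
    have h1 : lyap f H (γ t) ≤ 0 := hzero ▸ hle t ht
    have h2 : max (fderiv ℝ H (γ t) (Pi.single i 1) * f (γ t) i) 0 ≤ lyap f H (γ t) :=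
      Finset.single_le_sum (f := fun i => max (fderiv ℝ H (γ t) (Pi.single i 1) * f (γ t) i) 0)
        (fun j _ => le_max_right _ _) (Finset.mem_univ i)
    exact (le_max_left _ _).trans (h2.trans h1)
  have h0X : γ 0 ∈ X := hγ.1 0 (by simp)
  have hc1 : Tendsto γ (𝓝[<] 0) (𝓝 (γ 0)) :=
    (hγ.2 0 (by simp)).continuousWithinAt.tendsto.mono_left (nhdsWithin_mono _ Iio_subset_Iic_self)
  have hc2 : Tendsto (fun t => f (γ t)) (𝓝[<] 0) (𝓝 (f (γ 0))) :=
    (hf.continuousOn.continuousAt (hX.mem_nhds h0X)).tendsto.comp hc1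
  refine tendsto_nhds_unique hc2 ?_
  refine tendsto_const_nhds.congr' ?_
  filter_upwards [self_mem_nhdsWithin] with t ht
  exact (hft t ht).symm
end
end

section
/- Let X ⊆ ℝⁿ be an open, order-convex set such that x ∨ y ∈ X and x ∧ y ∈ X for all x, y ∈ X (componentwise maximum and minimum), let f : X → ℝⁿ be a C¹ cooperative irreducible vector field, and let H : X → ℝ be a C¹ first integral for ẋ = f(x) with positive gradient. Then for every c ∈ ℝ the level set H⁻¹(c) = {z ∈ X : H(z) = c} is connected. -/
open Set Filter Topology

noncomputable section

theorem H_strict {n : ℕ} {X : Set (Fin n → ℝ)} (hX : IsOpen X) (hoc : orderConvex X)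
    {H : (Fin n → ℝ) → ℝ} (hH : ContDiffOn ℝ 1 H X)
    (hgrad : ∀ x ∈ X, ∀ i, 0 < fderiv ℝ H x (Pi.single i 1))
    {x y : Fin n → ℝ} (hx : x ∈ X) (hy : y ∈ X) (hxy : x ≤ y) (hne : x ≠ y) : H x < H y := by
  have hseg : ∀ t ∈ Icc (0:ℝ) 1, x + t • (y - x) ∈ X := by
    intro t ht
    apply hoc x hx y hy hxy
    constructor
    · intro i
      have := hxy i
      simp only [Pi.add_apply, Pi.smul_apply, Pi.sub_apply, smul_eq_mul]
      nlinarith [ht.1, ht.2]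
    · intro i
      have := hxy i
      simp only [Pi.add_apply, Pi.smul_apply, Pi.sub_apply, smul_eq_mul]
      nlinarith [ht.1, ht.2]
  have hpos : ∀ z ∈ X, 0 < fderiv ℝ H z (y - x) := by
    intro z hz
    have e : y - x = ∑ i, (y i - x i) • (Pi.single i (1:ℝ) : Fin n → ℝ) := by
      ext j
      simp [Finset.sum_apply, Pi.single_apply]
    rw [e, map_sum]
    simp only [map_smul, smul_eq_mul]
    obtain ⟨i, hi⟩ := Function.ne_iff.mp hne
    apply Finset.sum_pos'
    · intro j _
      exact mul_nonneg (sub_nonneg.2 (hxy j)) (hgrad z hz j).le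
    · exact ⟨i, Finset.mem_univ _, mul_pos (sub_pos.2 (lt_of_le_of_ne (hxy i) hi)) (hgrad z hz i)⟩
  have hd : ∀ t ∈ Icc (0:ℝ) 1, HasDerivAt (fun t : ℝ => H (x + t • (y - x)))
      (fderiv ℝ H (x + t • (y - x)) (y - x)) t := by
    intro t ht
    have h1 : HasFDerivAt H (fderiv ℝ H (x + t • (y - x))) (x + t • (y - x)) :=
      ((hH.contDiffAt (hX.mem_nhds (hseg t ht))).differentiableAt (by simp)).hasFDerivAt
    have h2 : HasDerivAt (fun t : ℝ => x + t • (y - x)) (y - x) t := by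
      simpa using ((hasDerivAt_id t).smul_const (y - x)).const_add x
    exact h1.comp_hasDerivAt t h2
  have hm : StrictMonoOn (fun t : ℝ => H (x + t • (y - x))) (Icc 0 1) := by
    apply strictMonoOn_of_deriv_pos (convex_Icc 0 1)
    · exact fun t ht => (hd t ht).continuousAt.continuousWithinAt
    · intro t ht
      have ht' := interior_subset ht
      rw [(hd t ht').deriv]
      exact hpos _ (hseg t ht')
  have := hm (left_mem_Icc.2 zero_le_one) (right_mem_Icc.2 zero_le_one) zero_lt_one
  simpa using this

/-- level sets of the first integral are connected. -/
theorem stmt_10 {n : ℕ} {X : Set (Fin n → ℝ)} (hX : IsOpen X) (hoc : orderConvex X)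
    (hlat : ∀ x ∈ X, ∀ y ∈ X, x ⊔ y ∈ X ∧ x ⊓ y ∈ X)
    {f : (Fin n → ℝ) → (Fin n → ℝ)} (hf : ContDiffOn ℝ 1 f X) (hcoop : coopVF f X)
    (hirr : ∀ x ∈ X, matIrred (jacMat f x))
    {H : (Fin n → ℝ) → ℝ} (hH : ContDiffOn ℝ 1 H X)
    (hfi : ∀ x ∈ X, fderiv ℝ H x (f x) = 0)
    (hgrad : ∀ x ∈ X, ∀ i, 0 < fderiv ℝ H x (Pi.single i 1)) :
    ∀ c : ℝ, IsPreconnected {z ∈ X | H z = c} := by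
  intro c
  apply isPreconnected_of_forall_pair
  rintro x ⟨hx, hxc⟩ y ⟨hy, hyc⟩
  by_cases hxy : x = y
  · subst hxy
    exact ⟨{x}, by simpa using ⟨hx, hxc⟩, by simp, by simp, isPreconnected_singleton⟩
  have hst : ∀ {a b : Fin n → ℝ}, a ∈ X → b ∈ X → a ≤ b → a ≠ b → H a < H b :=
    fun ha hb h h' => H_strict hX hoc hH hgrad ha hb h h'
  have hmo : ∀ {a b : Fin n → ℝ}, a ∈ X → b ∈ X → a ≤ b → H a ≤ H b := by
    intro a b ha hb h
    by_cases h' : a = b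
    · rw [h']
    · exact (hst ha hb h h').le
  obtain ⟨hq, hp⟩ := hlat x hx y hy
  set q := x ⊔ y with hqd
  set p := x ⊓ y with hpd
  have hxq : x ≤ q := le_sup_left
  have hyq : y ≤ q := le_sup_right
  have hpx : p ≤ x := inf_le_left
  have hpy : p ≤ y := inf_le_right
  have hpxne : p ≠ x := by
    intro h
    have h1 : x ≤ y := h ▸ hpy
    have := hst hx hy h1 hxy
    linarith
  have hpyne : p ≠ y := by
    intro h
    have h1 : y ≤ x := h ▸ hpx
    have := hst hy hx h1 (Ne.symm hxy)
    linarith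
  have hpc : H p < c := hxc ▸ hst hp hx hpx hpxne
  set W : Set (Fin n → ℝ) := segment ℝ x q ∪ segment ℝ y q with hW
  have hWpre : IsPreconnected W :=
    IsPreconnected.union q (right_mem_segment ℝ x q) (right_mem_segment ℝ y q)
      (convex_segment x q).isPreconnected (convex_segment y q).isPreconnected
  have hWX : ∀ w ∈ W, w ∈ X ∧ p ≤ w ∧ c ≤ H w := by
    rintro w (hw | hw)
    · have h := segment_subset_Icc hxq hw
      have hwX := hoc x hx q hq hxq h
      exact ⟨hwX, hpx.trans h.1, hxc ▸ hmo hx hwX h.1⟩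
    · have h := segment_subset_Icc hyq hw
      have hwX := hoc y hy q hq hyq h
      exact ⟨hwX, hpy.trans h.1, hyc ▸ hmo hy hwX h.1⟩
  have hray : ∀ w ∈ W, ∀ s ∈ Icc (0:ℝ) 1, p + s • (w - p) ∈ X := by
    intro w hw s hs
    obtain ⟨hwX, hpw, -⟩ := hWX w hw
    apply hoc p hp w hwX hpw
    constructor <;> intro i <;> have := hpw i <;>
      simp only [Pi.add_apply, Pi.smul_apply, Pi.sub_apply, smul_eq_mul] <;>
      nlinarith [hs.1, hs.2]
  have hrmono : ∀ w ∈ W, ∀ s ∈ Icc (0:ℝ) 1, ∀ t ∈ Icc (0:ℝ) 1, s < t →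
      H (p + s • (w - p)) < H (p + t • (w - p)) := by
    intro w hw s hs t ht hlt
    obtain ⟨hwX, hpw, hcw⟩ := hWX w hw
    apply hst (hray w hw s hs) (hray w hw t ht)
    · intro i
      have := hpw i
      simp only [Pi.add_apply, Pi.smul_apply, Pi.sub_apply, smul_eq_mul]
      nlinarith
    · intro h
      have h1 : s • (w - p) = t • (w - p) := add_left_cancel h
      have h2 : (t - s) • (w - p) = 0 := by rw [sub_smul, h1, sub_self]
      rcases smul_eq_zero.1 h2 with h3 | h3
      · linarith
      · rw [sub_eq_zero.1 h3] at hcw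
        linarith
  have hHc : ContinuousOn H X := hH.continuousOn
  have hex : ∀ w : Fin n → ℝ, ∃ s : ℝ, w ∈ W → s ∈ Icc (0:ℝ) 1 ∧ H (p + s • (w - p)) = c := by
    intro w
    by_cases hw : w ∈ W
    · have hc : ContinuousOn (fun s : ℝ => H (p + s • (w - p))) (Icc 0 1) :=
        hHc.comp (by fun_prop) (fun s hs => hray w hw s hs)
      have := intermediate_value_Icc (zero_le_one) hc
      obtain ⟨s, hs, hs'⟩ := this (show c ∈ Icc _ _ from ⟨by simpa using hpc.le,
        by simpa using (hWX w hw).2.2⟩)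
      exact ⟨s, fun _ => ⟨hs, hs'⟩⟩
    · exact ⟨0, fun h => absurd h hw⟩
  choose s hs using hex
  have hrc : ∀ a ∈ Icc (0:ℝ) 1, ContinuousOn (fun w => H (p + a • (w - p))) W := by
    intro a ha
    exact hHc.comp (by fun_prop) (fun w hw => hray w hw a ha)
  have hsc : ContinuousOn s W := by
    intro w0 hw0
    obtain ⟨hs0, hs0c⟩ := hs w0 hw0
    refine tendsto_order.2 ⟨fun a ha => ?_, fun b hb => ?_⟩
    · by_cases ha0 : a < 0
      · filter_upwards [self_mem_nhdsWithin] with w hw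
        exact ha0.trans_le (hs w hw).1.1
      · have haI : a ∈ Icc (0:ℝ) 1 := ⟨not_lt.1 ha0, ha.le.trans hs0.2⟩
        have h1 := hrmono w0 hw0 a haI _ hs0 ha
        rw [hs0c] at h1
        filter_upwards [self_mem_nhdsWithin, (hrc a haI w0 hw0).eventually_lt_const h1] with w hw hlt
        by_contra hcon
        obtain ⟨h2, h3⟩ := hs w hw
        rcases (not_lt.1 hcon).lt_or_eq with h4 | h4
        · have := hrmono w hw _ h2 a haI h4
          linarith
        · rw [h4] at h3
          linarith
    · by_cases hb1 : 1 < b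
      · filter_upwards [self_mem_nhdsWithin] with w hw
        exact (hs w hw).1.2.trans_lt hb1
      · have hbI : b ∈ Icc (0:ℝ) 1 := ⟨hs0.1.trans hb.le, not_lt.1 hb1⟩
        have h1 := hrmono w0 hw0 _ hs0 b hbI hb
        rw [hs0c] at h1
        filter_upwards [self_mem_nhdsWithin, (hrc b hbI w0 hw0).eventually_const_lt h1] with w hw hlt
        by_contra hcon
        obtain ⟨h2, h3⟩ := hs w hw
        rcases (not_lt.1 hcon).lt_or_eq with h4 | h4
        · have := hrmono w hw b hbI _ h2 h4
          linarith
        · rw [← h4] at h3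
          linarith
  have hone : ∀ w ∈ W, H w = c → p + s w • (w - p) = w := by
    intro w hw hwc
    obtain ⟨h2, h3⟩ := hs w hw
    have : s w = 1 := by
      by_contra hne
      have := hrmono w hw _ h2 1 ⟨zero_le_one, le_rfl⟩ (lt_of_le_of_ne h2.2 hne)
      simp only [one_smul, add_sub_cancel] at this
      linarith
    rw [this]
    simp
  have hxW : x ∈ W := Or.inl (left_mem_segment ℝ x q)
  have hyW : y ∈ W := Or.inr (left_mem_segment ℝ y q)
  refine ⟨(fun w => p + s w • (w - p)) '' W, ?_, ⟨x, hxW, hone x hxW hxc⟩,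
    ⟨y, hyW, hone y hyW hyc⟩, hWpre.image _ ?_⟩
  · rintro _ ⟨w, hw, rfl⟩
    exact ⟨hray w hw _ (hs w hw).1, (hs w hw).2⟩
  · exact continuousOn_const.add (hsc.smul (continuousOn_id.sub continuousOn_const))
end
end
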